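/- arXiv:1504.05405 — 3 statements merged into one kernel-verified Lean document; each statement's English description precedes it below -/
import Mathlib

section
/- Exact asymptotics in dimension one: q_L(α,1,1) ∼ (1−α) as α → 1⁻, i.e. lim_{α→1⁻} q_L(α,1,1)/(1−α) = 1. -/
open MeasureTheory Filter ENNReal

/-- Sites of `ℤ^{d+1}`. -/
abbrev Site (d : ℕ) := Fin (d + 1) → ℤ

/-- Site-percolation configurations on `ℤ^{d+1}`: a site is open iff its value is `true`. -/
abbrev Config (d : ℕ) := Site d → Bool

/-- `P` is the i.i.d. Bernoulli(`p`) product measure on `{0,1}^ι`: it is a probability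
measure whose cylinder events have the correct product probabilities. -/
def IsBernoulli {ι : Type*} (p : ℝ) (P : Measure (ι → Bool)) : Prop :=
  IsProbabilityMeasure P ∧
    ∀ (s : Finset ι) (f : ι → Bool),
      P {ω | ∀ x ∈ s, ω x = f x} =
        ∏ x ∈ s, (if f x then ENNReal.ofReal p else ENNReal.ofReal (1 - p))

/-- A function `F : ℤ^d → ℤ` is Lipschitz: `‖x − y‖₁ = 1 → |F x − F y| ≤ 1`. -/
def IsLipschitzFn {d : ℕ} (F : (Fin d → ℤ) → ℤ) : Prop :=
  ∀ x y : Fin d → ℤ, (∑ i, |x i - y i|) = 1 → |F x - F y| ≤ 1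

/-- Height `⌊α ∑ᵢ ηᵢ xᵢ⌋` of the tilted plane `L^{α,d}_η` above `x ∈ ℤ^d`. -/
noncomputable def planeHt (α : ℝ) {d : ℕ} (η x : Fin d → ℤ) : ℤ :=
  ⌊α * ∑ i, (η i : ℝ) * (x i : ℝ)⌋

/-- `η ∈ {-1,0,1}^d`. -/
def IsSign {d : ℕ} (η : Fin d → ℤ) : Prop := ∀ i, η i = -1 ∨ η i = 0 ∨ η i = 1

/-- The event `LIP^{α,d}_η` that there is an open Lipschitz surface lying (strictly) above
the tilted plane `L^{α,d}_η`. -/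
def LIP (α : ℝ) {d : ℕ} (η : Fin d → ℤ) : Set (Config d) :=
  {ω | ∃ F : (Fin d → ℤ) → ℤ, IsLipschitzFn F ∧
    ∀ x : Fin d → ℤ, ω (Fin.snoc x (F x)) = true ∧ planeHt α η x < F x}

/-- `pc` is the critical probability `p_L(α,d,η)` of Lipschitz percolation above the tilted
plane `L^{α,d}_η`: `pc ∈ (0,1)`, for `p` below it there is `P_p`-a.s. no open Lipschitz
surface above the plane, and for `p` above it there `P_p`-a.s. is one.
(Here `P p` is the Bernoulli(`p`) product measure on `{0,1}^{ℤ^{d+1}}`.) -/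
def IsCriticalProb {d : ℕ} (P : ℝ → Measure (Config d)) (α : ℝ) (η : Fin d → ℤ)
    (pc : ℝ) : Prop :=
  pc ∈ Set.Ioo (0 : ℝ) 1 ∧
    (∀ p, 0 ≤ p → p < pc → P p (LIP α η) = 0) ∧
    (∀ p, pc < p → p ≤ 1 → P p (LIP α η) = 1)

/-- The canonical direction vector `η ∈ {-1,0,1}^d` with `k` entries equal to `1`; the
critical probability `p_L(α,d,η)` depends on `η` only through `k = ‖η‖₁`, and
`p_L(α,d,k)` denotes the common value. -/
def etaK (d k : ℕ) : Fin d → ℤ := fun i => if (i : ℕ) < k then 1 else 0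


open ProbabilityTheory

section ProductMeasure

/-- The Bernoulli(`p`) law on `Bool`. -/
noncomputable def siteLaw (p : ℝ) : Measure Bool :=
  ENNReal.ofReal p • Measure.dirac true + ENNReal.ofReal (1 - p) • Measure.dirac false

lemma siteLaw_singleton (p : ℝ) (b : Bool) :
    siteLaw p {b} = if b then ENNReal.ofReal p else ENNReal.ofReal (1 - p) := by
  cases b <;> simp [siteLaw]

lemma isProbabilityMeasure_siteLaw {p : ℝ} (hp : p ∈ Set.Icc (0 : ℝ) 1) :
    IsProbabilityMeasure (siteLaw p) := by
  constructor
  simp only [siteLaw, Measure.coe_add, Measure.coe_smul, Pi.add_apply, Pi.smul_apply,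
    measure_univ, smul_eq_mul, mul_one]
  rw [← ENNReal.ofReal_add hp.1 (by linarith [hp.2])]
  simp

lemma eq_siteLaw (ν : Measure Bool) [IsProbabilityMeasure ν] : ν = siteLaw (ν.real {true}) := by
  refine Measure.ext_of_singleton fun b => ?_
  rw [siteLaw_singleton]
  cases b with
  | true => simp
  | false =>
    have h : ({false} : Set Bool) = {true}ᶜ := by ext b; cases b <;> simp
    have h2 : ν.real {false} = 1 - ν.real {true} := by
      rw [h, measureReal_compl (by measurability), probReal_univ]
    simp [← h2]

lemma IsBernoulli.eq_infinitePi {ι : Type*} {p : ℝ} (hp : p ∈ Set.Icc (0 : ℝ) 1)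
    {P : Measure (ι → Bool)} (h : IsBernoulli p P) :
    P = Measure.infinitePi fun _ : ι => siteLaw p := by
  classical
  have := isProbabilityMeasure_siteLaw hp
  refine Measure.eq_infinitePi _ fun s t _ => ?_
  by_cases hempty : ∃ i ∈ s, t i = ∅
  · obtain ⟨i, hi, hti⟩ := hempty
    have : Set.pi (s : Set ι) t = ∅ := Set.pi_eq_empty (by exact_mod_cast hi) hti
    rw [this, measure_empty, Finset.prod_eq_zero hi (by rw [hti, measure_empty])]
  push Not at hempty
  have hset : Set.pi (s : Set ι) t =
      {ω | ∀ x ∈ s.filter (fun i => t i ≠ Set.univ), ω x = decide (true ∈ t x)} := by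
    ext ω
    simp only [Set.mem_pi, Finset.mem_coe, Finset.mem_filter, Set.mem_ofPred_eq, and_imp]
    refine forall₂_congr fun i hi => ?_
    obtain h0 | h0 | h0 | h0 : t i = ∅ ∨ t i = {true} ∨ t i = {false} ∨ t i = Set.univ := by
      by_cases h1 : true ∈ t i <;> by_cases h2 : false ∈ t i
      · right; right; right; ext b; cases b <;> simp [h1, h2]
      · right; left; ext b; cases b <;> simp [h1, h2]
      · right; right; left; ext b; cases b <;> simp [h1, h2]
      · left; ext b; cases b <;> simp [h1, h2]
    · exact absurd h0 (hempty i hi).ne_empty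
    · rw [h0]
      have : ({true} : Set Bool) ≠ Set.univ := fun h => by
        have := h.ge (Set.mem_univ false); simp at this
      simp only [ne_eq, this, not_false_eq_true, forall_const]
      simp
    · rw [h0]
      have : ({false} : Set Bool) ≠ Set.univ := fun h => by
        have := h.ge (Set.mem_univ true); simp at this
      simp only [ne_eq, this, not_false_eq_true, forall_const]
      simp
    · simp [h0]
  rw [hset, h.2, Finset.prod_filter]
  refine Finset.prod_congr rfl fun i hi => ?_
  obtain ⟨b, hb⟩ := hempty i hi
  split_ifs with h1 h2
  · have : t i = {true} := by
      ext c; cases c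
      · simp only [Set.mem_singleton_iff, Bool.false_eq_true, iff_false]
        intro h3; apply h1; ext c; cases c <;> simp_all
      · simpa using h2
    rw [this, siteLaw_singleton]; simp
  · have : t i = {false} := by
      ext c; cases c <;> cases b <;> simp_all
    rw [this, siteLaw_singleton]; simp
  · push Not at h1; rw [h1, measure_univ]

lemma map_blocks {ι κ β : Type*} [Finite β] {p : ℝ} (hp : p ∈ Set.Icc (0 : ℝ) 1)
    {τ : κ × β → ι} (hτ : Function.Injective τ) (g : (β → Bool) → Bool) :
    ∃ r ∈ Set.Icc (0 : ℝ) 1,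
      (Measure.infinitePi fun _ : ι => siteLaw p).map (fun ω s => g fun b => ω (τ (s, b))) =
        Measure.infinitePi (fun _ : κ => siteLaw r) ∧
      ∀ s, (Measure.infinitePi fun _ : ι => siteLaw p).real
        {ω | g (fun b => ω (τ (s, b))) = true} = r := by
  have := isProbabilityMeasure_siteLaw hp
  have hg : Measurable g := measurable_of_finite g
  let ν : Measure Bool := (Measure.infinitePi fun _ : β => siteLaw p).map g
  have : IsProbabilityMeasure ν := Measure.isProbabilityMeasure_map hg.aemeasurable
  have hr : ν.real {true} ∈ Set.Icc (0 : ℝ) 1 := ⟨measureReal_nonneg, measureReal_le_one⟩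
  have := isProbabilityMeasure_siteLaw hr
  have hmap : (Measure.infinitePi fun _ : ι => siteLaw p).map
      (fun ω s => g fun b => ω (τ (s, b))) =
        Measure.infinitePi (fun _ : κ => siteLaw (ν.real {true})) := by
    have h1 := Measure.map_infinitePi_infinitePi_of_inj (P := fun _ : ι => siteLaw p) hτ
    have h2 := Measure.infinitePi_map_curry (fun (_ : κ) (_ : β) => siteLaw p)
    have h3 := Measure.infinitePi_map_pi (μ := fun _ : κ => Measure.infinitePi
      fun _ : β => siteLaw p) (f := fun _ => g) (fun _ => hg)
    rw [← h2, ← h1, Measure.map_map (by fun_prop) (by fun_prop),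
      Measure.map_map (by fun_prop) (by fun_prop)] at h3
    rw [← eq_siteLaw ν, ← h3]
    rfl
  refine ⟨ν.real {true}, hr, hmap, fun s => ?_⟩
  have h4 := Measure.infinitePi_map_eval (fun _ : κ => siteLaw (ν.real {true})) s
  rw [← hmap, Measure.map_map (by fun_prop) (by fun_prop), ← eq_siteLaw ν] at h4
  rw [← h4, map_measureReal_apply (by fun_prop) (by measurability)]
  rfl

lemma measurable_of_dependsOn {ι γ : Type*} [Nonempty γ] [MeasurableSpace γ] (T : Finset ι)
    {f : (ι → Bool) → γ} (hf : DependsOn f (T : Set ι)) : Measurable f := by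
  obtain ⟨φ, rfl⟩ := dependsOn_iff_exists_comp.1 hf
  exact (measurable_of_finite φ).comp (by fun_prop)

lemma lintegral_coord_mul {ι : Type*} {p : ℝ} (hp : p ∈ Set.Icc (0 : ℝ) 1) (i : ι)
    (T : Finset ι) (hi : i ∉ T) {f : (ι → Bool) → ℝ≥0∞} (hf : DependsOn f (T : Set ι))
    (h : Bool → ℝ≥0∞) :
    ∫⁻ ω, h (ω i) * f ω ∂(Measure.infinitePi fun _ : ι => siteLaw p) =
      (ENNReal.ofReal p * h true + ENNReal.ofReal (1 - p) * h false) *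
        ∫⁻ ω, f ω ∂(Measure.infinitePi fun _ : ι => siteLaw p) := by
  have := isProbabilityMeasure_siteLaw hp
  have hh : Measurable h := measurable_of_finite h
  have hfm := measurable_of_dependsOn T hf
  obtain ⟨φ, rfl⟩ := dependsOn_iff_exists_comp.1 hf
  have hind : iIndepFun (fun (j : ι) (ω : ι → Bool) => ω j)
      (Measure.infinitePi fun _ : ι => siteLaw p) :=
    iIndepFun_infinitePi (X := fun _ ω => ω) (by fun_prop)
  have h1 := hind.indepFun_finset {i} T (by simpa using hi) (by fun_prop)
  have h2 := h1.comp (φ := fun β : (({i} : Finset ι) → Bool) => h (β ⟨i, by simp⟩)) (ψ := φ)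
    (by fun_prop) (measurable_of_finite φ)
  have hm : Measurable fun ω : ι → Bool => h (ω i) := hh.comp (measurable_pi_apply i)
  change IndepFun (fun ω : ι → Bool => h (ω i)) (φ ∘ (T : Set ι).domRestrict) _ at h2
  rw [lintegral_mul_eq_lintegral_mul_lintegral_of_indepFun'' hm.aemeasurable
    hfm.aemeasurable h2]
  congr 1
  have h3 : ∫⁻ ω, h (ω i) ∂(Measure.infinitePi fun _ : ι => siteLaw p) =
      ∫⁻ b, h b ∂((Measure.infinitePi fun _ : ι => siteLaw p).map (Function.eval i)) := by
    rw [lintegral_map hh (by fun_prop)]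
  rw [h3, Measure.infinitePi_map_eval, siteLaw]
  simp [lintegral_add_measure, lintegral_smul_measure]

lemma measure_coord_eq_false {ι : Type*} {p : ℝ} (hp : p ∈ Set.Icc (0 : ℝ) 1) (i : ι) :
    (Measure.infinitePi fun _ : ι => siteLaw p) {ω | ω i = false} = ENNReal.ofReal (1 - p) := by
  have := isProbabilityMeasure_siteLaw hp
  have h : {ω : ι → Bool | ω i = false} =
      Function.eval (β := fun _ => Bool) i ⁻¹' {false} := rfl
  rw [h, ← Measure.map_apply (measurable_pi_apply i) (by measurability), Measure.infinitePi_map_eval,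
    siteLaw_singleton]
  simp

lemma measure_coord_pair_eq_false {ι : Type*} {p : ℝ} (hp : p ∈ Set.Icc (0 : ℝ) 1) {i j : ι}
    (hij : i ≠ j) :
    (Measure.infinitePi fun _ : ι => siteLaw p) {ω | ω i = false ∧ ω j = false} =
      ENNReal.ofReal (1 - p) ^ 2 := by
  classical
  have := isProbabilityMeasure_siteLaw hp
  have h : {ω : ι → Bool | ω i = false ∧ ω j = false} =
      Set.pi (({i, j} : Finset ι) : Set ι) fun _ => {false} := by
    ext ω; simp
  rw [h, Measure.infinitePi_pi _ (by measurability), Finset.prod_pair hij, siteLaw_singleton]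
  simp [sq]

end ProductMeasure

section Drops

/-- The site in column `x` on the diagonal of height offset `u`. In the coordinates `(x, u)` an
open Lipschitz function is a path which descends by `0`, `1` or `2` at each step to the right. -/
def cell (x u : ℤ) : Site 1 := ![x, x + u]

lemma cell_inj {x u x' u' : ℤ} : cell x u = cell x' u' ↔ x = x' ∧ u = u' := by
  constructor
  · intro h
    have h0 : x = x' := congrFun h 0
    have h1 : x + u = x' + u' := congrFun h 1
    exact ⟨h0, by omega⟩
  · rintro ⟨rfl, rfl⟩; rfl

lemma snoc_eq_cell (x : Fin 1 → ℤ) (y : ℤ) :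
    (Fin.snoc x y : Site 1) = cell (x 0) (y - x 0) := by
  ext i
  fin_cases i
  · rfl
  · simp [cell, Fin.snoc]

/-- The number of descents, within `t` steps to the right of `(x, u)`, of the path which descends
by one exactly when the next site of its diagonal is closed. -/
def drops (ω : Config 1) : ℕ → ℤ → ℤ → ℕ
  | 0, _, _ => 0
  | t + 1, x, u =>
    if ω (cell (x + 1) u) then drops ω t (x + 1) u else drops ω t (x + 1) (u - 1) + 1

/-- The sites which can be met by the path counted by `drops`. -/
noncomputable def dropsRange (t : ℕ) (x u : ℤ) : Finset (Site 1) :=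
  (Finset.Icc (x + 1) (x + t) ×ˢ Finset.Icc (u - t) u).image fun c => cell c.1 c.2

lemma cell_mem_dropsRange {t : ℕ} {x u a b : ℤ} :
    cell a b ∈ dropsRange t x u ↔ (x + 1 ≤ a ∧ a ≤ x + t) ∧ u - t ≤ b ∧ b ≤ u := by
  simp only [dropsRange, Finset.mem_image, Finset.mem_product, Finset.mem_Icc, Prod.exists,
    cell_inj]
  constructor
  · rintro ⟨a, b, h, rfl, rfl⟩; exact h
  · intro h; exact ⟨a, b, h, rfl, rfl⟩

lemma dropsRange_subset {t t' : ℕ} {x u x' u' : ℤ} (h1 : x ≤ x') (h2 : x' + t' ≤ x + t)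
    (h3 : u - t ≤ u' - t') (h4 : u' ≤ u) : dropsRange t' x' u' ⊆ dropsRange t x u := by
  refine Finset.image_subset_image (Finset.product_subset_product ?_ ?_)
  · exact Finset.Icc_subset_Icc (by omega) h2
  · exact Finset.Icc_subset_Icc h3 h4

lemma dependsOn_drops (t : ℕ) (x u : ℤ) :
    DependsOn (fun ω => drops ω t x u) (dropsRange t x u : Set (Site 1)) := by
  induction t generalizing x u with
  | zero => intro ω ω' _; rfl
  | succ t ih =>
    intro ω ω' h
    have h0 : ω (cell (x + 1) u) = ω' (cell (x + 1) u) :=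
      h _ (by rw [Finset.mem_coe, cell_mem_dropsRange]; push_cast; omega)
    have h1 := ((ih (x + 1) u).mono (Finset.coe_subset.2 (dropsRange_subset (t := t + 1) (x := x)
      (u := u) (by omega) (by push_cast; omega) (by push_cast; omega) (by omega)))) h
    have h2 := ((ih (x + 1) (u - 1)).mono (Finset.coe_subset.2 (dropsRange_subset (t := t + 1)
      (x := x) (u := u) (by omega) (by push_cast; omega) (by push_cast; omega) (by omega)))) h
    simp only at h1 h2
    simp only [drops, h0, h1, h2]

lemma lintegral_pow_drops {p : ℝ} (hp : p ∈ Set.Icc (0 : ℝ) 1) (z : ℝ≥0∞) (t : ℕ) (x u : ℤ) :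
    ∫⁻ ω, z ^ drops ω t x u ∂(Measure.infinitePi fun _ : Site 1 => siteLaw p) =
      (ENNReal.ofReal p + ENNReal.ofReal (1 - p) * z) ^ t := by
  induction t generalizing x u with
  | zero =>
    have := isProbabilityMeasure_siteLaw hp
    simp [drops]
  | succ t ih =>
    have hdep (u' : ℤ) : DependsOn (fun ω => z ^ drops ω t (x + 1) u')
        (dropsRange t (x + 1) u' : Set (Site 1)) :=
      fun ω ω' h => congrArg (z ^ ·) (dependsOn_drops t (x + 1) u' h)
    have hnot (u' : ℤ) : cell (x + 1) u ∉ dropsRange t (x + 1) u' := by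
      rw [cell_mem_dropsRange]; omega
    have hsplit (ω : Config 1) : z ^ drops ω (t + 1) x u =
        (fun b : Bool => if b then 1 else 0) (ω (cell (x + 1) u)) * z ^ drops ω t (x + 1) u +
        (fun b : Bool => if b then 0 else z) (ω (cell (x + 1) u)) *
          z ^ drops ω t (x + 1) (u - 1) := by
      by_cases h : ω (cell (x + 1) u) <;> simp [drops, h, pow_succ, mul_comm]
    simp_rw [hsplit]
    rw [lintegral_add_left,
      lintegral_coord_mul hp _ _ (hnot u) (hdep u) (fun b => if b then 1 else 0),
      lintegral_coord_mul hp _ _ (hnot (u - 1)) (hdep (u - 1)) (fun b => if b then 0 else z),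
      ih, ih]
    · simp only [if_true, Bool.false_eq_true, if_false]
      ring
    · refine Measurable.mul ?_ (measurable_of_dependsOn _ (hdep u))
      exact (measurable_of_finite fun b : Bool => if b then (1 : ℝ≥0∞) else 0).comp
        (measurable_pi_apply (cell (x + 1) u))

lemma measurable_drops (t : ℕ) (x u : ℤ) : Measurable fun ω => drops ω t x u :=
  measurable_of_dependsOn _ (dependsOn_drops t x u)

lemma exists_path_of_drops_le {ω : Config 1} {t m : ℕ} {x u : ℤ} (hm : drops ω t x u ≤ m)
    (hpair : ∀ a b : ℕ, 1 ≤ a → a ≤ t → b < m →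
      ω (cell (x + a) (u - b)) = true ∨ ω (cell (x + a) (u - b - 1)) = true) :
    ∃ g : ℕ → ℤ, g 0 = u ∧ (∀ a < t, g (a + 1) = g a ∨ g (a + 1) = g a - 1) ∧
      (∀ a, 1 ≤ a → a ≤ t → ω (cell (x + a) (g a)) = true) ∧
      ∀ a ≤ t, u - m ≤ g a ∧ g a ≤ u := by
  induction t generalizing x u m with
  | zero =>
    refine ⟨fun _ => u, rfl, by simp, by intros; omega, by intros; simp⟩
  | succ t ih =>
    have key : ∃ (u' : ℤ) (m' : ℕ), (u' = u ∨ u' = u - 1) ∧ u' - m' = u - m ∧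
        ω (cell (x + 1) u') = true ∧ drops ω t (x + 1) u' ≤ m' := by
      by_cases h : ω (cell (x + 1) u) = true
      · exact ⟨u, m, by simp, rfl, h, by simpa [drops, h] using hm⟩
      · obtain ⟨m', rfl⟩ : ∃ m', m = m' + 1 :=
          ⟨m - 1, by simp only [drops, h] at hm; simp at hm; omega⟩
        refine ⟨u - 1, m', by simp, by push_cast; ring, ?_, by simpa [drops, h] using hm⟩
        simpa [h] using hpair 1 0 le_rfl (by omega) (by omega)
    obtain ⟨u', m', hu', hm', hopen, hd⟩ := key
    obtain ⟨g, g0, g1, g2, g3⟩ := ih hd fun a b ha hat hb => by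
      have h := hpair (a + 1) (b + (u - u').toNat) (by omega) (by omega) (by omega)
      have e1 : x + ((a + 1 : ℕ) : ℤ) = x + 1 + a := by push_cast; ring
      have e2 : u - ((b + (u - u').toNat : ℕ) : ℤ) = u' - b := by omega
      rwa [e1, e2] at h
    refine ⟨fun a => if a = 0 then u else g (a - 1), by simp, fun a ha => ?_, fun a ha hat => ?_,
      fun a ha => ?_⟩
    · rcases a with _ | a
      · simpa [g0] using hu'
      · simpa using g1 a (by omega)
    · obtain ⟨a, rfl⟩ : ∃ b, a = b + 1 := ⟨a - 1, by omega⟩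
      simp only [Nat.add_eq_zero_iff, one_ne_zero, and_false, if_false, Nat.add_sub_cancel]
      rcases Nat.eq_zero_or_pos a with rfl | h
      · simpa [g0] using hopen
      · have := g2 a h (by omega)
        have e1 : x + ((a + 1 : ℕ) : ℤ) = x + 1 + a := by push_cast; ring
        rwa [e1]
    · rcases a with _ | a
      · simp
      · have := g3 a (by omega)
        simp only [Nat.add_eq_zero_iff, one_ne_zero, and_false, if_false, Nat.add_sub_cancel]
        omega

lemma le_sub_drops {ω : Config 1} {U : ℤ → ℤ} (hU : ∀ x, U (x + 1) ≤ U x)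
    (hopen : ∀ x, ω (cell x (U x)) = true) (t : ℕ) {x u : ℤ} (h : U x ≤ u) :
    U (x + t) ≤ u - drops ω t x u := by
  induction t generalizing x u with
  | zero => simpa [drops] using h
  | succ t ih =>
    have e : x + ((t + 1 : ℕ) : ℤ) = x + 1 + t := by push_cast; ring
    rw [e]
    by_cases hc : ω (cell (x + 1) u) = true
    · simpa [drops, hc] using ih ((hU x).trans h)
    · have hne : U (x + 1) ≠ u := fun he => hc (he ▸ hopen (x + 1))
      have := ih (x := x + 1) (u := u - 1) (by have := hU x; omega)
      simp only [drops, hc, Bool.false_eq_true, if_false]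
      push_cast
      omega

end Drops

section Chernoff

lemma measure_le_mul_drops {p : ℝ} (hp : p ∈ Set.Icc (0 : ℝ) 1) (s c : ℝ) (t : ℕ) (x u : ℤ) :
    (Measure.infinitePi fun _ : Site 1 => siteLaw p) {ω | c ≤ s * drops ω t x u} ≤
      ENNReal.ofReal (Real.exp ((1 - p) * (Real.exp s - 1) * t - c)) := by
  have := isProbabilityMeasure_siteLaw hp
  have hmark := mul_meas_ge_le_lintegral₀ (μ := Measure.infinitePi fun _ : Site 1 => siteLaw p)
    (f := fun ω => ENNReal.ofReal (Real.exp s) ^ drops ω t x u)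
    ((measurable_drops t x u).const_pow _).aemeasurable (ENNReal.ofReal (Real.exp c))
  rw [lintegral_pow_drops hp] at hmark
  have hset : {ω : Config 1 | c ≤ s * drops ω t x u} =
      {ω | ENNReal.ofReal (Real.exp c) ≤ ENNReal.ofReal (Real.exp s) ^ drops ω t x u} := by
    ext ω
    rw [Set.mem_ofPred_eq, Set.mem_ofPred_eq, ← ENNReal.ofReal_pow (Real.exp_pos s).le,
      ENNReal.ofReal_le_ofReal_iff (by positivity), ← Real.exp_nat_mul, Real.exp_le_exp, mul_comm]
  rw [← hset] at hmark
  have hq : 0 ≤ 1 - p := by linarith [hp.2]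
  have hbase : ENNReal.ofReal p + ENNReal.ofReal (1 - p) * ENNReal.ofReal (Real.exp s) ≤
      ENNReal.ofReal (Real.exp ((1 - p) * (Real.exp s - 1))) := by
    rw [← ENNReal.ofReal_mul hq, ← ENNReal.ofReal_add hp.1 (by positivity)]
    refine ENNReal.ofReal_le_ofReal ?_
    have := Real.add_one_le_exp ((1 - p) * (Real.exp s - 1))
    linarith
  have hpow := pow_le_pow_left' hbase t
  rw [← ENNReal.ofReal_pow (Real.exp_pos _).le, ← Real.exp_nat_mul] at hpow
  have hc : ENNReal.ofReal (Real.exp c) ≠ 0 := by simp [Real.exp_pos]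
  rw [Real.exp_sub, ENNReal.ofReal_div_of_pos (Real.exp_pos c),
    ENNReal.le_div_iff_mul_le (Or.inl hc) (Or.inl ENNReal.ofReal_ne_top), mul_comm]
  refine (hmark.trans hpow).trans_eq ?_
  congr 2
  ring

end Chernoff

section Surfaces

lemma planeHt_etaK_one (α : ℝ) (x : Fin 1 → ℤ) : planeHt α (etaK 1 1) x = ⌊α * (x 0 : ℝ)⌋ := by
  simp [planeHt, etaK]

lemma mem_LIP_iff {α : ℝ} {ω : Config 1} : ω ∈ LIP α (etaK 1 1) ↔
    ∃ U : ℤ → ℤ, (∀ x, U (x + 1) ≤ U x ∧ U x ≤ U (x + 1) + 2) ∧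
      ∀ x : ℤ, ω (cell x (U x)) = true ∧ ⌊α * (x : ℝ)⌋ < x + U x := by
  constructor
  · rintro ⟨F, hF, h⟩
    refine ⟨fun x => F (fun _ => x) - x, fun x => ?_, fun x => ⟨?_, ?_⟩⟩
    · have := hF (fun _ => x + 1) (fun _ => x) (by simp)
      rw [abs_le] at this
      dsimp only
      constructor <;> omega
    · have := (h fun _ => x).1
      rwa [snoc_eq_cell] at this
    · have := (h fun _ => x).2
      rw [planeHt_etaK_one] at this
      dsimp only
      omega
  · rintro ⟨U, hU, h⟩
    refine ⟨fun x => x 0 + U (x 0), fun x y hxy => ?_, fun x => ⟨?_, ?_⟩⟩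
    · simp only [Fin.sum_univ_one] at hxy
      rcases (abs_eq (by norm_num)).1 hxy with h1 | h1
      · have e : x 0 = y 0 + 1 := by omega
        have := hU (y 0)
        simp only [e, abs_le]
        constructor <;> omega
      · have e : y 0 = x 0 + 1 := by omega
        have := hU (x 0)
        simp only [e, abs_le]
        constructor <;> omega
    · rw [snoc_eq_cell]
      simpa using (h (x 0)).1
    · rw [planeHt_etaK_one]
      exact (h (x 0)).2

lemma abs_sub_le_of_steps {U : ℤ → ℤ} (hU : ∀ x, U (x + 1) ≤ U x ∧ U x ≤ U (x + 1) + 2) (x : ℤ) :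
    U x ∈ Set.Icc (U 0 - 2 * |x|) (U 0 + 2 * |x|) := by
  induction x using Int.induction_on with
  | zero => simp
  | succ n ih =>
    have := hU n
    rw [Set.mem_Icc] at ih ⊢
    rw [abs_of_nonneg (by omega)] at ih ⊢
    omega
  | pred n ih =>
    have := hU (-n - 1)
    rw [sub_add_cancel] at this
    rw [Set.mem_Icc] at ih ⊢
    rw [abs_of_nonpos (by omega)] at ih ⊢
    omega

lemma measurableSet_LIP (α : ℝ) : MeasurableSet (LIP α (etaK 1 1)) := by
  let C (k : ℤ) : Set (Config 1 × (ℤ → ℤ)) :=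
    (Set.univ ×ˢ Set.univ.pi fun x : ℤ => Set.Icc (k - 2 * |x|) (k + 2 * |x|)) ∩
      ⋂ x : ℤ, ({c | c.2 (x + 1) ≤ c.2 x ∧ c.2 x ≤ c.2 (x + 1) + 2 ∧ ⌊α * (x : ℝ)⌋ < x + c.2 x} ∩
        ⋂ n : ℤ, {c | c.2 x ≠ n ∨ c.1 (cell x n) = true})
  have hC (k : ℤ) : IsCompact (C k) := by
    refine (isCompact_univ.prod (isCompact_univ_pi fun x => isCompact_Icc)).inter_right ?_
    refine isClosed_iInter fun x => IsClosed.inter ?_ (isClosed_iInter fun n => ?_)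
    · have hc : Continuous fun c : Config 1 × (ℤ → ℤ) => (c.2 x, c.2 (x + 1)) := by fun_prop
      exact (isClosed_discrete {e : ℤ × ℤ | e.2 ≤ e.1 ∧ e.1 ≤ e.2 + 2 ∧
        ⌊α * (x : ℝ)⌋ < x + e.1}).preimage hc
    · have hc : Continuous fun c : Config 1 × (ℤ → ℤ) => (c.2 x, c.1 (cell x n)) := by fun_prop
      exact (isClosed_discrete {e : ℤ × Bool | e.1 ≠ n ∨ e.2 = true}).preimage hc
  have hLIP : LIP α (etaK 1 1) = ⋃ k, Set.image Prod.fst (C k) := by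
    ext ω
    simp only [mem_LIP_iff, Set.mem_iUnion, Set.mem_image, Prod.exists, exists_and_right,
      exists_eq_right, C, Set.mem_inter_iff, Set.mem_iInter, Set.mem_prod, Set.mem_pi,
      Set.mem_univ, true_and, forall_const, Set.mem_ofPred_eq]
    constructor
    · rintro ⟨U, hU, h⟩
      refine ⟨U 0, U, abs_sub_le_of_steps hU, fun x => ⟨⟨(hU x).1, (hU x).2, (h x).2⟩, fun n => ?_⟩⟩
      by_cases hn : U x = n
      · exact Or.inr (hn ▸ (h x).1)
      · exact Or.inl hn
    · rintro ⟨k, U, -, h⟩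
      refine ⟨U, fun x => ⟨(h x).1.1, (h x).1.2.1⟩, fun x => ⟨?_, (h x).1.2.2⟩⟩
      simpa using (h x).2 (U x)
  rw [hLIP]
  exact MeasurableSet.iUnion fun k => ((hC k).image continuous_fst).isClosed.measurableSet

lemma measure_LIP_eq_zero {α p : ℝ} (hα : α < 1) (hp : 0 ≤ p) (hpα : p < α) :
    (Measure.infinitePi fun _ : Site 1 => siteLaw p) (LIP α (etaK 1 1)) = 0 := by
  have hp' : p ∈ Set.Icc (0 : ℝ) 1 := ⟨hp, by linarith⟩
  set δ := 1 - α with hδ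
  have hδ0 : 0 < δ := by linarith
  set θ := (1 - p - δ) / (2 * δ) with hθ
  have hθ0 : 0 < θ := by apply div_pos <;> linarith
  have hθδ : δ * (1 + θ) < 1 - p := by
    have : δ * θ = (1 - p - δ) / 2 := by rw [hθ]; field_simp
    linarith
  have hexp : Real.exp (-θ) * (1 + θ) ≤ 1 := by
    have h1 : Real.exp (-θ) * Real.exp θ = 1 := by rw [← Real.exp_add]; simp
    nlinarith [Real.exp_pos (-θ), Real.add_one_le_exp θ]
  have hc : 0 < (1 - p) * (1 - Real.exp (-θ)) - θ * δ := by
    have h2 : θ ≤ (1 - Real.exp (-θ)) * (1 + θ) := by linarith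
    have h3 : 0 < (1 - Real.exp (-θ)) := by
      have : Real.exp (-θ) < 1 := by simpa using hθ0
      linarith
    have h4 : θ * δ ≤ (1 - Real.exp (-θ)) * (δ * (1 + θ)) := by nlinarith
    nlinarith
  have hsub : LIP α (etaK 1 1) ⊆
      ⋃ k : ℤ, ⋂ t : ℕ, {ω | -θ * (k + δ * t) ≤ -θ * drops ω t 0 k} := by
    intro ω hω
    obtain ⟨U, hU, h⟩ := mem_LIP_iff.1 hω
    refine Set.mem_iUnion.2 ⟨U 0, Set.mem_iInter.2 fun t => ?_⟩
    have h1 := le_sub_drops (fun x => (hU x).1) (fun x => (h x).1) t (le_refl (U 0))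
    have h2 := (h t).2
    rw [Int.floor_lt] at h2
    rw [zero_add] at h1
    have h3 : (U t : ℝ) ≤ U 0 - drops ω t 0 (U 0) := by exact_mod_cast h1
    push_cast at h2
    rw [Set.mem_ofPred_eq]
    have h4 : (drops ω t 0 (U 0) : ℝ) ≤ U 0 + δ * t := by rw [hδ]; linarith
    nlinarith
  refine measure_mono_null hsub (measure_iUnion_null fun k => ?_)
  refine le_antisymm (ge_of_tendsto' (f := fun t : ℕ => ENNReal.ofReal (Real.exp
    (θ * k - ((1 - p) * (1 - Real.exp (-θ)) - θ * δ) * t))) (x := atTop) ?_ fun t => ?_) zero_le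
  · rw [← ENNReal.ofReal_zero]
    refine ENNReal.tendsto_ofReal (Real.tendsto_exp_atBot.comp ?_)
    refine tendsto_atBot_add_const_left _ _ (tendsto_neg_atTop_atBot.comp ?_)
    exact tendsto_natCast_atTop_atTop.const_mul_atTop hc
  · refine (measure_mono (Set.iInter_subset _ t)).trans ((measure_le_mul_drops hp' _ _ t 0 k).trans
      (le_of_eq ?_))
    congr 2
    ring

end Surfaces

section Blocks

/-- The origin of the block attached to a site `s` of the coarse lattice is `cell x u` with
`x = (N + W) * s 0` and `u` the value of this function. -/
def blockRow (W : ℕ) (s : Site 1) : ℤ := W * (s 1 - s 0) - (W - 1) * s 0 + 2 * W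

/-- The site at offset `c` from the origin of the block attached to the coarse site `s`. -/
def blockSite (W N : ℕ) (s : Site 1) (c : ℤ × ℤ) : Site 1 :=
  cell ((N + W) * s 0 + c.1) (blockRow W s + c.2)

/-- The offsets of the sites of a block: a rectangle with `W` rows, followed by three straight
lines leading from its last corner to the origins of three blocks of the next column. -/
noncomputable def blockOffsets (W N : ℕ) : Finset (ℤ × ℤ) :=
  Finset.Icc 0 (N : ℤ) ×ˢ Finset.Icc (-((W : ℤ) - 1)) 0 ∪
    (Finset.Icc 1 ((W : ℤ) - 1) ×ˢ Finset.Icc 0 2).image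
      fun c => ((N : ℤ) + c.1, -((W : ℤ) - 1) - c.2 * c.1)

/-- A block is good when an open path crosses its rectangle from the first to the last corner, and
the three lines which follow are open. -/
def GoodBlock (W N : ℕ) (η : ℤ × ℤ → Bool) : Prop :=
  ∃ g : ℕ → ℤ, g 0 = 0 ∧ g N = -((W : ℤ) - 1) ∧
    (∀ a < N, g (a + 1) ≤ g a ∧ g a ≤ g (a + 1) + 2) ∧
    (∀ a ≤ N, -((W : ℤ) - 1) ≤ g a ∧ g a ≤ 0 ∧ η (a, g a) = true) ∧
    ∀ r k : ℤ, 1 ≤ r → r < W → 0 ≤ k → k ≤ 2 → η (N + r, -((W : ℤ) - 1) - k * r) = true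

lemma GoodBlock.congr {W N : ℕ} {η η' : ℤ × ℤ → Bool}
    (h : ∀ c ∈ blockOffsets W N, η c = η' c) (hη : GoodBlock W N η) : GoodBlock W N η' := by
  obtain ⟨g, g0, gN, hstep, hopen, hline⟩ := hη
  refine ⟨g, g0, gN, hstep, fun a ha => ?_, fun r k h1 h2 h3 h4 => ?_⟩
  · obtain ⟨h1, h2, h3⟩ := hopen a ha
    refine ⟨h1, h2, ?_⟩
    rw [← h, h3]
    simp only [blockOffsets, Finset.mem_union, Finset.mem_product, Finset.mem_Icc]
    left
    constructor <;> constructor <;> omega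
  · rw [← h, hline r k h1 h2 h3 h4]
    simp only [blockOffsets, Finset.mem_union, Finset.mem_image, Finset.mem_product,
      Finset.mem_Icc]
    right
    exact ⟨(r, k), ⟨⟨h1, by omega⟩, h3, h4⟩, rfl⟩

open Classical in
lemma dependsOn_goodBlock (W N : ℕ) : DependsOn (fun η => decide (GoodBlock W N η))
    (blockOffsets W N : Set (ℤ × ℤ)) := by
  intro η η' h
  simp only [Finset.mem_coe] at h
  exact decide_eq_decide.2 ⟨GoodBlock.congr h, GoodBlock.congr fun c hc => (h c hc).symm⟩

lemma eq_zero_of_odd_mul_eq {W : ℕ} (hW : Odd W) {v d r : ℤ} (hr : 0 < r) (hrW : r < W)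
    (hd : -2 ≤ d) (hd' : d ≤ 2) (h : W * v = d * r) : v = 0 := by
  obtain ⟨w, hw⟩ := hW
  have h1 : v < 2 := by
    by_contra! hv
    have : (W : ℤ) * 2 ≤ W * v := by gcongr
    have : d * r ≤ 2 * r := by gcongr
    omega
  have h2 : -2 < v := by
    by_contra! hv
    have : (W : ℤ) * v ≤ W * (-2) := by gcongr
    have : (-2) * r ≤ d * r := by gcongr
    omega
  obtain rfl | rfl | rfl : v = -1 ∨ v = 0 ∨ v = 1 := by omega
  · obtain rfl | rfl | rfl | rfl | rfl : d = -2 ∨ d = -1 ∨ d = 0 ∨ d = 1 ∨ d = 2 := by omega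
    all_goals omega
  · rfl
  · obtain rfl | rfl | rfl | rfl | rfl : d = -2 ∨ d = -1 ∨ d = 0 ∨ d = 1 ∨ d = 2 := by omega
    all_goals omega

lemma blockSite_injective {W N : ℕ} (hW : Odd W) :
    Function.Injective fun c : Site 1 × blockOffsets W N => blockSite W N c.1 c.2 := by
  obtain ⟨w, hw⟩ := hW
  rintro ⟨s, ⟨a, b⟩, hab⟩ ⟨s', ⟨a', b'⟩, hab'⟩ h
  simp only [blockSite, blockRow, cell_inj] at h
  simp only [blockOffsets, Finset.mem_union, Finset.mem_product, Finset.mem_Icc,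
    Finset.mem_image, Prod.exists, Prod.mk.injEq] at hab hab'
  obtain ⟨h1, h2⟩ := h
  have ha : 0 ≤ a ∧ a < N + W := by
    rcases hab with hab | ⟨r, k, hrk, h3, -⟩ <;> omega
  have ha' : 0 ≤ a' ∧ a' < N + W := by
    rcases hab' with hab | ⟨r, k, hrk, h3, -⟩ <;> omega
  have hs0 : s 0 = s' 0 := by
    have e1 := Int.add_mul_ediv_left a (s 0) (b := (N : ℤ) + W) (by omega)
    have e2 := Int.add_mul_ediv_left a' (s' 0) (b := (N : ℤ) + W) (by omega)
    rw [Int.ediv_eq_zero_of_lt ha.1 ha.2] at e1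
    rw [Int.ediv_eq_zero_of_lt ha'.1 ha'.2] at e2
    have e3 : a + (N + W) * s 0 = a' + (N + W) * s' 0 := by linarith
    rw [e3] at e1
    linarith
  rw [hs0] at h1 h2
  have haa : a = a' := by linarith
  have hv : (W : ℤ) * (s 1 - s' 1) = b' - b := by linarith
  have key : s 1 - s' 1 = 0 := by
    generalize s 1 - s' 1 = v at hv
    have hvs : v = 0 ∨ 1 ≤ v ∨ v ≤ -1 := by omega
    have hbound (hb : |b' - b| < W) : v = 0 := by
      rw [abs_lt] at hb
      rcases hvs with hvs | hvs | hvs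
      · exact hvs
      · nlinarith
      · nlinarith
    rcases hab with hab | ⟨r, k, hrk, h3, h4⟩
    · rcases hab' with hab' | ⟨r', k', hrk', h3', h4'⟩
      · apply hbound
        rw [abs_lt]
        constructor <;> omega
      · omega
    · rcases hab' with hab' | ⟨r', k', hrk', h3', h4'⟩
      · omega
      · obtain rfl : r = r' := by omega
        refine eq_zero_of_odd_mul_eq (r := r) (d := k - k') ⟨w, hw⟩ (by omega) (by omega) ?_ ?_ ?_
        · omega
        · omega
        · rw [hv, ← h4, ← h4']
          ring
  have hbb : b = b' := by rw [key] at hv; linarith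
  have hs : s = s' := by
    ext i
    fin_cases i
    · exact hs0
    · simp only [Fin.mk_one]; linarith
  subst hs haa hbb
  rfl

lemma exists_path_of_blocks {ω : Config 1} {L : ℕ} (hL : 0 < L) {B : ℤ → ℤ} {H : ℤ → ℕ → ℤ}
    (h0 : ∀ i, H i 0 = 0) (hend : ∀ i, H i L = B (i + 1) - B i)
    (hstep : ∀ i, ∀ r < L, H i (r + 1) ≤ H i r ∧ H i r ≤ H i (r + 1) + 2)
    (hopen : ∀ i, ∀ r < L, ω (cell (L * i + r) (B i + H i r)) = true) :
    ∃ U : ℤ → ℤ, (∀ x, U (x + 1) ≤ U x ∧ U x ≤ U (x + 1) + 2) ∧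
      (∀ x, ω (cell x (U x)) = true) ∧ ∀ x, B (x / L + 1) ≤ U x := by
  have hlow (i : ℤ) (n : ℕ) : ∀ r, r + n = L → H i L ≤ H i r := by
    induction n with
    | zero => rintro r rfl; rfl
    | succ n ih => exact fun r hr => (ih (r + 1) (by omega)).trans (hstep i r (by omega)).1
  let U (x : ℤ) : ℤ := B (x / L) + H (x / L) (x % L).toNat
  have hU_lt (i : ℤ) (r : ℕ) (hr : r < L) : U (L * i + r) = B i + H i r := by
    have e1 : (L * i + r : ℤ) / L = i := by
      rw [add_comm, Int.add_mul_ediv_left _ _ (by omega),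
        Int.ediv_eq_zero_of_lt (by omega) (by omega), zero_add]
    have e2 : (L * i + r : ℤ) % L = r := by
      rw [add_comm, Int.add_mul_emod_self_left, Int.emod_eq_of_lt (by omega) (by omega)]
    simp only [U, e1, e2, Int.toNat_natCast]
  have hU (i : ℤ) (r : ℕ) (hr : r ≤ L) : U (L * i + r) = B i + H i r := by
    rcases hr.lt_or_eq with hr | rfl
    · exact hU_lt i r hr
    · have := hU_lt (i + 1) 0 hL
      rw [h0] at this
      rw [hend, show (r * i + r : ℤ) = r * (i + 1) + (0 : ℕ) by push_cast; ring, this]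
      ring
  have hx (x : ℤ) : ∃ r : ℕ, r < L ∧ x = L * (x / L) + r := by
    have h1 := Int.emod_nonneg x (b := L) (by omega)
    have h2 := Int.emod_lt_of_pos x (b := L) (by omega)
    have h3 := Int.mul_ediv_add_emod x L
    exact ⟨(x % L).toNat, by omega, by omega⟩
  refine ⟨U, fun x => ?_, fun x => ?_, fun x => ?_⟩
  · obtain ⟨r, hr, hxr⟩ := hx x
    have e1 := hU (x / L) r hr.le
    have e2 := hU (x / L) (r + 1) hr
    rw [← hxr] at e1
    rw [show (L * (x / L) + ((r + 1 : ℕ) : ℤ)) = x + 1 by push_cast; omega] at e2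
    rw [e1, e2]
    have := hstep (x / L) r hr
    constructor <;> omega
  · obtain ⟨r, hr, hxr⟩ := hx x
    have e1 := hU (x / L) r hr.le
    have := hopen (x / L) r hr
    rw [← hxr] at e1 this
    rwa [e1]
  · obtain ⟨r, hr, hxr⟩ := hx x
    have e1 := hU (x / L) r hr.le
    rw [← hxr] at e1
    have h1 := hlow (x / L) (L - r) r (by omega)
    rw [hend] at h1
    rw [e1]
    omega

open Classical in
lemma exists_path_of_coarse {W N : ℕ} (hW : 0 < W) {β δ : ℝ} (hβ : β ∈ Set.Icc (0 : ℝ) 1)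
    (hδ : W * (1 - β) + (W - 1) ≤ δ * (N + W)) (hδ0 : 0 ≤ δ) {ω : Config 1}
    (h : (fun s => decide (GoodBlock W N fun c => ω (blockSite W N s c))) ∈ LIP β (etaK 1 1)) :
    ∃ U : ℤ → ℤ, (∀ x, U (x + 1) ≤ U x ∧ U x ≤ U (x + 1) + 2) ∧
      (∀ x, ω (cell x (U x)) = true) ∧ ∀ x : ℤ, 0 ≤ x → -(δ * x) < U x := by
  obtain ⟨V, hV, hgood⟩ := mem_LIP_iff.1 h
  have hgood' (i : ℤ) := of_decide_eq_true (hgood i).1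
  choose g g0 gN hstep hopen hline using hgood'
  let B (i : ℤ) : ℤ := blockRow W (cell i (V i))
  have hB (i : ℤ) : B i = W * V i - (W - 1) * i + 2 * W := by
    simp [B, blockRow, cell]
  let H (i : ℤ) (r : ℕ) : ℤ :=
    if r ≤ N then g i r else -((W : ℤ) - 1) - (V i - V (i + 1)) * (r - N)
  have hHN (i : ℤ) (r : ℕ) (hr : N ≤ r) :
      H i r = -((W : ℤ) - 1) - (V i - V (i + 1)) * (r - N) := by
    rcases hr.eq_or_lt with rfl | hr
    · simp [H, gN]
    · simp [H, not_le.2 hr]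
  obtain ⟨U, hU1, hU2, hU3⟩ := exists_path_of_blocks (ω := ω) (L := N + W) (by omega) (B := B)
    (H := H) (fun i => by simp [H, g0]) (fun i => by
      rw [hHN i _ (by omega), hB, hB]; push_cast; ring) (fun i r hr => by
      by_cases hrN : r < N
      · have e1 : H i r = g i r := by simp only [H]; rw [if_pos hrN.le]
        have e2 : H i (r + 1) = g i (r + 1) := by simp only [H]; rw [if_pos (by omega)]
        rw [e1, e2]
        exact hstep i r hrN
      · have := hV i
        rw [hHN i r (by omega), hHN i (r + 1) (by omega)]
        push_cast
        constructor <;> linarith) (fun i r hr => by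
      by_cases hrN : r ≤ N
      · have e1 : H i r = g i r := by simp only [H]; rw [if_pos hrN]
        have := (hopen i r hrN).2.2
        rw [e1]
        simpa [blockSite, cell, B] using this
      · have hVi := hV i
        have := hline i (r - N) (V i - V (i + 1)) (by omega) (by omega) (by omega) (by omega)
        rw [hHN i r (by omega)]
        have e : ((N + W : ℕ) : ℤ) * i + r = ((N : ℤ) + W) * i + (N + (r - N)) := by
          push_cast; ring
        rw [e]
        exact this)
  refine ⟨U, hU1, hU2, fun x hx => ?_⟩
  set i := x / ((N + W : ℕ) : ℤ) with hi
  have hi0 : 0 ≤ i := Int.ediv_nonneg hx (by omega)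
  have hix : ((N + W : ℕ) : ℤ) * i ≤ x := Int.mul_ediv_self_le (by omega)
  have h1 : (B (i + 1) : ℝ) ≤ U x := by exact_mod_cast hU3 x
  have h2 := (hgood (i + 1)).2
  rw [Int.floor_lt] at h2
  rw [hB] at h1
  push_cast at h1 h2
  have h3 : ((N : ℝ) + W) * i ≤ x := by exact_mod_cast hix
  have hi0' : (0 : ℝ) ≤ i := by exact_mod_cast hi0
  have hW' : (1 : ℝ) ≤ W := by exact_mod_cast hW
  have h4 : (W : ℝ) * (β * (i + 1)) ≤ W * (i + 1 + V (i + 1)) := by gcongr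
  have h5 : δ * (((N : ℝ) + W) * i) ≤ δ * x := by gcongr
  have h6 : ((W : ℝ) * (1 - β) + (W - 1)) * i ≤ δ * (N + W) * i := by gcongr
  have h7 : 0 ≤ (W : ℝ) * β := mul_nonneg (by linarith) hβ.1
  nlinarith

end Blocks

section GoodBlocks

lemma measure_exists_eq_false_le {ι : Type*} {p : ℝ} (hp : p ∈ Set.Icc (0 : ℝ) 1) {κ : Type*}
    (J : Finset κ) (f : κ → ι) :
    (Measure.infinitePi fun _ : ι => siteLaw p) {ω | ∃ j ∈ J, ω (f j) = false} ≤
      J.card * ENNReal.ofReal (1 - p) := by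
  have h : {ω : ι → Bool | ∃ j ∈ J, ω (f j) = false} = ⋃ j ∈ J, {ω | ω (f j) = false} := by
    ext; simp
  rw [h]
  refine (measure_biUnion_finset_le J _).trans_eq ?_
  simp only [measure_coord_eq_false hp, Finset.sum_const, nsmul_eq_mul]

lemma measure_exists_pair_eq_false_le {ι : Type*} {p : ℝ} (hp : p ∈ Set.Icc (0 : ℝ) 1) {κ : Type*}
    (J : Finset κ) (f g : κ → ι) (hfg : ∀ j, f j ≠ g j) :
    (Measure.infinitePi fun _ : ι => siteLaw p)
        {ω | ∃ j ∈ J, ω (f j) = false ∧ ω (g j) = false} ≤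
      J.card * ENNReal.ofReal (1 - p) ^ 2 := by
  have h : {ω : ι → Bool | ∃ j ∈ J, ω (f j) = false ∧ ω (g j) = false} =
      ⋃ j ∈ J, {ω | ω (f j) = false ∧ ω (g j) = false} := by
    ext
    simp only [Set.mem_ofPred_eq, Set.mem_iUnion, exists_prop]
  rw [h]
  refine (measure_biUnion_finset_le J _).trans_eq ?_
  simp only [measure_coord_pair_eq_false hp (hfg _), Finset.sum_const, nsmul_eq_mul]

lemma goodBlock_of_drops_lt {ω : Config 1} {W t : ℕ} {x u : ℤ} (hdrops : drops ω t x u < W)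
    (hpair : ∀ a b : ℕ, 1 ≤ a → a ≤ t → b < W →
      ω (cell (x + a) (u - b)) = true ∨ ω (cell (x + a) (u - b - 1)) = true)
    (hstart : ω (cell x u) = true)
    (hlast : ∀ a b : ℕ, a < W → b < W → ω (cell (x + (t + 1 + a)) (u - b)) = true)
    (hline : ∀ r k : ℕ, r < W → k < 3 →
      ω (cell (x + (t + W + r)) (u - (W - 1) - k * r)) = true) :
    GoodBlock W (t + W) fun c => ω (cell (x + c.1) (u + c.2)) := by
  obtain ⟨g, g0, hstep, hopen, hg⟩ := exists_path_of_drops_le (m := W - 1) (by omega)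
    fun a b h1 h2 h3 => hpair a b h1 h2 (by omega)
  have hgt := hg t le_rfl
  have hcast : ((W - 1 : ℕ) : ℤ) = W - 1 := by omega
  rw [hcast] at hg hgt
  let G (a : ℕ) : ℤ := if a ≤ t then g a - u else max (-((W : ℤ) - 1)) (g t - u - (a - t))
  have hG1 (a : ℕ) (ha : a ≤ t) : G a = g a - u := if_pos ha
  have hG2 (a : ℕ) (ha : t ≤ a) : G a = max (-((W : ℤ) - 1)) (g t - u - (a - t)) := by
    rcases ha.eq_or_lt with rfl | ha
    · rw [hG1 _ le_rfl]
      omega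
    · exact if_neg (by omega)
  refine ⟨G, ?_, ?_, fun a ha => ?_, fun a ha => ?_, fun r k h1 h2 h3 h4 => ?_⟩
  · rw [hG1 0 (by omega), g0, sub_self]
  · rw [hG2 _ (by omega)]
    push_cast
    omega
  · by_cases hat : a < t
    · rw [hG1 a hat.le, hG1 (a + 1) hat]
      have := hstep a hat
      constructor <;> omega
    · rw [hG2 a (by omega), hG2 (a + 1) (by omega)]
      push_cast
      constructor <;> omega
  · by_cases hat : a ≤ t
    · have h1 := hg a hat
      rw [hG1 a hat]
      refine ⟨by omega, by omega, ?_⟩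
      dsimp only
      rw [show u + (g a - u) = g a by ring]
      rcases Nat.eq_zero_or_pos a with rfl | ha0
      · simpa [g0] using hstart
      · exact hopen a ha0 hat
    · have hGa := hG2 a (by omega)
      have h1 : -((W : ℤ) - 1) ≤ G a ∧ G a ≤ 0 := by constructor <;> omega
      refine ⟨h1.1, h1.2, ?_⟩
      have := hlast (a - t - 1) (-G a).toNat (by omega) (by omega)
      dsimp only
      convert this using 3
      · omega
      · omega
  · have := hline r.toNat k.toNat (by omega) (by omega)
    rw [Int.toNat_of_nonneg (by omega), Int.toNat_of_nonneg h3] at this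
    dsimp only
    push_cast
    convert this using 2
    ring_nf

lemma one_le_measure_goodBlock_add {p : ℝ} (hp : p ∈ Set.Icc (0 : ℝ) 1) (W t : ℕ) (x u : ℤ) {s : ℝ}
    (hs : 0 ≤ s) :
    1 ≤ (Measure.infinitePi fun _ : Site 1 => siteLaw p)
        {ω | GoodBlock W (t + W) fun c => ω (cell (x + c.1) (u + c.2))} +
      ENNReal.ofReal (Real.exp ((1 - p) * (Real.exp s - 1) * t - s * W) +
        t * W * (1 - p) ^ 2 + (1 + W * W + W * 3) * (1 - p)) := by
  have := isProbabilityMeasure_siteLaw hp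
  have hq : 0 ≤ 1 - p := by linarith [hp.2]
  set μ := Measure.infinitePi fun _ : Site 1 => siteLaw p
  let A : Set (Config 1) := {ω | s * W ≤ s * drops ω t x u}
  let B : Set (Config 1) := {ω | ∃ j ∈ Finset.Icc 1 t ×ˢ Finset.range W,
    ω (cell (x + j.1) (u - j.2)) = false ∧ ω (cell (x + j.1) (u - j.2 - 1)) = false}
  let C : Set (Config 1) := {ω | ω (cell x u) = false}
  let D : Set (Config 1) := {ω | ∃ j ∈ Finset.range W ×ˢ Finset.range W,
    ω (cell (x + (t + 1 + j.1)) (u - j.2)) = false}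
  let E : Set (Config 1) := {ω | ∃ j ∈ Finset.range W ×ˢ Finset.range 3,
    ω (cell (x + (t + W + j.1)) (u - (W - 1) - j.2 * j.1)) = false}
  have hcover : Set.univ ⊆ {ω | GoodBlock W (t + W) fun c => ω (cell (x + c.1) (u + c.2))} ∪
      (A ∪ B ∪ (C ∪ D ∪ E)) := by
    intro ω _
    by_contra hω
    simp only [A, B, C, D, E, Set.mem_union, Set.mem_ofPred_eq, not_or, not_exists, not_and,
      Finset.mem_product, Finset.mem_Icc, Finset.mem_range, Prod.forall,
      Bool.not_eq_false, and_imp] at hω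
    obtain ⟨hgood, ⟨hA, hB⟩, ⟨hC, hD⟩, hE⟩ := hω
    refine hgood (goodBlock_of_drops_lt ?_ (fun a b h1 h2 h3 => ?_) hC hD hE)
    · by_contra! h
      exact hA (by gcongr)
    · have := hB a b h1 h2 h3
      cases h : ω (cell (x + a) (u - b))
      · exact Or.inr (this h)
      · exact Or.inl rfl
  have hA : μ A ≤ ENNReal.ofReal (Real.exp ((1 - p) * (Real.exp s - 1) * t - s * W)) :=
    measure_le_mul_drops hp s _ t x u
  have hB : μ B ≤ ENNReal.ofReal (t * W * (1 - p) ^ 2) := by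
    refine (measure_exists_pair_eq_false_le hp _ _ _ fun j h => ?_).trans_eq ?_
    · have := (cell_inj.1 h).2
      omega
    · rw [ENNReal.ofReal_mul (by positivity), ENNReal.ofReal_pow hq]
      simp [ENNReal.ofReal_mul]
  have hC : μ C ≤ ENNReal.ofReal (1 * (1 - p)) := by
    rw [one_mul]
    exact (measure_coord_eq_false hp _).le
  have hD : μ D ≤ ENNReal.ofReal (W * W * (1 - p)) := by
    refine (measure_exists_eq_false_le hp _ _).trans_eq ?_
    rw [ENNReal.ofReal_mul (by positivity)]
    simp [ENNReal.ofReal_mul]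
  have hE : μ E ≤ ENNReal.ofReal (W * 3 * (1 - p)) := by
    refine (measure_exists_eq_false_le hp _ _).trans_eq ?_
    rw [ENNReal.ofReal_mul (by positivity)]
    simp [ENNReal.ofReal_mul]
  have hsum : ENNReal.ofReal (Real.exp ((1 - p) * (Real.exp s - 1) * t - s * W) +
        t * W * (1 - p) ^ 2 + (1 + W * W + W * 3) * (1 - p)) =
      ENNReal.ofReal (Real.exp ((1 - p) * (Real.exp s - 1) * t - s * W)) +
        ENNReal.ofReal (t * W * (1 - p) ^ 2) + (ENNReal.ofReal (1 * (1 - p)) +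
        ENNReal.ofReal (W * W * (1 - p)) + ENNReal.ofReal (W * 3 * (1 - p))) := by
    rw [add_mul, add_mul]
    iterate 4 rw [ENNReal.ofReal_add (by positivity) (by positivity)]
  rw [hsum, ← measure_univ (μ := μ)]
  refine (measure_mono hcover).trans ((measure_union_le _ _).trans ?_)
  gcongr
  refine (measure_union_le _ _).trans (add_le_add ?_ ?_)
  · exact (measure_union_le _ _).trans (add_le_add hA hB)
  · refine (measure_union_le _ _).trans (add_le_add ?_ hE)
    exact (measure_union_le _ _).trans (add_le_add hC hD)

end GoodBlocks

section Renormalization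

lemma mem_LIP_of_coarse {W N : ℕ} (hW : 0 < W) {β δ : ℝ} (hβ : β ∈ Set.Icc (0 : ℝ) 1)
    (hδ : W * (1 - β) + (W - 1) ≤ δ * (N + W)) (hδ0 : 0 ≤ δ) (hδ1 : δ ≤ 1) {ω : Config 1}
    (h0 : ω ∈ LIP 0 (etaK 1 1))
    (h : open Classical in
      (fun s => decide (GoodBlock W N fun c => ω (blockSite W N s c))) ∈ LIP β (etaK 1 1)) :
    ω ∈ LIP (1 - δ) (etaK 1 1) := by
  obtain ⟨U, hU, hUω, hUδ⟩ := exists_path_of_coarse hW hβ hδ hδ0 h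
  obtain ⟨V, hV, hVω⟩ := mem_LIP_iff.1 h0
  refine mem_LIP_iff.2 ⟨fun x => max (U x) (V x), fun x => ?_, fun x => ⟨?_, ?_⟩⟩
  · have h1 := hU x
    have h2 := hV x
    dsimp only
    constructor <;> omega
  · dsimp only
    rcases max_choice (U x) (V x) with e | e <;> rw [e]
    · exact hUω x
    · exact (hVω x).1
  · rw [Int.floor_lt]
    push_cast
    rcases le_total 0 x with hx | hx
    · have h1 := hUδ x hx
      have h2 := le_max_left (U x : ℝ) (V x)
      linarith
    · have h1 := (hVω x).2
      rw [zero_mul, Int.floor_zero] at h1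
      have h2 : (0 : ℝ) < x + V x := by exact_mod_cast h1
      have h3 := le_max_right (U x : ℝ) (V x)
      have h4 : (x : ℝ) ≤ 0 := by exact_mod_cast hx
      nlinarith

lemma measure_LIP_eq_one_of_coarse {W N : ℕ} (hW : Odd W) {p β δ : ℝ} (hp : p ∈ Set.Icc (0 : ℝ) 1)
    (hβ : β ∈ Set.Icc (0 : ℝ) 1) (hδ : W * (1 - β) + (W - 1) ≤ δ * (N + W)) (hδ0 : 0 ≤ δ)
    (hδ1 : δ ≤ 1)
    (h0 : (Measure.infinitePi fun _ : Site 1 => siteLaw p) (LIP 0 (etaK 1 1)) = 1)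
    (h : ∀ r ∈ Set.Icc (0 : ℝ) 1, (∀ s, (Measure.infinitePi fun _ : Site 1 => siteLaw p).real
        {ω | GoodBlock W N fun c => ω (blockSite W N s c)} = r) →
      (Measure.infinitePi fun _ : Site 1 => siteLaw r) (LIP β (etaK 1 1)) = 1) :
    (Measure.infinitePi fun _ : Site 1 => siteLaw p) (LIP (1 - δ) (etaK 1 1)) = 1 := by
  classical
  have := isProbabilityMeasure_siteLaw hp
  obtain ⟨φ, hφ⟩ := dependsOn_iff_exists_comp.1 (dependsOn_goodBlock W N)
  have hξ (ω : Config 1) (s : Site 1) : φ (fun c => ω (blockSite W N s c)) =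
      decide (GoodBlock W N fun c => ω (blockSite W N s c)) :=
    (congrFun hφ fun c => ω (blockSite W N s c)).symm
  obtain ⟨r, hr, hmap, hgood⟩ := map_blocks hp (blockSite_injective (N := N) hW) φ
  dsimp only at hmap hgood
  have hr1 := h r hr fun s => by
    rw [← hgood s]
    congr 1
    ext ω
    exact (decide_eq_true_iff.symm.trans (Eq.congr_left (hξ ω s).symm))
  have hmeas : Measurable fun (ω : Config 1) (s : Site 1) =>
      φ fun c => ω (blockSite W N s c) :=
    measurable_pi_lambda _ fun s => (measurable_of_countable φ).comp
      (measurable_pi_lambda _ fun c => measurable_pi_apply _)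
  rw [← hmap] at hr1
  replace hr1 := (Measure.map_apply hmeas (measurableSet_LIP β)).symm.trans hr1
  rw [← mem_ae_iff_prob_eq_one (measurableSet_LIP _)] at h0 ⊢
  rw [← mem_ae_iff_prob_eq_one (hmeas (measurableSet_LIP β))] at hr1
  filter_upwards [h0, hr1] with ω h1 h2
  refine mem_LIP_of_coarse hW.pos hβ hδ hδ0 hδ1 h1 ?_
  simpa only [hξ, Set.mem_preimage] using h2

end Renormalization

section CriticalValue

lemma exists_odd_forall_lt {ε θ : ℝ} (hε : 0 < ε) (hε1 : ε < 1) (hθ : 0 < θ) :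
    ∃ W : ℕ, Odd W ∧ ∃ δ₀ > 0, ∀ δ, 0 < δ → δ < δ₀ → ∃ t : ℕ, W * (1 + ε / 2) ≤ δ * t ∧
      Real.exp ((1 - ε) * δ * (ε / 2) * t - Real.log (1 + ε / 2) * W) +
        t * W * ((1 - ε) * δ) ^ 2 + (1 + W * W + W * 3) * ((1 - ε) * δ) < θ := by
  obtain ⟨y, rfl⟩ : ∃ y, ε = 2 * y := ⟨ε / 2, by ring⟩
  rw [show 2 * y / 2 = y by ring]
  have hy : 0 < y := by linarith
  have hlog : y * (1 - y) + y ^ 3 / (1 + y) ≤ Real.log (1 + y) := by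
    refine le_trans (le_of_eq ?_) (Real.one_sub_inv_le_log_of_pos (by linarith))
    field_simp
    ring
  set c := y ^ 3 / (1 + y)
  have hc : 0 < c := by positivity
  obtain ⟨n, hn⟩ := exists_nat_gt ((1 - Real.log (θ / 2)) / c)
  rw [div_lt_iff₀ hc] at hn
  let W : ℕ := 2 * n + 1
  have hW : (W : ℝ) = 2 * n + 1 := by push_cast [W]; ring
  have hn0 : (0 : ℝ) ≤ n := n.cast_nonneg
  have hexp : Real.exp (1 - c * W) < θ / 2 := by
    rw [← Real.lt_log_iff_exp_lt (by linarith), hW]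
    nlinarith
  have hK : (0 : ℝ) < (W + 1) * W + (1 + W * W + W * 3) := by positivity
  refine ⟨W, ⟨n, rfl⟩, min 1 (θ / 2 / ((W + 1) * W + (1 + W * W + W * 3))), by positivity,
    fun δ hδ hδ₀ => ⟨⌈W * (1 + y) / δ⌉₊, ?_, ?_⟩⟩
  · have := Nat.le_ceil (W * (1 + y) / δ)
    rwa [div_le_iff₀ hδ, mul_comm _ δ] at this
  · have ht := (Nat.ceil_lt_add_one (a := W * (1 + y) / δ) (by positivity)).le
    set t := ⌈W * (1 + y) / δ⌉₊
    obtain ⟨hδ1, hδθ⟩ := lt_min_iff.1 hδ₀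
    rw [lt_div_iff₀ hK] at hδθ
    have ht' : δ * t ≤ W * (1 + y) + δ := by
      calc δ * t ≤ δ * (W * (1 + y) / δ + 1) := by gcongr
        _ = W * (1 + y) + δ := by field_simp
    have hW0 : (0 : ℝ) ≤ W := W.cast_nonneg
    have hq0 : 0 ≤ 1 - 2 * y := by linarith
    have hqt : (1 - 2 * y) * δ * t ≤ (1 - y) * W + δ := by
      calc (1 - 2 * y) * δ * t = (1 - 2 * y) * (δ * t) := by ring
        _ ≤ (1 - 2 * y) * (W * (1 + y) + δ) := by gcongr
        _ ≤ (1 - y) * W + δ := by nlinarith [mul_nonneg hW0 (sq_nonneg y), mul_pos hy hδ]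
    have hq : (1 - 2 * y) * δ ≤ δ := by nlinarith
    have h1 : Real.exp ((1 - 2 * y) * δ * y * t - Real.log (1 + y) * W) < θ / 2 := by
      refine lt_of_le_of_lt (Real.exp_le_exp.2 ?_) hexp
      have e1 : y * ((1 - 2 * y) * δ * t) ≤ y * ((1 - y) * W + δ) := by gcongr
      have e2 : (y * (1 - y) + c) * W ≤ Real.log (1 + y) * W := by gcongr
      have e3 : y * δ ≤ 1 := by nlinarith
      linarith
    have h2 : t * W * ((1 - 2 * y) * δ) ^ 2 ≤ (W + 1) * W * δ := by
      calc t * W * ((1 - 2 * y) * δ) ^ 2 = (1 - 2 * y) * δ * t * W * ((1 - 2 * y) * δ) := by ring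
        _ ≤ (W + 1) * W * δ := by
          gcongr
          nlinarith
    have h3 : (1 + W * W + W * 3) * ((1 - 2 * y) * δ) ≤ (1 + W * W + W * 3) * δ := by gcongr
    linarith

variable {P : ℝ → Measure (Config 1)} {pc : ℝ → ℝ}

lemma one_sub_criticalProb_le (hP : ∀ p ∈ Set.Icc (0 : ℝ) 1, IsBernoulli p (P p)) {α : ℝ}
    (hα : α ∈ Set.Ico (0 : ℝ) 1) (hpc : IsCriticalProb P α (etaK 1 1) (pc α)) :
    1 - pc α ≤ 1 - α := by
  by_contra! h
  have hlt : pc α < α := by linarith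
  obtain ⟨p, hp, hpα⟩ := exists_between hlt
  have hp0 : p ∈ Set.Icc (0 : ℝ) 1 := ⟨hpc.1.1.le.trans hp.le, hpα.le.trans hα.2.le⟩
  have h1 := hpc.2.2 p hp hp0.2
  rw [(hP p hp0).eq_infinitePi hp0, measure_LIP_eq_zero hα.2 hp0.1 hpα] at h1
  exact zero_ne_one h1

lemma eventually_le_one_sub_criticalProb
    (hP : ∀ p ∈ Set.Icc (0 : ℝ) 1, IsBernoulli p (P p))
    (hpc : ∀ α ∈ Set.Ico (0 : ℝ) 1, IsCriticalProb P α (etaK 1 1) (pc α)) {ε : ℝ} (hε : 0 < ε)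
    (hε1 : ε < 1) :
    ∀ᶠ α in nhdsWithin 1 (Set.Iio 1), (1 - ε) * (1 - α) ≤ 1 - pc α := by
  have hβ : 1 - ε / 2 ∈ Set.Ico (0 : ℝ) 1 := ⟨by linarith, by linarith⟩
  have hpcβ := hpc _ hβ
  have hpc0 := hpc 0 ⟨le_rfl, one_pos⟩
  obtain ⟨W, hW, δ₀, hδ₀, hWδ⟩ := exists_odd_forall_lt hε hε1 (sub_pos.2 hpcβ.1.2)
  have hm : max 0 (max (1 - δ₀) (pc 0)) < 1 :=
    max_lt one_pos (max_lt (by linarith) hpc0.1.2)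
  filter_upwards [Ioo_mem_nhdsLT hm] with α hα
  obtain ⟨hα0, hα'⟩ := max_lt_iff.1 hα.1
  obtain ⟨hαδ, hαpc⟩ := max_lt_iff.1 hα'
  obtain ⟨δ, rfl⟩ : ∃ δ, α = 1 - δ := ⟨1 - α, by ring⟩
  have hδ : 0 < δ := by linarith [hα.2]
  obtain ⟨t, ht, hbad⟩ := hWδ δ hδ (by linarith)
  obtain ⟨p, hpdef⟩ : ∃ p, p = 1 - (1 - ε) * δ := ⟨_, rfl⟩
  have hqδ : (1 - ε) * δ < δ := by nlinarith
  have hq0 : 0 < (1 - ε) * δ := mul_pos (by linarith) hδ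
  have hp : p ∈ Set.Icc (0 : ℝ) 1 := ⟨by linarith, by linarith⟩
  have := isProbabilityMeasure_siteLaw hp
  have h0 := hpc0.2.2 p (by linarith) hp.2
  rw [(hP p hp).eq_infinitePi hp] at h0
  have hone := measure_LIP_eq_one_of_coarse (N := t + W) (β := 1 - ε / 2) (δ := δ) hW hp
    (Set.Ico_subset_Icc_self hβ) (by
      have : 0 ≤ δ * W := by positivity
      push_cast
      linarith) hδ.le (by linarith) h0 fun r hr hgood => by
      have h1 := one_le_measure_goodBlock_add hp W t ((↑(t + W) + W) * (0 : Site 1) 0)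
        (blockRow W 0) (s := Real.log (1 + ε / 2)) (Real.log_nonneg (by linarith))
      have h2 := hgood 0
      simp only [blockSite] at h2
      rw [Real.exp_log (by linarith), ← ofReal_measureReal, h2, ← ENNReal.ofReal_add hr.1,
        ENNReal.one_le_ofReal, show 1 - p = (1 - ε) * δ by linarith, add_sub_cancel_left] at h1
      · have h3 := hpcβ.2.2 r (by linarith) hr.2
        rwa [(hP r hr).eq_infinitePi hr] at h3
      · have : 0 ≤ 1 - p := by linarith
        positivity
  rw [_root_.sub_sub_cancel]
  by_contra! hlt
  have h4 := (hpc (1 - δ) ⟨hα0.le, hα.2⟩).2.1 p hp.1 (by linarith)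
  rw [(hP p hp).eq_infinitePi hp, hone] at h4
  exact one_ne_zero h4

end CriticalValue

/-- Exact asymptotics in dimension one:
`q_L(α,1,1) ∼ (1−α)` as `α → 1⁻`, i.e. `lim_{α→1⁻} q_L(α,1,1)/(1−α) = 1`. -/
theorem qL_dim_one_asymptotics
    (P : ℝ → Measure (Config 1)) (hP : ∀ p ∈ Set.Icc (0 : ℝ) 1, IsBernoulli p (P p))
    (pc : ℝ → ℝ) (hpc : ∀ α ∈ Set.Ico (0 : ℝ) 1, IsCriticalProb P α (etaK 1 1) (pc α)) :
    Tendsto (fun α : ℝ => (1 - pc α) / (1 - α)) (nhdsWithin 1 (Set.Iio 1)) (nhds 1) := by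
  refine tendsto_order.2 ⟨fun a ha => ?_, fun a ha => ?_⟩
  · have hm : max a 0 < 1 := max_lt ha one_pos
    have hm0 := le_max_right a 0
    have hma := le_max_left a 0
    filter_upwards [eventually_le_one_sub_criticalProb hP hpc (ε := (1 - max a 0) / 2)
      (by linarith) (by linarith), self_mem_nhdsWithin] with α hα hα1
    rw [lt_div_iff₀ (sub_pos.2 hα1)]
    refine lt_of_lt_of_le ?_ hα
    gcongr
    · exact sub_pos.2 hα1
    · linarith
  · filter_upwards [Ioo_mem_nhdsLT one_pos] with α hα
    refine lt_of_le_of_lt ((div_le_one (sub_pos.2 hα.2)).2 ?_) ha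
    have hα' : α ∈ Set.Ico (0 : ℝ) 1 := ⟨hα.1.le, hα.2⟩
    exact one_sub_criticalProb_le hP hα' (hpc α hα')
end

section
/- Asymptotic upper bound for d → ∞: for every α ∈ [0,1) one has limsup_{d→∞} q_L(α,d,d) · d^{1/(1−α)} ≤ C(α), where for α ∈ (0,1) the constant is C(α) = θ^{1/(1−α)}/(e^θ − 1) with θ > 0 the unique solution of θ·e^θ/(e^θ − 1) = 1/(1−α), and C(0) = 1. -/
open MeasureTheory Filter ENNReal

theorem second_moment_le_measureReal_iUnion {Ω ι : Type*} [MeasurableSpace Ω] [Fintype ι]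
    (μ : Measure Ω) [IsProbabilityMeasure μ] (E : ι → Set Ω) (hE : ∀ i, MeasurableSet (E i))
    (t : ℝ) :
    2 * t * ∑ i, μ.real (E i) - t ^ 2 * ∑ i, ∑ j, μ.real (E i ∩ E j) ≤ μ.real (⋃ i, E i) := by
  classical
  have hU : MeasurableSet (⋃ i, E i) := MeasurableSet.iUnion hE
  have hint : ∀ A : Set Ω, MeasurableSet A → Integrable (A.indicator (1 : Ω → ℝ)) μ :=
    fun A hA => (integrable_const (1 : ℝ)).indicator hA
  have h1 : Integrable (fun ω => ∑ i, (E i).indicator (1 : Ω → ℝ) ω) μ :=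
    integrable_finsetSum _ fun i _ => hint _ (hE i)
  have h2 : Integrable (fun ω => ∑ i, ∑ j, (E i ∩ E j).indicator (1 : Ω → ℝ) ω) μ :=
    integrable_finsetSum _ fun i _ => integrable_finsetSum _ fun j _ =>
      hint _ ((hE i).inter (hE j))
  have e1 : ∫ ω, ∑ i, (E i).indicator (1 : Ω → ℝ) ω ∂μ = ∑ i, μ.real (E i) := by
    rw [integral_finsetSum _ fun i _ => hint _ (hE i)]
    exact Finset.sum_congr rfl fun i _ => integral_indicator_one (hE i)
  have e2 : ∫ ω, ∑ i, ∑ j, (E i ∩ E j).indicator (1 : Ω → ℝ) ω ∂μ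
      = ∑ i, ∑ j, μ.real (E i ∩ E j) := by
    rw [integral_finsetSum _ fun i _ => integrable_finsetSum _ fun j _ =>
      hint _ ((hE i).inter (hE j))]
    refine Finset.sum_congr rfl fun i _ => ?_
    rw [integral_finsetSum _ fun j _ => hint _ ((hE i).inter (hE j))]
    exact Finset.sum_congr rfl fun j _ => integral_indicator_one ((hE i).inter (hE j))
  rw [← e1, ← e2, ← integral_indicator_one hU, ← integral_const_mul, ← integral_const_mul,
    ← integral_sub (h1.const_mul _) (h2.const_mul _)]
  refine integral_mono ((h1.const_mul _).sub (h2.const_mul _)) (hint _ hU) fun ω => ?_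
  have hsq : ∑ i, ∑ j, (E i ∩ E j).indicator (1 : Ω → ℝ) ω
      = (∑ i, (E i).indicator (1 : Ω → ℝ) ω) ^ 2 := by
    rw [sq, Finset.sum_mul_sum]
    refine Finset.sum_congr rfl fun i _ => Finset.sum_congr rfl fun j _ => ?_
    rw [Set.inter_indicator_one]; rfl
  simp only [hsq]
  by_cases hω : ω ∈ ⋃ i, E i
  · rw [Set.indicator_of_mem hω]
    simp only [Pi.one_apply]
    nlinarith [sq_nonneg (t * (∑ i, (E i).indicator (1 : Ω → ℝ) ω) - 1)]
  · have hz : ∑ i, (E i).indicator (1 : Ω → ℝ) ω = 0 :=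
      Finset.sum_eq_zero fun i _ =>
        Set.indicator_of_notMem (fun hi => hω (Set.mem_iUnion.2 ⟨i, hi⟩)) _
    rw [Set.indicator_of_notMem hω, hz]
    simp

/-- The σ-algebra on configurations generated by the sites in `S`. -/
@[reducible]
def sitesSigma {ι : Type*} (S : Set ι) : MeasurableSpace (ι → Bool) :=
  ⨆ i ∈ S, MeasurableSpace.generateFrom {{ω : ι → Bool | ω i = false}}

theorem measurableSet_sitesSigma_closed {ι : Type*} {S : Set ι} {i : ι} (hi : i ∈ S) :
    MeasurableSet[sitesSigma S] {ω : ι → Bool | ω i = false} := by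
  have h : MeasurableSpace.generateFrom {{ω : ι → Bool | ω i = false}} ≤ sitesSigma S :=
    le_iSup₂_of_le i hi le_rfl
  exact h _ (MeasurableSpace.measurableSet_generateFrom rfl)

theorem sitesSigma_mono {ι : Type*} {S T : Set ι} (h : S ⊆ T) : sitesSigma S ≤ sitesSigma T :=
  biSup_mono h

theorem measurableSet_closed {ι : Type*} (i : ι) :
    MeasurableSet {ω : ι → Bool | ω i = false} :=
  (measurable_pi_apply (X := fun _ : ι => Bool) i) (measurableSet_singleton false)

theorem sitesSigma_le {ι : Type*} (S : Set ι) : sitesSigma S ≤ MeasurableSpace.pi := by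
  refine iSup₂_le fun i _ => MeasurableSpace.generateFrom_le ?_
  rintro _ rfl
  exact measurableSet_closed i

theorem IsBernoulli.measureReal_closed {ι : Type*} {p : ℝ} {P : Measure (ι → Bool)}
    (hP : IsBernoulli p P) (hp : p ≤ 1) (s : Finset ι) :
    P.real {ω | ∀ x ∈ s, ω x = false} = (1 - p) ^ s.card := by
  have h := hP.2 s (fun _ => false)
  simp only [Bool.false_eq_true, if_false, Finset.prod_const] at h
  rw [Measure.real, h, ENNReal.toReal_pow, ENNReal.toReal_ofReal (by linarith)]

theorem IsBernoulli.measureReal_inter {ι : Type*} {p : ℝ} {P : Measure (ι → Bool)}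
    (hP : IsBernoulli p P) {S T : Set ι} (hST : Disjoint S T)
    {A B : Set (ι → Bool)} (hA : MeasurableSet[sitesSigma S] A)
    (hB : MeasurableSet[sitesSigma T] B) :
    P.real (A ∩ B) = P.real A * P.real B := by
  have := hP.1
  have hind : ProbabilityTheory.iIndepSet (fun i : ι => {ω : ι → Bool | ω i = false}) P := by
    rw [ProbabilityTheory.iIndepSet_iff_meas_biInter fun i => measurableSet_closed i]
    intro s
    have hs := hP.2 s (fun _ => false)
    have h1 : ∀ i, P {ω : ι → Bool | ω i = false} = ENNReal.ofReal (1 - p) := by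
      intro i
      have := hP.2 {i} (fun _ => false)
      simpa using this
    have h2 : (⋂ i ∈ s, {ω : ι → Bool | ω i = false}) = {ω | ∀ x ∈ s, ω x = false} := by
      ext; simp
    rw [h2, hs]
    simp [h1]
  have hI := ProbabilityTheory.indep_iSup_of_disjoint (fun i =>
    MeasurableSpace.generateFrom_le (by rintro _ rfl; exact measurableSet_closed i)) hind hST
  have := (ProbabilityTheory.Indep_iff _ _ _).1 hI A B hA hB
  rw [Measure.real, this, ENNReal.toReal_mul]; rfl

/-- Sum over trajectories weighted by `q` to the number of disagreements with a reference
trajectory `x`, when each position has at most `Q` possible predecessors. -/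
theorem sum_pow_mismatch_le {Φ β : Type*} [DecidableEq Φ] [DecidableEq β]
    (Y : Φ → ℕ → β) (x : ℕ → β) (q Q B : ℝ) (b : ℕ) (hq : 0 ≤ q) (hQ : 0 ≤ Q) (hB : 0 ≤ B)
    (hpred : ∀ k z, ∀ S : Finset Φ, (∀ φ ∈ S, Y φ (k + 1) = z) →
      ((S.image fun φ => Y φ k).card : ℝ) ≤ Q)
    (hcard : ∀ S : Finset Φ, (∀ φ ∈ S, ∀ ψ ∈ S, ∀ k ≤ b, Y φ k = Y ψ k) → (S.card : ℝ) ≤ B)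
    (k : ℕ) (hk : k ≤ b) (S : Finset Φ)
    (hS : ∀ φ ∈ S, ∀ ψ ∈ S, ∀ j, k ≤ j → j ≤ b → Y φ j = Y ψ j) :
    ∑ φ ∈ S, q ^ ((Finset.range k).filter fun j => Y φ j ≠ x j).card
      ≤ (1 + Q * q) ^ k * B := by
  induction k generalizing S with
  | zero => simpa using hcard S fun φ hφ ψ hψ k hk => hS φ hφ ψ hψ k (Nat.zero_le _) hk
  | succ k ih =>
    have hstep : ∀ φ, q ^ ((Finset.range (k + 1)).filter fun j => Y φ j ≠ x j).card
        = (if Y φ k = x k then 1 else q) *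
          q ^ ((Finset.range k).filter fun j => Y φ j ≠ x j).card := by
      intro φ
      rw [Finset.range_add_one, Finset.filter_insert]
      by_cases h : Y φ k = x k
      · simp [h]
      · rw [if_pos h, if_neg h, Finset.card_insert_of_notMem (by simp), pow_succ']
    have hfib : ∀ y ∈ S.image (fun φ => Y φ k),
        ∑ φ ∈ S.filter (fun φ => Y φ k = y),
          q ^ ((Finset.range (k + 1)).filter fun j => Y φ j ≠ x j).card
          ≤ (if y = x k then 1 else q) * ((1 + Q * q) ^ k * B) := by
      intro y _
      have : ∑ φ ∈ S.filter (fun φ => Y φ k = y),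
          q ^ ((Finset.range (k + 1)).filter fun j => Y φ j ≠ x j).card
          = (if y = x k then 1 else q) * ∑ φ ∈ S.filter (fun φ => Y φ k = y),
            q ^ ((Finset.range k).filter fun j => Y φ j ≠ x j).card := by
        rw [Finset.mul_sum]
        refine Finset.sum_congr rfl fun φ hφ => ?_
        rw [hstep, (Finset.mem_filter.1 hφ).2]
      rw [this]
      refine mul_le_mul_of_nonneg_left (ih (by omega) _ ?_) (by split_ifs <;> linarith)
      intro φ hφ ψ hψ j hkj hjb
      rw [Finset.mem_filter] at hφ hψ
      rcases hkj.eq_or_lt with rfl | hlt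
      · rw [hφ.2, hψ.2]
      · exact hS φ hφ.1 ψ hψ.1 j hlt hjb
    have himg : ((S.image fun φ => Y φ k).card : ℝ) ≤ Q := by
      rcases S.eq_empty_or_nonempty with rfl | ⟨φ₀, h₀⟩
      · simpa using hQ
      · exact hpred k (Y φ₀ (k + 1)) S fun φ hφ => hS φ hφ φ₀ h₀ (k + 1) le_rfl hk
    have hwt : ∑ y ∈ S.image (fun φ => Y φ k), (if y = x k then (1 : ℝ) else q) ≤ 1 + Q * q := by
      calc ∑ y ∈ S.image (fun φ => Y φ k), (if y = x k then (1 : ℝ) else q)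
          ≤ ∑ y ∈ S.image (fun φ => Y φ k), ((if y = x k then (1 : ℝ) else 0) + q) := by
            refine Finset.sum_le_sum fun y _ => ?_
            split_ifs <;> linarith
        _ ≤ 1 + Q * q := by
            rw [Finset.sum_add_distrib, Finset.sum_const, nsmul_eq_mul, Finset.sum_ite_eq']
            have := mul_le_mul_of_nonneg_right himg hq
            split_ifs <;> linarith
    rw [← Finset.sum_fiberwise_of_maps_to (fun φ hφ => Finset.mem_image_of_mem (fun φ => Y φ k) hφ)]
    refine (Finset.sum_le_sum hfib).trans ?_
    rw [← Finset.sum_mul, pow_succ', mul_assoc]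
    exact mul_le_mul_of_nonneg_right hwt (by positivity)

/-- Exponential moment of the number of agreements with a reference trajectory,
decomposed according to the last agreement time. -/
theorem sum_inv_pow_agree_le {Φ β : Type*} [Fintype Φ] [DecidableEq Φ] [DecidableEq β]
    (Y : Φ → ℕ → β) (x : ℕ → β) (q Q : ℝ) (B : ℕ → ℝ) (N : ℕ) (hq : 0 < q)
    (hQ : 0 ≤ Q) (hB : ∀ b, 0 ≤ B b)
    (hpred : ∀ k z, ∀ S : Finset Φ, (∀ φ ∈ S, Y φ (k + 1) = z) →
      ((S.image fun φ => Y φ k).card : ℝ) ≤ Q)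
    (hcard : ∀ b, ∀ S : Finset Φ,
      (∀ φ ∈ S, ∀ ψ ∈ S, ∀ k ≤ b, Y φ k = Y ψ k) → (S.card : ℝ) ≤ B b) :
    ∑ φ, (q⁻¹) ^ ((Finset.range N).filter fun k => Y φ k = x k).card
      ≤ Fintype.card Φ + ∑ b ∈ Finset.range N, (q⁻¹) ^ (b + 1) * ((1 + Q * q) ^ b * B b) := by
  have hlast : ∀ φ : Φ, (q⁻¹) ^ ((Finset.range N).filter fun k => Y φ k = x k).card
      ≤ 1 + ∑ b ∈ Finset.range N, (if Y φ b = x b then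
        (q⁻¹) ^ (b + 1) * q ^ ((Finset.range b).filter fun j => Y φ j ≠ x j).card else 0) := by
    intro φ
    have hnn : ∀ b ∈ Finset.range N, (0 : ℝ) ≤ (if Y φ b = x b then
        (q⁻¹) ^ (b + 1) * q ^ ((Finset.range b).filter fun j => Y φ j ≠ x j).card else 0) := by
      intro b _
      split_ifs <;> positivity
    rcases ((Finset.range N).filter fun k => Y φ k = x k).eq_empty_or_nonempty with h | h
    · rw [h]
      simpa using Finset.sum_nonneg hnn
    · set A := (Finset.range N).filter fun k => Y φ k = x k with hA
      set b := A.max' h with hb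
      have hbA : b ∈ A := A.max'_mem h
      have hbN := Finset.mem_filter.1 (hA ▸ hbA)
      have hAeq : A = insert b ((Finset.range b).filter fun j => Y φ j = x j) := by
        ext k
        simp only [Finset.mem_insert, Finset.mem_filter, Finset.mem_range]
        constructor
        · intro hk
          have h1 := A.le_max' k hk
          have h2 := (Finset.mem_filter.1 (hA ▸ hk)).2
          rcases h1.eq_or_lt with h3 | h3
          · exact Or.inl h3
          · exact Or.inr ⟨h3, h2⟩
        · rintro (rfl | ⟨h1, h2⟩)
          · exact hbA
          · rw [hA, Finset.mem_filter, Finset.mem_range]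
            exact ⟨h1.trans (Finset.mem_range.1 hbN.1), h2⟩
      have hcardA : A.card + ((Finset.range b).filter fun j => Y φ j ≠ x j).card = b + 1 := by
        rw [hAeq, Finset.card_insert_of_notMem (by simp)]
        have := Finset.card_filter_add_card_filter_not (s := Finset.range b) (fun j => Y φ j = x j)
        simp only [Finset.card_range] at this
        simp only [ne_eq]
        omega
      have hterm := Finset.single_le_sum hnn hbN.1
      rw [if_pos hbN.2, ← hcardA, pow_add, mul_assoc, ← mul_pow, inv_mul_cancel₀ hq.ne', one_pow,
        mul_one] at hterm
      linarith
  refine (Finset.sum_le_sum fun φ _ => hlast φ).trans ?_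
  rw [Finset.sum_add_distrib, Finset.sum_comm]
  simp only [Finset.sum_const, Finset.card_univ, nsmul_eq_mul, mul_one]
  gcongr with b hb
  rw [← Finset.sum_filter, ← Finset.mul_sum]
  gcongr
  refine sum_pow_mismatch_le Y x q Q (B b) b hq.le hQ (hB b) hpred (hcard b) b le_rfl _ ?_
  intro φ hφ ψ hψ j h1 h2
  obtain rfl : j = b := le_antisymm h2 h1
  rw [(Finset.mem_filter.1 hφ).2, (Finset.mem_filter.1 hψ).2]

/-- A flight assigns to each particle a direction in `Fin D` and an arrival slot; the particles
come in `I` groups, the `i`-th one having `M i` particles and `L i` slots. -/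
abbrev Flight (D I : ℕ) (M L : ℕ → ℕ) := (i : Fin I) → Fin (M i) → Fin D × Fin (L i)

/-- First slot of the `i`-th group. -/
def startTime (L : ℕ → ℕ) (i : ℕ) : ℕ := ∑ j ∈ Finset.range i, L j

theorem startTime_succ (L : ℕ → ℕ) (i : ℕ) : startTime L (i + 1) = startTime L i + L i :=
  Finset.sum_range_succ _ _

theorem startTime_mono (L : ℕ → ℕ) : Monotone (startTime L) :=
  monotone_nat_of_le_succ fun i => by rw [startTime_succ]; omega

theorem startTime_add_inj {L : ℕ → ℕ} {i j : ℕ} {s : Fin (L i)} {t : Fin (L j)}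
    (h : startTime L i + s = startTime L j + t) : i = j := by
  have hs := s.2
  have ht := t.2
  by_contra hne
  rcases lt_or_gt_of_ne hne with hlt | hlt
  · have := startTime_mono L (Nat.succ_le_of_lt hlt)
    rw [Nat.succ_eq_add_one, startTime_succ] at this
    omega
  · have := startTime_mono L (Nat.succ_le_of_lt hlt)
    rw [Nat.succ_eq_add_one, startTime_succ] at this
    omega

namespace Flight

variable {D I : ℕ} {M L : ℕ → ℕ}

/-- Arrival time of a particle. -/
def arrival (φ : Flight D I M L) (p : Σ i : Fin I, Fin (M i)) : ℕ :=
  startTime L p.1 + (φ p.1 p.2).2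

/-- Multiset of the directions that have arrived by time `k`. -/
def pos (φ : Flight D I M L) (k : ℕ) : Multiset (Fin D) :=
  (Finset.univ.filter fun p => arrival φ p ≤ k).val.map fun p => (φ p.1 p.2).1

theorem pos_le_succ (φ : Flight D I M L) (k : ℕ) : φ.pos k ≤ φ.pos (k + 1) := by
  refine Multiset.map_le_map (Finset.val_le_iff.2 fun p => ?_)
  simp only [Finset.mem_filter]
  exact fun h => ⟨h.1, by omega⟩

theorem card_pos (φ : Flight D I M L) (k : ℕ) :
    (φ.pos k).card = (Finset.univ.filter fun p => arrival φ p ≤ k).card := by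
  rw [pos, Multiset.card_map, Finset.card_def]

theorem card_particles : Fintype.card (Σ i : Fin I, Fin (M i)) = ∑ i ∈ Finset.range I, M i := by
  rw [Fintype.card_sigma, Finset.sum_range]
  simp

theorem card_pos_le (φ : Flight D I M L) (k : ℕ) :
    (φ.pos k).card ≤ ∑ i ∈ Finset.range I, M i := by
  rw [card_pos, ← card_particles]
  exact Finset.card_le_univ _

theorem card_pos_last (φ : Flight D I M L) (k : ℕ) (hk : startTime L I ≤ k + 1) :
    (φ.pos k).card = ∑ i ∈ Finset.range I, M i := by
  rw [card_pos, ← card_particles, Finset.filter_true_of_mem, Finset.card_univ]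
  intro p _
  have h1 := (φ p.1 p.2).2.2
  have h2 := startTime_mono L (Nat.succ_le_of_lt p.1.2)
  rw [Nat.succ_eq_add_one, startTime_succ] at h2
  rw [arrival]
  omega

theorem card_pos_succ_le (φ : Flight D I M L) {J : ℕ} (hJ : ∀ i < I, M i ≤ J) (k : ℕ) :
    (φ.pos (k + 1)).card ≤ (φ.pos k).card + J := by
  have hsplit : (Finset.univ.filter fun p => arrival φ p ≤ k + 1)
      = (Finset.univ.filter fun p => arrival φ p ≤ k)
        ∪ (Finset.univ.filter fun p => arrival φ p = k + 1) := by
    ext p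
    simp only [Finset.mem_filter, Finset.mem_union, Finset.mem_univ, true_and]
    omega
  rw [card_pos, card_pos, hsplit]
  refine (Finset.card_union_le _ _).trans (Nat.add_le_add_left ?_ _)
  rcases (Finset.univ.filter fun p => arrival φ p = k + 1).eq_empty_or_nonempty with h | ⟨p₀, h₀⟩
  · simp [h]
  · rw [Finset.mem_filter] at h₀
    have hsub : (Finset.univ.filter fun p => arrival φ p = k + 1)
        ⊆ Finset.univ.map (Function.Embedding.sigmaMk (β := fun i : Fin I => Fin (M i)) p₀.1) := by
      intro p hp
      rw [Finset.mem_filter] at hp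
      have : (p.1 : ℕ) = p₀.1 := startTime_add_inj (hp.2.trans h₀.2.symm)
      obtain ⟨i, m⟩ := p
      obtain rfl : i = p₀.1 := Fin.ext this
      simp
    refine (Finset.card_le_card hsub).trans ?_
    simpa using hJ p₀.1 p₀.1.2

theorem card_image_pos_le {J : ℕ} (hJ : ∀ i < I, M i ≤ J) (k : ℕ)
    (z : Multiset (Fin D)) (S : Finset (Flight D I M L)) (hS : ∀ φ ∈ S, φ.pos (k + 1) = z) :
    (S.image fun φ => φ.pos k).card ≤ (J + 1) * (∑ i ∈ Finset.range I, M i + 1) ^ J := by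
  set m := ∑ i ∈ Finset.range I, M i
  rcases S.eq_empty_or_nonempty with rfl | ⟨φ₀, h₀⟩
  · simp
  have hz : z.card ≤ m := hS φ₀ h₀ ▸ card_pos_le φ₀ (k + 1)
  have hsub : (S.image fun φ => φ.pos k) ⊆ (Finset.range (J + 1)).biUnion fun j =>
      (Multiset.powersetCard j z).toFinset.image fun v => z - v := by
    intro y hy
    obtain ⟨φ, hφ, rfl⟩ := Finset.mem_image.1 hy
    have h1 := pos_le_succ φ k
    have h2 := card_pos_succ_le φ hJ k
    rw [hS φ hφ] at h1 h2
    have hle := Multiset.card_le_card h1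
    simp only [Finset.mem_biUnion, Finset.mem_range, Finset.mem_image, Multiset.mem_toFinset,
      Multiset.mem_powersetCard]
    refine ⟨z.card - (φ.pos k).card, by omega, z - φ.pos k, ⟨Multiset.sub_le_self _ _, ?_⟩, ?_⟩
    · exact Multiset.card_sub h1
    · exact tsub_tsub_cancel_of_le h1
  refine (Finset.card_le_card hsub).trans ((Finset.card_biUnion_le_card_mul _ _ _ ?_).trans_eq
    (by rw [Finset.card_range]))
  intro j hj
  refine Finset.card_image_le.trans ((Multiset.toFinset_card_le _).trans ?_)
  rw [Multiset.card_powersetCard]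
  calc z.card.choose j ≤ z.card ^ j := Nat.choose_le_pow _ _
    _ ≤ (m + 1) ^ j := Nat.pow_le_pow_left (by omega) _
    _ ≤ (m + 1) ^ J := Nat.pow_le_pow_right (by omega) (by simpa [Nat.lt_succ_iff] using hj)

end Flight

theorem card_le_factorial_of_same_counts {α : Type*} [DecidableEq α] {m : ℕ} (f : Fin m → α)
    (S : Finset (Fin m → α))
    (hS : ∀ g ∈ S, ∀ a, (Finset.univ.filter fun p => g p = a).card
      = (Finset.univ.filter fun p => f p = a).card) :
    S.card ≤ m.factorial := by
  have hcount : ∀ (g : Fin m → α) a, (List.ofFn g).count a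
      = (Finset.univ.filter fun p => g p = a).card := by
    intro g a
    rw [← Multiset.coe_count, ← Fin.univ_val_map, Multiset.count_map]
    simp only [eq_comm]
    rfl
  have hsub : S.image List.ofFn ⊆ (List.ofFn f).permutations.toFinset := by
    intro l hl
    obtain ⟨g, hg, rfl⟩ := Finset.mem_image.1 hl
    rw [List.mem_toFinset, List.mem_permutations, List.perm_iff_count]
    exact fun a => by rw [hcount, hcount, hS g hg a]
  rw [← Finset.card_image_of_injective S List.ofFn_injective]
  refine (Finset.card_le_card hsub).trans ((List.toFinset_card_le _).trans ?_)
  rw [List.length_permutations, List.length_ofFn]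

namespace Flight

variable {D I : ℕ} {M L : ℕ → ℕ}

theorem count_pos (φ : Flight D I M L) (k : ℕ) (a : Fin D) :
    (φ.pos k).count a
      = (Finset.univ.filter fun p => arrival φ p ≤ k ∧ (φ p.1 p.2).1 = a).card := by
  rw [pos, Multiset.count_map, ← Finset.filter_filter, Finset.card_def, Finset.filter_val]
  simp only [eq_comm, Finset.filter_val]

theorem card_arrival_eq {φ ψ : Flight D I M L} {b : ℕ} (h : ∀ k ≤ b, φ.pos k = ψ.pos k)
    {k : ℕ} (hk : k ≤ b) (a : Fin D) :
    (Finset.univ.filter fun p => arrival φ p = k ∧ (φ p.1 p.2).1 = a).card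
      = (Finset.univ.filter fun p => arrival ψ p = k ∧ (ψ p.1 p.2).1 = a).card := by
  cases k with
  | zero =>
    have := congrArg (Multiset.count a) (h 0 hk)
    simpa [count_pos] using this
  | succ k =>
    have key : ∀ χ : Flight D I M L, (χ.pos (k + 1)).count a = (χ.pos k).count a
        + (Finset.univ.filter fun p => arrival χ p = k + 1 ∧ (χ p.1 p.2).1 = a).card := by
      intro χ
      rw [count_pos, count_pos, ← Finset.card_union_of_disjoint]
      · congr 1
        ext p
        simp only [Finset.mem_filter, Finset.mem_union, Finset.mem_univ, true_and,
          Nat.le_succ_iff]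
        tauto
      · rw [Finset.disjoint_filter]
        intro p _ h1 h2
        omega
    have h1 := key φ
    have h2 := key ψ
    rw [h _ hk, h k (by omega)] at h1
    omega

theorem card_group_eq (φ : Flight D I M L) (i : Fin I) (t : Fin (L i)) (a : Fin D) :
    (Finset.univ.filter fun p => φ i p = (a, t)).card
      = (Finset.univ.filter fun p => arrival φ p = startTime L i + t ∧ (φ p.1 p.2).1 = a).card := by
  rw [← Finset.card_map (Function.Embedding.sigmaMk (β := fun i : Fin I => Fin (M i)) i)]
  congr 1
  ext ⟨j, p⟩
  simp only [Finset.mem_map, Finset.mem_filter, Finset.mem_univ, true_and]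
  constructor
  · rintro ⟨p', hp', heq⟩
    obtain ⟨rfl, h⟩ := Sigma.mk.inj_iff.1 heq
    obtain rfl := eq_of_heq h
    simp [arrival, hp']
  · rintro ⟨h1, h2⟩
    obtain rfl : j = i := Fin.ext (startTime_add_inj h1)
    exact ⟨p, Prod.ext h2 (Fin.ext (by simpa [arrival] using h1)), rfl⟩

/-- Number of flights with a prescribed trajectory up to time `b`: the groups completed by time
`b` are determined up to a permutation of their particles. -/
theorem card_le_of_same_pos (b : ℕ) (S : Finset (Flight D I M L))
    (hS : ∀ φ ∈ S, ∀ ψ ∈ S, ∀ k ≤ b, φ.pos k = ψ.pos k) :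
    S.card ≤ ∏ i ∈ Finset.range I,
      if startTime L (i + 1) ≤ b + 1 then (M i).factorial else (D * L i) ^ M i := by
  classical
  rcases S.eq_empty_or_nonempty with rfl | ⟨φ₀, h₀⟩
  · simp
  have hsub : S ⊆ Fintype.piFinset fun i => S.image fun φ => φ i := by
    intro φ hφ
    rw [Fintype.mem_piFinset]
    exact fun i => Finset.mem_image_of_mem (fun φ : Flight D I M L => φ i) hφ
  refine (Finset.card_le_card hsub).trans ?_
  rw [Fintype.card_piFinset, Finset.prod_range]
  refine Finset.prod_le_prod' fun i _ => ?_
  split_ifs with hi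
  · refine card_le_factorial_of_same_counts (φ₀ i) _ ?_
    intro g hg c
    obtain ⟨φ, hφ, rfl⟩ := Finset.mem_image.1 hg
    obtain ⟨a, t⟩ := c
    rw [card_group_eq, card_group_eq]
    refine card_arrival_eq (hS φ hφ φ₀ h₀) ?_ a
    rw [startTime_succ] at hi
    have := t.2
    omega
  · refine (Finset.card_le_univ _).trans_eq ?_
    simp

theorem card_flight : Fintype.card (Flight D I M L) = ∏ i ∈ Finset.range I, (D * L i) ^ M i := by
  rw [Fintype.card_pi, Finset.prod_range]
  simp

end Flight

/-- The displacement in `ℤ^{D+1}` given by a multiset of directions among the last `D`. -/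
def displacement {D : ℕ} (m : Multiset (Fin D)) : Fin (D + 1) → ℤ :=
  Fin.cons 0 fun a => (m.count a : ℤ)

theorem displacement_injective {D : ℕ} : Function.Injective (displacement (D := D)) := by
  intro m m' h
  ext a
  have := congrFun h a.succ
  simpa [displacement] using this

theorem sum_displacement {D : ℕ} (m : Multiset (Fin D)) :
    ∑ i, displacement m i = m.card := by
  rw [Fin.sum_univ_succ]
  simp only [displacement, Fin.cons_zero, Fin.cons_succ, zero_add]
  rw [← Nat.cast_sum, Multiset.sum_count_eq_card]
  simp

/-- Site that has to be closed at time `k` for the flight `φ` started from `(x, h)`. -/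
def flightSite {D I : ℕ} {M L : ℕ → ℕ} (x : Fin (D + 1) → ℤ) (h : ℤ) (φ : Flight D I M L)
    (k : ℕ) : Site (D + 1) :=
  Fin.snoc (α := fun _ => ℤ) (x + displacement (φ.pos k)) (h + (φ.pos k).card - k)

theorem flightSite_eq_iff {D I : ℕ} {M L : ℕ → ℕ} (x : Fin (D + 1) → ℤ) (h : ℤ)
    (φ ψ : Flight D I M L) (k l : ℕ) :
    flightSite x h φ k = flightSite x h ψ l ↔ φ.pos k = ψ.pos l ∧ k = l := by
  constructor
  · intro heq
    obtain ⟨h1, h2⟩ := Fin.snoc_inj.1 heq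
    have h3 := displacement_injective (add_left_cancel h1)
    rw [h3] at h2
    exact ⟨h3, by omega⟩
  · rintro ⟨h1, rfl⟩
    rw [flightSite, flightSite, h1]

/-- All sites required by the flight `φ` up to time `N` are closed. -/
def flightClosed {D I : ℕ} {M L : ℕ → ℕ} (x : Fin (D + 1) → ℤ) (h : ℤ) (N : ℕ)
    (φ : Flight D I M L) : Set (Config (D + 1)) :=
  {ω | ∀ k < N, ω (flightSite x h φ k) = false}

theorem measurableSet_flightClosed {D I : ℕ} {M L : ℕ → ℕ} (x : Fin (D + 1) → ℤ) (h : ℤ) (N : ℕ)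
    (φ : Flight D I M L) :
    MeasurableSet[sitesSigma {y : Site (D + 1) | y 0 = x 0}] (flightClosed x h N φ) := by
  have : flightClosed x h N φ
      = ⋂ k, ⋂ _ : k < N, {ω : Config (D + 1) | ω (flightSite x h φ k) = false} := by
    ext; simp [flightClosed]
  rw [this]
  refine MeasurableSet.iInter fun k => MeasurableSet.iInter fun _ =>
    measurableSet_sitesSigma_closed ?_
  rw [Set.mem_ofPred_eq, flightSite, ← Fin.castSucc_zero, Fin.snoc_castSucc]
  simp [displacement]

/-- Second moment bound: some flight is entirely closed with probability at least one half. -/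
theorem half_le_measureReal_iUnion_flightClosed {D I : ℕ} {M L : ℕ → ℕ} {J N : ℕ} {p : ℝ}
    {P : Measure (Config (D + 1))} (hP : IsBernoulli p P) (hp1 : p < 1)
    (hJ : ∀ i < I, M i ≤ J) (hcard : 0 < Fintype.card (Flight D I M L))
    (hsum : ∑ b ∈ Finset.range N, ((1 - p)⁻¹) ^ (b + 1) *
      ((1 + ((J + 1) * (∑ i ∈ Finset.range I, M i + 1) ^ J : ℕ) * (1 - p)) ^ b *
        (∏ i ∈ Finset.range I,
          if startTime L (i + 1) ≤ b + 1 then (M i).factorial else (D * L i) ^ M i : ℕ))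
      ≤ Fintype.card (Flight D I M L))
    (x : Fin (D + 1) → ℤ) (h : ℤ) :
    1 / 2 ≤ P.real (⋃ φ : Flight D I M L, flightClosed x h N φ) := by
  classical
  have := hP.1
  set q := 1 - p with hq
  have hq0 : 0 < q := by linarith
  set n : ℝ := (Fintype.card (Flight D I M L) : ℝ) with hn
  have hn0 : 0 < n := by rw [hn]; exact_mod_cast hcard
  let s : Flight D I M L → Finset (Site (D + 1)) := fun φ => (Finset.range N).image (flightSite x h φ)
  have hs : ∀ φ, (s φ).card = N := fun φ => by
    rw [Finset.card_image_of_injective, Finset.card_range]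
    exact fun k l hkl => ((flightSite_eq_iff _ _ _ _ _ _).1 hkl).2
  have hset : ∀ φ, flightClosed x h N φ = {ω | ∀ y ∈ s φ, ω y = false} := fun φ => by
    ext; simp [flightClosed, s]
  have hP1 : ∀ φ, P.real (flightClosed x h N φ) = q ^ N := fun φ => by
    rw [hset, hP.measureReal_closed hp1.le, hs]
  have hinter : ∀ φ ψ : Flight D I M L, s ψ ∩ s φ = ((Finset.range N).filter fun k => ψ.pos k = φ.pos k).image
      (flightSite x h ψ) := by
    intro φ ψ
    ext y
    simp only [s, Finset.mem_inter, Finset.mem_image, Finset.mem_range, Finset.mem_filter]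
    constructor
    · rintro ⟨⟨k, hk, rfl⟩, l, hl, hkl⟩
      obtain ⟨h1, rfl⟩ := (flightSite_eq_iff _ _ _ _ _ _).1 hkl
      exact ⟨l, ⟨hl, h1.symm⟩, rfl⟩
    · rintro ⟨k, ⟨hk, hpos⟩, rfl⟩
      exact ⟨⟨k, hk, rfl⟩, k, hk, (flightSite_eq_iff _ _ _ _ _ _).2 ⟨hpos.symm, rfl⟩⟩
  have hP2 : ∀ φ ψ : Flight D I M L, P.real (flightClosed x h N φ ∩ flightClosed x h N ψ)
      = q ^ (2 * N) * (q⁻¹) ^ ((Finset.range N).filter fun k => ψ.pos k = φ.pos k).card := by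
    intro φ ψ
    have hu : flightClosed x h N φ ∩ flightClosed x h N ψ
        = {ω | ∀ y ∈ s ψ ∪ s φ, ω y = false} := by
      rw [hset, hset]
      ext ω
      simp only [Set.mem_inter_iff, Set.mem_ofPred_eq, Finset.mem_union, or_imp, forall_and]
      tauto
    have hc := Finset.card_union_add_card_inter (s ψ) (s φ)
    rw [hs, hs, hinter, Finset.card_image_of_injective _
      (fun k l hkl => ((flightSite_eq_iff _ _ _ _ _ _).1 hkl).2)] at hc
    rw [hu, hP.measureReal_closed hp1.le, show 2 * N = N + N by ring, ← hc, pow_add, mul_assoc,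
      ← mul_pow, mul_inv_cancel₀ hq0.ne', one_pow, mul_one]
  have hpair : ∀ φ : Flight D I M L, ∑ ψ : Flight D I M L,
      (q⁻¹) ^ ((Finset.range N).filter fun k => ψ.pos k = φ.pos k).card ≤ 2 * n := by
    intro φ
    have := sum_inv_pow_agree_le (fun ψ : Flight D I M L => ψ.pos) φ.pos q
      ((J + 1) * (∑ i ∈ Finset.range I, M i + 1) ^ J : ℕ)
      (fun b => (∏ i ∈ Finset.range I,
          if startTime L (i + 1) ≤ b + 1 then (M i).factorial else (D * L i) ^ M i : ℕ))
      N hq0 (Nat.cast_nonneg _) (fun b => Nat.cast_nonneg _)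
      (fun k z S hS => Nat.cast_le.2 (Flight.card_image_pos_le hJ k z S hS))
      (fun b S hS => Nat.cast_le.2 (Flight.card_le_of_same_pos b S hS))
    linarith
  have hmain := second_moment_le_measureReal_iUnion P (fun φ : Flight D I M L =>
    flightClosed x h N φ) (fun φ => sitesSigma_le _ _ (measurableSet_flightClosed x h N φ))
    (1 / (2 * n * q ^ N))
  refine le_trans ?_ hmain
  simp only [hP1, hP2, Finset.sum_const, Finset.card_univ, nsmul_eq_mul, ← hn, ← Finset.mul_sum]
  have hdouble : ∑ φ : Flight D I M L, ∑ ψ : Flight D I M L,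
      (q⁻¹) ^ ((Finset.range N).filter fun k => ψ.pos k = φ.pos k).card ≤ n * (2 * n) := by
    refine (Finset.sum_le_sum fun φ _ => hpair φ).trans_eq ?_
    rw [Finset.sum_const, Finset.card_univ, nsmul_eq_mul]
  have hqN : 0 < q ^ N := pow_pos hq0 N
  have e1 : 2 * (1 / (2 * n * q ^ N)) * (n * q ^ N) = 1 := by field_simp
  have e2 : (1 / (2 * n * q ^ N)) ^ 2 * (q ^ (2 * N) * (n * (2 * n))) = 1 / 2 := by
    rw [mul_comm 2 N, pow_mul]
    field_simp
  have e3 : (1 / (2 * n * q ^ N)) ^ 2 * (q ^ (2 * N) * ∑ φ : Flight D I M L,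
      ∑ ψ : Flight D I M L,
        (q⁻¹) ^ ((Finset.range N).filter fun k => ψ.pos k = φ.pos k).card) ≤ 1 / 2 := by
    rw [← e2]
    gcongr
  linarith

theorem IsLipschitzFn.le_add_one {d : ℕ} {F : (Fin d → ℤ) → ℤ} (hF : IsLipschitzFn F)
    (x : Fin d → ℤ) (i : Fin d) : F (x + Pi.single i 1) ≤ F x + 1 := by
  have h := hF (x + Pi.single i 1) x (by
    simp only [Pi.add_apply, add_sub_cancel_left]
    rw [Finset.sum_eq_single i]
    · simp
    · intro j _ hj
      simp [hj]
    · simp)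
  have := (abs_le.1 h).2
  linarith

theorem displacement_add {D : ℕ} (m m' : Multiset (Fin D)) :
    displacement (m + m') = displacement m + displacement m' := by
  funext i
  refine Fin.cases ?_ (fun a => ?_) i <;> simp [displacement]

theorem displacement_singleton {D : ℕ} (a : Fin D) :
    displacement {a} = Pi.single a.succ 1 := by
  funext i
  refine Fin.cases ?_ (fun b => ?_) i
  · simp [displacement, (Fin.succ_ne_zero a).symm]
  · simp [displacement, Pi.single_apply, Multiset.count_singleton]

theorem IsLipschitzFn.le_add_card {D : ℕ} {F : (Fin (D + 1) → ℤ) → ℤ} (hF : IsLipschitzFn F)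
    (x : Fin (D + 1) → ℤ) (m : Multiset (Fin D)) : F (x + displacement m) ≤ F x + m.card := by
  induction m using Multiset.induction_on with
  | empty =>
    have : displacement (0 : Multiset (Fin D)) = 0 := by
      funext i
      refine Fin.cases ?_ (fun a => ?_) i <;> simp [displacement]
    simp [this]
  | cons a m ih =>
    have h := hF.le_add_one (x + displacement m) a.succ
    rw [← Multiset.singleton_add, add_comm {a} m, displacement_add, displacement_singleton,
      ← add_assoc]
    simp only [Multiset.card_add, Multiset.card_singleton]
    push_cast
    linarith

/-- Along a closed flight, the surface stays weakly below the walker. -/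
theorem IsLipschitzFn.le_of_mem_flightClosed {D I : ℕ} {M L : ℕ → ℕ} {N : ℕ}
    {F : (Fin (D + 1) → ℤ) → ℤ} (hF : IsLipschitzFn F) {ω : Config (D + 1)}
    (hopen : ∀ x, ω (Fin.snoc (α := fun _ => ℤ) x (F x)) = true)
    {x : Fin (D + 1) → ℤ} {h : ℤ} (hx : F x ≤ h) {φ : Flight D I M L}
    (hφ : ω ∈ flightClosed x h N φ) (k : ℕ) (hk : k < N) :
    F (x + displacement (φ.pos k)) ≤ h + (φ.pos k).card - k - 1 := by
  have hdrop : F (x + displacement (φ.pos k)) ≤ h + (φ.pos k).card - k →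
      F (x + displacement (φ.pos k)) ≤ h + (φ.pos k).card - k - 1 := by
    intro hle
    have hne : F (x + displacement (φ.pos k)) ≠ h + (φ.pos k).card - k := by
      intro heq
      have h1 := hopen (x + displacement (φ.pos k))
      have h2 := hφ k hk
      rw [flightSite, ← heq, h1] at h2
      exact absurd h2 (by decide)
    omega
  induction k with
  | zero =>
    refine hdrop ?_
    have := hF.le_add_card x (φ.pos 0)
    push_cast
    linarith
  | succ k ih =>
    refine hdrop ?_
    obtain ⟨u, hu⟩ := Multiset.le_iff_exists_add.1 (φ.pos_le_succ k)
    have h1 := hF.le_add_card (x + displacement (φ.pos k)) u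
    have h2 : F (x + displacement (φ.pos k)) ≤ h + (φ.pos k).card - k - 1 := by
      refine ih (by omega) fun hle => ?_
      have hne : F (x + displacement (φ.pos k)) ≠ h + (φ.pos k).card - k := by
        intro heq
        have h1 := hopen (x + displacement (φ.pos k))
        have h2 := hφ k (by omega)
        rw [flightSite, ← heq, h1] at h2
        exact absurd h2 (by decide)
      omega
    rw [hu, displacement_add, ← add_assoc, Multiset.card_add]
    push_cast
    linarith

section Exploration

variable {D I : ℕ} {M L : ℕ → ℕ}

open Classical in
/-- The flights from `y` that are entirely closed. -/
noncomputable def closedFlights (M L : ℕ → ℕ) (I N : ℕ) (y : (Fin (D + 1) → ℤ) × ℤ)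
    (ω : Config (D + 1)) : Finset (Flight D I M L) :=
  Finset.univ.filter fun φ => ω ∈ flightClosed y.1 y.2 N φ

theorem mem_closedFlights {N : ℕ} {y : (Fin (D + 1) → ℤ) × ℤ} {ω : Config (D + 1)}
    {φ : Flight D I M L} : φ ∈ closedFlights M L I N y ω ↔ ω ∈ flightClosed y.1 y.2 N φ := by
  simp [closedFlights]

open Classical in
/-- Follow one of the closed flights in `A`, if any, then take a step in direction `0`. -/
noncomputable def nextState (N : ℕ) (y : (Fin (D + 1) → ℤ) × ℤ) (A : Finset (Flight D I M L)) :
    (Fin (D + 1) → ℤ) × ℤ :=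
  if hA : A.Nonempty then
    (y.1 + displacement (hA.choose.pos (N - 1)) + Pi.single 0 1,
      y.2 + (∑ i ∈ Finset.range I, M i : ℕ) - N + 1)
  else (y.1 + Pi.single 0 1, y.2 + 1)

/-- Height of `y` relative to the plane of slope `α`. -/
noncomputable def relHeight (α : ℝ) (y : (Fin (D + 1) → ℤ) × ℤ) : ℝ :=
  y.2 - α * ∑ i, (y.1 i : ℝ)

/-- The exploration from `y` stays above the plane after `n` rounds. -/
def staysAbove (α : ℝ) (M L : ℕ → ℕ) (I N : ℕ) :
    ℕ → (Fin (D + 1) → ℤ) × ℤ → Set (Config (D + 1))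
  | 0, y => {_ω | 0 < relHeight α y}
  | n + 1, y => ⋃ A : Finset (Flight D I M L),
      closedFlights M L I N y ⁻¹' {A} ∩ staysAbove α M L I N n (nextState N y A)

theorem nextState_fst_zero (N : ℕ) (y : (Fin (D + 1) → ℤ) × ℤ) (A : Finset (Flight D I M L)) :
    (nextState N y A).1 0 = y.1 0 + 1 := by
  unfold nextState
  split_ifs <;> simp [displacement]

theorem relHeight_nextState {α : ℝ} {N : ℕ} (hN : startTime L I = N) (hN0 : 0 < N)
    (hgain : (1 - α) * (∑ i ∈ Finset.range I, M i : ℕ) - N ≤ -4)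
    (y : (Fin (D + 1) → ℤ) × ℤ) (A : Finset (Flight D I M L)) :
    relHeight α (nextState N y A)
      ≤ relHeight α y + (1 - α) + if A.Nonempty then -4 else 0 := by
  have hsingle : ∑ i : Fin (D + 1), ((Pi.single 0 1 : Fin (D + 1) → ℤ) i : ℝ) = 1 := by
    rw [← Int.cast_sum, Finset.sum_pi_single']
    simp
  unfold nextState relHeight
  split_ifs with hA
  · have hdisp : ∑ i, (displacement (hA.choose.pos (N - 1)) i : ℝ)
        = (∑ i ∈ Finset.range I, M i : ℕ) := by
      rw [← Int.cast_sum, sum_displacement, Flight.card_pos_last _ _ (by omega)]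
      simp
    simp only [Pi.add_apply, Int.cast_add, Finset.sum_add_distrib, hsingle, hdisp, Int.cast_sub,
      Int.cast_natCast, Int.cast_one]
    linarith
  · simp only [Pi.add_apply, Int.cast_add, Finset.sum_add_distrib, hsingle, Int.cast_one]
    linarith

theorem mem_staysAbove {α : ℝ} {N : ℕ} (hN : startTime L I = N) (hN0 : 0 < N)
    {F : (Fin (D + 1) → ℤ) → ℤ} (hF : IsLipschitzFn F) {ω : Config (D + 1)}
    (hopen : ∀ x, ω (Fin.snoc (α := fun _ => ℤ) x (F x)) = true)
    (hplane : ∀ x, α * ∑ i, (x i : ℝ) < F x) (n : ℕ) (y : (Fin (D + 1) → ℤ) × ℤ)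
    (hy : F y.1 ≤ y.2) : ω ∈ staysAbove α M L I N n y := by
  induction n generalizing y with
  | zero =>
    have h1 := hplane y.1
    have h2 : (F y.1 : ℝ) ≤ y.2 := by exact_mod_cast hy
    simp only [staysAbove, relHeight, Set.mem_ofPred_eq]
    linarith
  | succ n ih =>
    refine Set.mem_iUnion.2 ⟨closedFlights M L I N y ω, rfl, ih _ ?_⟩
    unfold nextState
    split_ifs with hA
    · have hc := mem_closedFlights.1 hA.choose_spec
      have h1 := hF.le_of_mem_flightClosed hopen hy hc (N - 1) (by omega)
      rw [Flight.card_pos_last _ _ (by omega)] at h1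
      have h2 := hF.le_add_one (y.1 + displacement (hA.choose.pos (N - 1))) 0
      push_cast [Nat.cast_sub (show 1 ≤ N by omega)] at h1 ⊢
      linarith
    · have := hF.le_add_one y.1 0
      simp only
      linarith

theorem measurableSet_closedFlights (N : ℕ) (y : (Fin (D + 1) → ℤ) × ℤ)
    (A : Finset (Flight D I M L)) :
    MeasurableSet[sitesSigma {z : Site (D + 1) | z 0 = y.1 0}]
      (closedFlights M L I N y ⁻¹' {A}) := by
  classical
  have : closedFlights M L I N y ⁻¹' {A} = ⋂ φ : Flight D I M L,
      if φ ∈ A then flightClosed y.1 y.2 N φ else (flightClosed y.1 y.2 N φ)ᶜ := by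
    ext ω
    simp only [Set.mem_preimage, Set.mem_singleton_iff, Set.mem_iInter, Finset.ext_iff,
      closedFlights, Finset.mem_filter, Finset.mem_univ, true_and]
    refine forall_congr' fun φ => ?_
    split_ifs with h <;> simp [h]
  rw [this]
  refine MeasurableSet.iInter fun φ => ?_
  split_ifs
  · exact measurableSet_flightClosed _ _ _ _
  · exact (measurableSet_flightClosed _ _ _ _).compl

theorem measurableSet_staysAbove (α : ℝ) (N n : ℕ) (y : (Fin (D + 1) → ℤ) × ℤ) :
    MeasurableSet[sitesSigma {z : Site (D + 1) | y.1 0 ≤ z 0}] (staysAbove α M L I N n y) := by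
  induction n generalizing y with
  | zero => exact MeasurableSet.const _
  | succ n ih =>
    have hsub : {z : Site (D + 1) | z 0 = y.1 0} ⊆ {z | y.1 0 ≤ z 0} :=
      fun z hz => le_of_eq (Eq.symm hz)
    have hsub' (A : Finset (Flight D I M L)) :
        {z : Site (D + 1) | (nextState N y A).1 0 ≤ z 0} ⊆ {z | y.1 0 ≤ z 0} := by
      intro z hz
      simp only [Set.mem_ofPred_eq, nextState_fst_zero] at hz ⊢
      omega
    rw [staysAbove]
    refine MeasurableSet.iUnion fun A => ?_
    have h1 := sitesSigma_mono hsub _ (measurableSet_closedFlights (M := M) (L := L) N y A)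
    have h2 := sitesSigma_mono (hsub' A) _ (ih (nextState N y A))
    exact @MeasurableSet.inter _ (sitesSigma {z : Site (D + 1) | y.1 0 ≤ z 0}) _ _ h1 h2

theorem measureReal_staysAbove_le {α : ℝ} (hα0 : 0 ≤ α) {N : ℕ}
    (hN : startTime L I = N) (hN0 : 0 < N)
    (hgain : (1 - α) * (∑ i ∈ Finset.range I, M i : ℕ) - N ≤ -4)
    {p : ℝ} {P : Measure (Config (D + 1))} (hP : IsBernoulli p P)
    (hhalf : ∀ x h, 1 / 2 ≤ P.real (⋃ φ : Flight D I M L, flightClosed x h N φ))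
    (n : ℕ) (y : (Fin (D + 1) → ℤ) × ℤ) :
    P.real (staysAbove α M L I N n y)
      ≤ (Real.exp (1 / 2) * (1 + Real.exp (-2)) / 2) ^ n * Real.exp (relHeight α y / 2) := by
  have := hP.1
  induction n generalizing y with
  | zero =>
    simp only [staysAbove, pow_zero, one_mul]
    by_cases h : 0 < relHeight α y
    · exact measureReal_le_one.trans (Real.one_le_exp (by linarith))
    · simp [h, Real.exp_nonneg]
  | succ n ih =>
    set γ := Real.exp (1 / 2) * (1 + Real.exp (-2)) / 2 with hγ
    set c : ℝ := γ ^ n * Real.exp (relHeight α y / 2) * Real.exp (1 / 2) with hc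
    have hc0 : 0 ≤ c := by positivity
    let a : Finset (Flight D I M L) → ℝ := fun A => P.real (closedFlights M L I N y ⁻¹' {A})
    have hterm : ∀ A : Finset (Flight D I M L),
        P.real (closedFlights M L I N y ⁻¹' {A} ∩ staysAbove α M L I N n (nextState N y A))
          ≤ c * (a A * Real.exp (-2) + if A = ∅ then a ∅ * (1 - Real.exp (-2)) else 0) := by
      intro A
      rw [hP.measureReal_inter _ (measurableSet_closedFlights N y A)
        (measurableSet_staysAbove α N n (nextState N y A))]
      · have h1 := ih (nextState N y A)
        have h2 := relHeight_nextState hN hN0 hgain y A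
        have h3 : P.real (staysAbove α M L I N n (nextState N y A))
            ≤ c * if A = ∅ then 1 else Real.exp (-2) := by
          refine h1.trans ?_
          rw [hc, mul_assoc, mul_assoc]
          refine mul_le_mul_of_nonneg_left ?_ (by positivity)
          rcases A.eq_empty_or_nonempty with hA | hA
          · rw [if_pos hA, mul_one, ← Real.exp_add]
            rw [if_neg (by simp [hA])] at h2
            exact Real.exp_le_exp.2 (by linarith)
          · rw [if_neg hA.ne_empty, ← Real.exp_add, ← Real.exp_add]
            rw [if_pos hA] at h2
            exact Real.exp_le_exp.2 (by linarith)
        have h4 := mul_le_mul_of_nonneg_left h3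
          (measureReal_nonneg (μ := P) (s := closedFlights M L I N y ⁻¹' {A}))
        refine h4.trans_eq ?_
        simp only [a]
        split_ifs with hA
        · subst hA; ring
        · ring
      · rw [Set.disjoint_left]
        intro z hz hz'
        simp only [Set.mem_ofPred_eq, nextState_fst_zero] at hz hz'
        omega
    have hsum1 : ∑ A, a A = 1 := by
      have := sum_measureReal_preimage_singleton (μ := P) (f := closedFlights M L I N y)
        Finset.univ (fun A _ => sitesSigma_le _ _ (measurableSet_closedFlights N y A))
      simpa [a] using this
    have hempty : a ∅ ≤ 1 / 2 := by
      have hU : MeasurableSet (⋃ φ : Flight D I M L, flightClosed y.1 y.2 N φ) :=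
        MeasurableSet.iUnion fun φ => sitesSigma_le _ _ (measurableSet_flightClosed _ _ _ _)
      have hcompl : closedFlights M L I N y ⁻¹' {∅}
          = (⋃ φ : Flight D I M L, flightClosed y.1 y.2 N φ)ᶜ := by
        ext ω
        simp [closedFlights, Finset.filter_eq_empty_iff]
      have := hhalf y.1 y.2
      simp only [a, hcompl, probReal_compl_eq_one_sub hU]
      linarith
    have he : Real.exp (-2) ≤ 1 := Real.exp_le_one_iff.2 (by norm_num)
    calc P.real (staysAbove α M L I N (n + 1) y)
        ≤ ∑ A : Finset (Flight D I M L), P.real (closedFlights M L I N y ⁻¹' {A} ∩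
            staysAbove α M L I N n (nextState N y A)) := measureReal_iUnion_fintype_le _
      _ ≤ ∑ A : Finset (Flight D I M L),
            c * (a A * Real.exp (-2) + if A = ∅ then a ∅ * (1 - Real.exp (-2)) else 0) :=
          Finset.sum_le_sum fun A _ => hterm A
      _ = c * (Real.exp (-2) + a ∅ * (1 - Real.exp (-2))) := by
          rw [← Finset.mul_sum, Finset.sum_add_distrib, ← Finset.sum_mul, hsum1,
            Finset.sum_ite_eq' Finset.univ ∅]
          simp
      _ ≤ c * ((1 + Real.exp (-2)) / 2) := by
          refine mul_le_mul_of_nonneg_left ?_ hc0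
          nlinarith
      _ = γ ^ (n + 1) * Real.exp (relHeight α y / 2) := by
          rw [hc, pow_succ, hγ]; ring

theorem LIP_eq_zero_of_half_le {α : ℝ} (hα0 : 0 ≤ α) {N : ℕ}
    (hN : startTime L I = N) (hN0 : 0 < N)
    (hgain : (1 - α) * (∑ i ∈ Finset.range I, M i : ℕ) - N ≤ -4)
    {p : ℝ} {P : Measure (Config (D + 1))} (hP : IsBernoulli p P)
    (hhalf : ∀ x h, 1 / 2 ≤ P.real (⋃ φ : Flight D I M L, flightClosed x h N φ)) :
    P (LIP α (etaK (D + 1) (D + 1))) = 0 := by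
  have := hP.1
  have hsub : LIP α (etaK (D + 1) (D + 1))
      ⊆ ⋃ h : ℤ, ⋂ n, staysAbove α M L I N n ((0 : Fin (D + 1) → ℤ), h) := by
    rintro ω ⟨F, hF, hω⟩
    refine Set.mem_iUnion.2 ⟨F 0, Set.mem_iInter.2 fun n => ?_⟩
    refine mem_staysAbove hN hN0 hF (fun x => (hω x).1) (fun x => ?_) n _ le_rfl
    have h := (hω x).2
    rw [planeHt, Int.floor_lt] at h
    have he : etaK (D + 1) (D + 1) = fun _ => 1 := funext fun i => if_pos i.2
    simpa [he] using h
  refine measure_mono_null hsub (measure_iUnion_null fun h => ?_)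
  have hγ0 : 0 ≤ Real.exp (1 / 2) * (1 + Real.exp (-2)) / 2 := by positivity
  have hγ1 : Real.exp (1 / 2) * (1 + Real.exp (-2)) / 2 < 1 := by
    have h1 : Real.exp (1 / 2) < 5 / 3 := by
      have h2 : Real.exp (1 / 2) ^ 2 < (5 / 3) ^ 2 := by
        rw [← Real.exp_nat_mul]
        norm_num
        linarith [Real.exp_one_lt_d9]
      exact lt_of_pow_lt_pow_left₀ 2 (by norm_num) h2
    have h2 : Real.exp (-2) < 1 / 5 := by
      rw [Real.exp_neg, ← one_div]
      refine one_div_lt_one_div_of_lt (by norm_num) ?_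
      rw [show (2 : ℝ) = (2 : ℕ) * 1 by norm_num, Real.exp_nat_mul]
      nlinarith [Real.exp_one_gt_d9]
    nlinarith [Real.exp_pos (1 / 2), Real.exp_pos (-2)]
  have hlim := (tendsto_pow_atTop_nhds_zero_of_lt_one hγ0 hγ1).mul_const
    (Real.exp (relHeight α ((0 : Fin (D + 1) → ℤ), h) / 2))
  rw [zero_mul] at hlim
  have hle : P.real (⋂ n, staysAbove α M L I N n ((0 : Fin (D + 1) → ℤ), h)) ≤ 0 :=
    ge_of_tendsto' hlim fun n => (measureReal_mono (Set.iInter_subset _ n)).trans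
      (measureReal_staysAbove_le hα0 hN hN0 hgain hP hhalf n _)
  exact (measureReal_eq_zero_iff (by finiteness)).1 (le_antisymm hle measureReal_nonneg)

end Exploration

theorem factorial_mul_exp_le {m : ℕ} (hm : 1 ≤ m) :
    (m.factorial : ℝ) * Real.exp m ≤ Real.exp 1 * (m : ℝ) ^ (m + 1) := by
  induction m, hm using Nat.le_induction with
  | base => simp
  | succ m hm ih =>
    have hm0 : (0 : ℝ) < m := by exact_mod_cast hm
    have hstep : Real.exp 1 * (m : ℝ) ^ (m + 1) ≤ ((m : ℝ) + 1) ^ (m + 1) := by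
      have h1 := Real.one_sub_inv_le_log_of_pos (show 0 < ((m : ℝ) + 1) / m by positivity)
      have h2 : 1 ≤ ((m + 1 : ℕ) : ℝ) * Real.log (((m : ℝ) + 1) / m) := by
        have : ((m + 1 : ℕ) : ℝ) * (1 - (((m : ℝ) + 1) / m)⁻¹) = 1 := by
          push_cast
          field_simp
          ring
        exact this.symm.le.trans (mul_le_mul_of_nonneg_left h1 (by positivity))
      have h3 := Real.exp_le_exp.2 h2
      rw [Real.exp_nat_mul, Real.exp_log (by positivity), div_pow, le_div_iff₀ (by positivity)] at h3
      exact h3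
    calc ((m + 1).factorial : ℝ) * Real.exp (m + 1 : ℕ)
        = (m + 1) * Real.exp 1 * (m.factorial * Real.exp m) := by
          rw [Nat.factorial_succ]
          push_cast
          rw [Real.exp_add]
          ring
      _ ≤ (m + 1) * Real.exp 1 * (Real.exp 1 * (m : ℝ) ^ (m + 1)) := by gcongr
      _ ≤ (m + 1) * Real.exp 1 * ((m : ℝ) + 1) ^ (m + 1) := by gcongr
      _ = Real.exp 1 * ((m + 1 : ℕ) : ℝ) ^ (m + 1 + 1) := by
          push_cast
          ring

theorem exists_blockLength {s C : ℝ} (hs : 1 ≤ s) (hC0 : 0 < C)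
    (hC : s * Real.log s - s < Real.log C) :
    ∃ T : ℕ, 1 ≤ T ∧ ∀ m : ℕ, s * T - 1 < m → (m : ℝ) < s * T + 1 →
      2 * (m.factorial : ℝ) ≤ (T : ℝ) ^ m * C ^ T := by
  set δ := Real.log C - (s * Real.log s - s) with hδ
  have hδ0 : 0 < δ := by linarith
  set K := 5 + Real.log s + δ / s with hK
  have hev : ∀ᶠ y : ℝ in atTop, Real.log y + K ≤ δ / s * y := by
    have h1 := Real.isLittleO_log_id_atTop.bound (show 0 < δ / (2 * s) by positivity)
    filter_upwards [h1, eventually_ge_atTop (K / (δ / (2 * s))), eventually_ge_atTop 0]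
      with y h1 h2 h3
    rw [div_le_iff₀ (by positivity)] at h2
    have h4 := (le_abs_self _).trans h1
    rw [id, Real.norm_of_nonneg h3] at h4
    have : δ / s = δ / (2 * s) + δ / (2 * s) := by field_simp; ring
    rw [this]
    linarith
  have hT : Tendsto (fun T : ℕ => s * (T : ℝ) + 1) atTop atTop :=
    tendsto_atTop_add_const_right _ _
      (tendsto_natCast_atTop_atTop.const_mul_atTop (by linarith))
  obtain ⟨T, hTev, hT1⟩ := ((hT.eventually hev).and (eventually_ge_atTop 1)).exists
  refine ⟨T, hT1, fun m hm1 hm2 => ?_⟩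
  have hT1' : (1 : ℝ) ≤ T := by exact_mod_cast hT1
  have hsT : 1 ≤ s * T := one_le_mul_of_one_le_of_one_le hs hT1'
  have hm0 : (0 : ℝ) < m := by linarith
  have hm : 1 ≤ m := by exact_mod_cast hm0
  have hlogs : 0 ≤ Real.log s := Real.log_nonneg hs
  have hgap : Real.log (s * T + 1) + (5 + Real.log s) ≤ δ * T := by
    have h : δ / s * (s * T + 1) = δ * T + δ / s := by field_simp
    linarith
  have hfac : Real.log m.factorial ≤ 1 - m + (m + 1) * Real.log m := by
    have h := Real.log_le_log (by positivity) (factorial_mul_exp_le hm)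
    rw [Real.log_mul (by positivity) (by positivity), Real.log_exp,
      Real.log_mul (by positivity) (by positivity), Real.log_exp, Real.log_pow] at h
    push_cast at h
    linarith
  have hlogm : Real.log m ≤ Real.log (s * T + 1) := Real.log_le_log hm0 hm2.le
  have hratio : m * Real.log m ≤ m * Real.log T + (s * T + 1) * Real.log s + 2 := by
    have h1 := Real.log_le_sub_one_of_pos (show 0 < (m : ℝ) / (s * T) by positivity)
    rw [Real.log_div (by positivity) (by positivity), Real.log_mul (by positivity) (by positivity)]
      at h1
    have h2 : (m : ℝ) / (s * T) - 1 ≤ 1 / (s * T) := by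
      rw [div_sub_one (by positivity)]
      gcongr
      linarith
    have h3 : (m : ℝ) * (1 / (s * T)) ≤ 2 := by
      rw [mul_one_div, div_le_iff₀ (by positivity)]
      linarith
    have h4 : (m : ℝ) * Real.log s ≤ (s * T + 1) * Real.log s := by gcongr
    have h5 := mul_le_mul_of_nonneg_left (h1.trans h2) hm0.le
    linarith
  have hlog2 : Real.log 2 ≤ 1 := by linarith [Real.log_two_lt_d9]
  rw [← Real.log_le_log_iff (by positivity) (by positivity),
    Real.log_mul (by positivity) (by positivity), Real.log_mul (by positivity) (by positivity),
    Real.log_pow, Real.log_pow]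
  have : δ * T = T * Real.log C - s * T * Real.log s + s * T := by rw [hδ]; ring
  linarith

theorem eventually_mul_log_pow_le (K : ℝ) (k : ℕ) :
    ∀ᶠ D : ℕ in atTop, K * ((Nat.log 2 D + 1 : ℕ) : ℝ) ^ k ≤ D := by
  have hlog : Tendsto (fun D : ℕ => Nat.log 2 D + 1) atTop atTop := by
    refine tendsto_atTop_atTop.2 fun b => ⟨2 ^ b, fun D hD => ?_⟩
    have := Nat.log_mono_right (b := 2) hD
    rw [Nat.log_pow (by norm_num)] at this
    omega
  have hlim := (tendsto_pow_const_div_const_pow_of_one_lt k (one_lt_two (α := ℝ))).const_mul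
    (2 * K)
  rw [mul_zero] at hlim
  filter_upwards [hlog.eventually (hlim.eventually_le_const one_pos), eventually_ge_atTop 1]
    with D hD hD1
  rw [← mul_div_assoc, div_le_one (by positivity), pow_succ] at hD
  have h : (2 : ℝ) ^ Nat.log 2 D ≤ D := by
    exact_mod_cast Nat.pow_log_le_self 2 (by omega)
  push_cast at hD ⊢
  linarith

/-- Numbers of particles of the successive groups of a flight. -/
noncomputable def blockCount (r n : ℕ) (σ : ℝ) (i : ℕ) : ℕ :=
  if i = 0 then r else if i ≤ n then ⌈σ * i⌉₊ - ⌈σ * (i - 1)⌉₊ else 0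

/-- Numbers of slots of the successive groups of a flight. -/
def blockLength (n T g i : ℕ) : ℕ := if i = 0 then 1 else if i ≤ n then T else g

section Blocks

variable {r n T g : ℕ} {σ : ℝ}

theorem sum_blockCount (hσ : 0 ≤ σ) {i : ℕ} (hi : i ≤ n) :
    ∑ j ∈ Finset.range (i + 1), blockCount r n σ j = r + ⌈σ * i⌉₊ := by
  induction i with
  | zero => simp [blockCount]
  | succ i ih =>
    have hmono : ⌈σ * i⌉₊ ≤ ⌈σ * ((i + 1 : ℕ) : ℝ)⌉₊ := by gcongr; omega
    rw [Finset.sum_range_succ, ih (by omega), blockCount, if_neg (by omega), if_pos hi]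
    simp only [Nat.cast_add_one, add_sub_cancel_right] at hmono ⊢
    omega

theorem startTime_blockLength {i : ℕ} (hi : i ≤ n) :
    startTime (blockLength n T g) (i + 1) = 1 + T * i := by
  induction i with
  | zero => simp [startTime, blockLength]
  | succ i ih =>
    rw [startTime_succ, ih (by omega), blockLength, if_neg (by omega), if_pos hi]
    ring

theorem startTime_blockLength_last :
    startTime (blockLength n T g) (n + 2) = 1 + T * n + g := by
  rw [startTime_succ, startTime_blockLength le_rfl, blockLength, if_neg (by omega),
    if_neg (by omega)]

theorem sum_blockCount_last (hσ : 0 ≤ σ) :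
    ∑ j ∈ Finset.range (n + 2), blockCount r n σ j = r + ⌈σ * n⌉₊ := by
  rw [Finset.sum_range_succ, sum_blockCount hσ le_rfl, blockCount, if_neg (by omega),
    if_neg (by omega), add_zero]

theorem blockCount_bounds (hσ : 0 ≤ σ) {i : ℕ} (h0 : i ≠ 0) (hi : i ≤ n) :
    σ - 1 < blockCount r n σ i ∧ (blockCount r n σ i : ℝ) < σ + 1 := by
  have hi1 : (1 : ℝ) ≤ i := by exact_mod_cast Nat.one_le_iff_ne_zero.2 h0
  have hpos : 0 ≤ σ * ((i : ℝ) - 1) := mul_nonneg hσ (by linarith)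
  have hmono : ⌈σ * ((i : ℝ) - 1)⌉₊ ≤ ⌈σ * (i : ℝ)⌉₊ := by
    gcongr
    linarith
  rw [blockCount, if_neg h0, if_pos hi, Nat.cast_sub hmono]
  have h1 := Nat.le_ceil (σ * ((i : ℝ) - 1))
  have h2 := Nat.ceil_lt_add_one hpos
  have h3 := Nat.le_ceil (σ * (i : ℝ))
  have h4 := Nat.ceil_lt_add_one (mul_nonneg hσ (by linarith : (0 : ℝ) ≤ i))
  constructor <;> linarith

theorem blockCount_le (hσ : 0 ≤ σ) (i : ℕ) : blockCount r n σ i ≤ r + ⌈σ⌉₊ + 1 := by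
  by_cases h0 : i = 0
  · rw [blockCount, if_pos h0]; omega
  by_cases hi : i ≤ n
  · have h := (blockCount_bounds (r := r) hσ h0 hi).2.trans_le
      (add_le_add_left (Nat.le_ceil σ) 1)
    have : blockCount r n σ i < ⌈σ⌉₊ + 1 := by exact_mod_cast h
    omega
  · rw [blockCount, if_neg h0, if_neg hi]; omega

theorem one_le_blockLength (hT : 1 ≤ T) (hg : 1 ≤ g) (i : ℕ) : 1 ≤ blockLength n T g i := by
  unfold blockLength
  split_ifs <;> omega

theorem prod_factorial_mul_le (hσ : 0 ≤ σ) {C : ℝ} (hC : 0 < C) {D : ℕ} (hD : 1 ≤ D)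
    (hfac : ∀ m : ℕ, σ - 1 < m → (m : ℝ) < σ + 1 →
      2 * (m.factorial : ℝ) ≤ (T : ℝ) ^ m * C ^ T) {i : ℕ} (hi : i ≤ n) :
    (∏ j ∈ Finset.range (i + 1), ((blockCount r n σ j).factorial : ℝ)) * 2 ^ i * (D : ℝ) ^ r *
        (D : ℝ) ^ ⌈σ * i⌉₊
      ≤ r.factorial * C ^ (T * i) * ∏ j ∈ Finset.range (i + 1),
        ((D : ℝ) * blockLength n T g j) ^ blockCount r n σ j := by
  induction i with
  | zero => simp [blockCount, blockLength]
  | succ i ih =>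
    have hsum : ⌈σ * ((i + 1 : ℕ) : ℝ)⌉₊ = ⌈σ * i⌉₊ + blockCount r n σ (i + 1) := by
      have h1 := sum_blockCount (r := r) hσ hi
      rw [Finset.sum_range_succ, sum_blockCount hσ (by omega)] at h1
      omega
    have hb := blockCount_bounds (r := r) hσ (by omega : i + 1 ≠ 0) hi
    have hf := hfac _ hb.1 hb.2
    have hL : blockLength n T g (i + 1) = T := by
      rw [blockLength, if_neg (by omega), if_pos hi]
    rw [Finset.prod_range_succ, Finset.prod_range_succ _ (i + 1), hsum, hL]
    generalize blockCount r n σ (i + 1) = m at hf ⊢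
    calc _ = ((∏ j ∈ Finset.range (i + 1), ((blockCount r n σ j).factorial : ℝ)) * 2 ^ i *
          (D : ℝ) ^ r * (D : ℝ) ^ ⌈σ * i⌉₊) * (D ^ m * (2 * m.factorial)) := by
          ring
      _ ≤ (r.factorial * C ^ (T * i) * ∏ j ∈ Finset.range (i + 1),
          ((D : ℝ) * blockLength n T g j) ^ blockCount r n σ j) * (D ^ m * (T ^ m * C ^ T)) := by
          have := ih (by omega)
          gcongr
      _ = _ := by
          rw [mul_add, mul_one, pow_add, mul_pow (D : ℝ)]
          ring

end Blocks

section Overlap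

variable {r n T g D : ℕ} {s C X : ℝ}

theorem prod_factorial_mul_pow_le (hs : 0 ≤ s) (hC : 0 < C) (hD : 1 ≤ D)
    (hXC : X * C = (D : ℝ) ^ s)
    (hfac : ∀ m : ℕ, s * T - 1 < m → (m : ℝ) < s * T + 1 →
      2 * (m.factorial : ℝ) ≤ (T : ℝ) ^ m * C ^ T) {i : ℕ} (hi : i ≤ n) :
    (∏ j ∈ Finset.range (i + 1), ((blockCount r n (s * T) j).factorial : ℝ)) * 2 ^ i *
        (D : ℝ) ^ r * X ^ (T * i)
      ≤ r.factorial * ∏ j ∈ Finset.range (i + 1),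
        ((D : ℝ) * blockLength n T g j) ^ blockCount r n (s * T) j := by
  have h1 := prod_factorial_mul_le (r := r) (g := g) (n := n) (by positivity) hC hD hfac hi
  have h2 : (X * C) ^ (T * i) ≤ (D : ℝ) ^ ⌈s * T * i⌉₊ := by
    rw [hXC, ← Real.rpow_natCast, ← Real.rpow_mul (by positivity), ← Real.rpow_natCast]
    refine Real.rpow_le_rpow_of_exponent_le (by exact_mod_cast hD) ?_
    refine le_trans (le_of_eq ?_) (Nat.le_ceil _)
    push_cast
    ring
  refine le_of_mul_le_mul_right ?_ (pow_pos hC (T * i))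
  calc _ = (∏ j ∈ Finset.range (i + 1), ((blockCount r n (s * T) j).factorial : ℝ)) * 2 ^ i *
        (D : ℝ) ^ r * (X * C) ^ (T * i) := by rw [mul_pow]; ring
    _ ≤ (∏ j ∈ Finset.range (i + 1), ((blockCount r n (s * T) j).factorial : ℝ)) * 2 ^ i *
        (D : ℝ) ^ r * (D : ℝ) ^ ⌈s * T * i⌉₊ := by gcongr
    _ ≤ _ := h1
    _ = _ := by ring

theorem overlap_count_mul_le (hs : 0 ≤ s) (hC : 0 < C) (hT : 1 ≤ T) (hg : 1 ≤ g)
    (hD : r + ⌈s * T⌉₊ + 1 ≤ D) (hX : 1 ≤ X) (hXC : X * C = (D : ℝ) ^ s)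
    (hfac : ∀ m : ℕ, s * T - 1 < m → (m : ℝ) < s * T + 1 →
      2 * (m.factorial : ℝ) ≤ (T : ℝ) ^ m * C ^ T) {b i : ℕ} (hi : i ≤ n) (hib : T * i ≤ b) :
    ((∏ j ∈ Finset.range (n + 2), if startTime (blockLength n T g) (j + 1) ≤ b + 1
        then (blockCount r n (s * T) j).factorial
        else (D * blockLength n T g j) ^ blockCount r n (s * T) j : ℕ) : ℝ) * 2 ^ i *
        (D : ℝ) ^ r * X ^ (T * i)
      ≤ r.factorial * Fintype.card
        (Flight D (n + 2) (blockCount r n (s * T)) (blockLength n T g)) := by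
  have hfull : ∀ j, (blockCount r n (s * T) j).factorial
      ≤ (D * blockLength n T g j) ^ blockCount r n (s * T) j := by
    intro j
    have h1 := blockCount_le (r := r) (n := n) (show 0 ≤ s * T by positivity) j
    have h2 := one_le_blockLength (n := n) hT hg j
    refine (Nat.factorial_le_pow _).trans (Nat.pow_le_pow_left ?_ _)
    nlinarith
  have hle : (∏ j ∈ Finset.range (n + 2), if startTime (blockLength n T g) (j + 1) ≤ b + 1
        then (blockCount r n (s * T) j).factorial
        else (D * blockLength n T g j) ^ blockCount r n (s * T) j)
      ≤ (∏ j ∈ Finset.range (i + 1), (blockCount r n (s * T) j).factorial) *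
        ∏ j ∈ Finset.Ico (i + 1) (n + 2),
          (D * blockLength n T g j) ^ blockCount r n (s * T) j := by
    rw [← Finset.prod_range_mul_prod_Ico _ (show i + 1 ≤ n + 2 by omega)]
    refine Nat.mul_le_mul (Finset.prod_le_prod' fun j hj => ?_)
      (Finset.prod_le_prod' fun j _ => ?_)
    · rw [Finset.mem_range] at hj
      rw [startTime_blockLength (by omega), if_pos]
      have : T * j ≤ T * i := Nat.mul_le_mul_left _ (by omega)
      omega
    · split_ifs
      · exact hfull j
      · exact le_rfl
  have hle' : ((∏ j ∈ Finset.range (n + 2), if startTime (blockLength n T g) (j + 1) ≤ b + 1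
        then (blockCount r n (s * T) j).factorial
        else (D * blockLength n T g j) ^ blockCount r n (s * T) j : ℕ) : ℝ)
      ≤ (∏ j ∈ Finset.range (i + 1), ((blockCount r n (s * T) j).factorial : ℝ)) *
        ∏ j ∈ Finset.Ico (i + 1) (n + 2),
          ((D : ℝ) * blockLength n T g j) ^ blockCount r n (s * T) j := by
    exact_mod_cast hle
  have hX0 : 0 ≤ X := zero_le_one.trans hX
  have hmain := prod_factorial_mul_pow_le (r := r) (g := g) (n := n) hs hC (by omega) hXC hfac hi
  have hcard : (Fintype.card (Flight D (n + 2) (blockCount r n (s * T)) (blockLength n T g)) : ℝ)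
      = (∏ j ∈ Finset.range (i + 1), ((D : ℝ) * blockLength n T g j) ^ blockCount r n (s * T) j) *
        ∏ j ∈ Finset.Ico (i + 1) (n + 2),
          ((D : ℝ) * blockLength n T g j) ^ blockCount r n (s * T) j := by
    rw [Flight.card_flight, Finset.prod_range_mul_prod_Ico _ (show i + 1 ≤ n + 2 by omega)]
    push_cast
    rfl
  rw [hcard]
  set R := ∏ j ∈ Finset.Ico (i + 1) (n + 2),
    ((D : ℝ) * blockLength n T g j) ^ blockCount r n (s * T) j
  have hR : 0 ≤ R := Finset.prod_nonneg fun j _ => by positivity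
  calc _ ≤ (∏ j ∈ Finset.range (i + 1), ((blockCount r n (s * T) j).factorial : ℝ)) * R * 2 ^ i *
        (D : ℝ) ^ r * X ^ (T * i) := by gcongr
    _ = ((∏ j ∈ Finset.range (i + 1), ((blockCount r n (s * T) j).factorial : ℝ)) * 2 ^ i *
        (D : ℝ) ^ r * X ^ (T * i)) * R := by ring
    _ ≤ _ := mul_le_mul_of_nonneg_right hmain hR
    _ = _ := by ring

theorem overlap_sum_le (hs : 0 ≤ s) (hC : 0 < C) (hT : 1 ≤ T) (hg : 1 ≤ g)
    (hD : r + ⌈s * T⌉₊ + 1 ≤ D) (hX : 1 ≤ X) (hXC : X * C = (D : ℝ) ^ s)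
    (hfac : ∀ m : ℕ, s * T - 1 < m → (m : ℝ) < s * T + 1 →
      2 * (m.factorial : ℝ) ≤ (T : ℝ) ^ m * C ^ T)
    {q Q : ℝ} (hq : 0 < q) (hqX : q⁻¹ ≤ X) (hQ0 : 0 ≤ Q) {N : ℕ} (hN : N = 1 + T * n + g)
    (hQ : ∀ b < N, (1 + Q * q) ^ b ≤ 2)
    (hshort : N * (2 * r.factorial * X ^ (1 + T)) ≤ (D : ℝ) ^ r)
    (hlong : N * (2 * r.factorial * X ^ (1 + g)) ≤ (D : ℝ) ^ r * 2 ^ n) :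
    ∑ b ∈ Finset.range N, q⁻¹ ^ (b + 1) * ((1 + Q * q) ^ b *
      (∏ j ∈ Finset.range (n + 2), if startTime (blockLength n T g) (j + 1) ≤ b + 1
        then (blockCount r n (s * T) j).factorial
        else (D * blockLength n T g j) ^ blockCount r n (s * T) j : ℕ))
      ≤ Fintype.card (Flight D (n + 2) (blockCount r n (s * T)) (blockLength n T g)) := by
  set Z : ℝ := (Fintype.card (Flight D (n + 2) (blockCount r n (s * T))
    (blockLength n T g)) : ℝ) with hZ
  have hZ0 : 0 ≤ Z := by positivity
  have hN0 : (0 : ℝ) < N := by rw [hN]; positivity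
  have hD0 : (0 : ℝ) < (D : ℝ) ^ r := pow_pos (by exact_mod_cast (by omega : 0 < D)) r
  have hX0 : 0 < X := by linarith
  suffices h : ∀ b ∈ Finset.range N, q⁻¹ ^ (b + 1) * ((1 + Q * q) ^ b *
      (∏ j ∈ Finset.range (n + 2), if startTime (blockLength n T g) (j + 1) ≤ b + 1
        then (blockCount r n (s * T) j).factorial
        else (D * blockLength n T g j) ^ blockCount r n (s * T) j : ℕ)) ≤ Z / N by
    refine (Finset.sum_le_card_nsmul _ _ _ h).trans (le_of_eq ?_)
    rw [Finset.card_range, nsmul_eq_mul]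
    field_simp
  intro b hb
  rw [Finset.mem_range] at hb
  have key : ∀ i e : ℕ, i ≤ n → T * i ≤ b → b + 1 ≤ T * i + e →
      N * (2 * r.factorial * X ^ e) ≤ (D : ℝ) ^ r * 2 ^ i →
      q⁻¹ ^ (b + 1) * ((1 + Q * q) ^ b *
      (∏ j ∈ Finset.range (n + 2), if startTime (blockLength n T g) (j + 1) ≤ b + 1
        then (blockCount r n (s * T) j).factorial
        else (D * blockLength n T g j) ^ blockCount r n (s * T) j : ℕ)) ≤ Z / N := by
    intro i e hi hib hbe hbound
    have h1 := overlap_count_mul_le (r := r) (g := g) hs hC hT hg hD hX hXC hfac hi hib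
    rw [← hZ] at h1
    set B : ℝ := ((∏ j ∈ Finset.range (n + 2),
      if startTime (blockLength n T g) (j + 1) ≤ b + 1
        then (blockCount r n (s * T) j).factorial
        else (D * blockLength n T g j) ^ blockCount r n (s * T) j : ℕ) : ℝ) with hB
    have hB0 : 0 ≤ B := Nat.cast_nonneg _
    have h2 : q⁻¹ ^ (b + 1) ≤ X ^ (T * i) * X ^ e := by
      rw [← pow_add]
      exact (pow_le_pow_left₀ (by positivity) hqX _).trans (pow_le_pow_right₀ hX hbe)
    have h3 : q⁻¹ ^ (b + 1) * ((1 + Q * q) ^ b * B) ≤ X ^ (T * i) * X ^ e * (2 * B) := by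
      have := hQ b hb
      gcongr
    refine h3.trans ?_
    rw [le_div_iff₀ hN0]
    refine le_of_mul_le_mul_right ?_ (mul_pos hD0 (pow_pos two_pos i : (0 : ℝ) < 2 ^ i))
    calc X ^ (T * i) * X ^ e * (2 * B) * N * ((D : ℝ) ^ r * 2 ^ i)
        = N * (2 * X ^ e) * (B * 2 ^ i * (D : ℝ) ^ r * X ^ (T * i)) := by ring
      _ ≤ N * (2 * X ^ e) * (r.factorial * Z) := by gcongr
      _ = N * (2 * r.factorial * X ^ e) * Z := by ring
      _ ≤ (D : ℝ) ^ r * 2 ^ i * Z := by gcongr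
      _ = Z * ((D : ℝ) ^ r * 2 ^ i) := by ring
  have hdiv := Nat.div_add_mod b T
  have hmod := Nat.mod_lt b hT
  by_cases hbn : b / T < n
  · refine key (b / T) (1 + T) hbn.le (by omega) (by omega) (hshort.trans ?_)
    exact le_mul_of_one_le_right hD0.le (one_le_pow₀ one_le_two)
  · have : T * n ≤ T * (b / T) := Nat.mul_le_mul_left _ (by omega)
    exact key n (1 + g) le_rfl (by omega) (by omega) hlong

end Overlap

theorem eventually_mul_succ_div_rpow_le {C C' s : ℝ} (hC : C < C') :
    ∀ᶠ D : ℕ in atTop, C * (((D + 1 : ℕ) : ℝ) / D) ^ s ≤ C' := by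
  have h1 : Tendsto (fun D : ℕ => ((D + 1 : ℕ) : ℝ) / D) atTop (nhds 1) := by
    have h2 := (tendsto_one_div_atTop_nhds_zero_nat (𝕜 := ℝ)).const_add 1
    rw [add_zero] at h2
    refine h2.congr' ?_
    filter_upwards [eventually_ge_atTop 1] with D hD
    have : (D : ℝ) ≠ 0 := by positivity
    push_cast
    field_simp
  have h3 := (h1.rpow_const (p := s) (Or.inl one_ne_zero)).const_mul C
  rw [Real.one_rpow, mul_one] at h3
  exact h3.eventually_le_const hC

theorem one_add_mul_pow_le_two {Q q : ℝ} {b N : ℕ} (hQ : 0 ≤ Q) (hq : 0 ≤ q) (hb : b < N)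
    (h : Q * q * N ≤ 1 / 2) : (1 + Q * q) ^ b ≤ 2 := by
  have hb' : (b : ℝ) ≤ N := by exact_mod_cast hb.le
  calc (1 + Q * q) ^ b ≤ Real.exp (Q * q) ^ b := by
        gcongr
        linarith [Real.add_one_le_exp (Q * q)]
    _ = Real.exp (b * (Q * q)) := (Real.exp_nat_mul _ _).symm
    _ ≤ Real.exp (Real.log 2) := by
        refine Real.exp_le_exp.2 ?_
        have : (b : ℝ) * (Q * q) ≤ Q * q * N := by
          rw [mul_comm]
          gcongr
        linarith [Real.log_two_gt_d9]
    _ = 2 := Real.exp_log two_pos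

theorem eventually_LIP_eq_zero {α s C' : ℝ} (hα0 : 0 ≤ α) (hα1 : α < 1) (hs : s = 1 / (1 - α))
    (hC'0 : 0 < C') (hC' : s * Real.log s - s < Real.log C') :
    ∀ᶠ D : ℕ in atTop, ∀ P : Measure (Config (D + 1)),
      IsBernoulli (1 - C' / ((D + 1 : ℕ) : ℝ) ^ s) P →
        P (LIP α (etaK (D + 1) (D + 1))) = 0 := by
  have hs1 : 1 ≤ s := by
    rw [hs, le_div_iff₀ (by linarith)]
    linarith
  have hαs : (1 - α) * s = 1 := by
    rw [hs, mul_one_div, div_self (by linarith)]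
  obtain ⟨c, hc1, hc2⟩ := exists_between hC'
  set C := Real.exp c with hCdef
  have hC0 : 0 < C := Real.exp_pos c
  have hCC' : C < C' := by rwa [hCdef, ← Real.lt_log_iff_exp_lt hC'0]
  obtain ⟨T, hT1, hT⟩ := exists_blockLength hs1 hC0 (by rwa [hCdef, Real.log_exp])
  set r := ⌈s * (1 + T)⌉₊ + 1 with hr
  set g := r + 4 with hg
  set a := ⌈s * (1 + g)⌉₊ with ha
  set J := r + ⌈s * T⌉₊ + 1 with hJ
  set A := r + ⌈s * T⌉₊ * a + 1 with hA
  set B := 1 + T * a + g with hB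
  filter_upwards [eventually_ge_atTop J, tendsto_natCast_atTop_atTop.eventually_ge_atTop C,
    eventually_mul_succ_div_rpow_le (s := s) hCC',
    eventually_mul_log_pow_le (2 * C' * ((J + 1) * A ^ J * B)) (J + 1),
    eventually_mul_log_pow_le (B * (2 * r.factorial / C ^ (1 + T))) 1,
    eventually_mul_log_pow_le (B * (2 * r.factorial / C ^ (1 + g))) 1]
    with D hDJ hDC hDs hDQ hDshort hDlong P hP
  set ℓ := Nat.log 2 D + 1 with hℓ
  have hℓ1 : 1 ≤ ℓ := by omega
  rw [pow_one] at hDshort hDlong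
  set n := a * ℓ with hn
  set N := 1 + T * n + g with hN
  set q := C' / ((D + 1 : ℕ) : ℝ) ^ s with hq
  have hD1 : 1 ≤ D := by omega
  have hD1' : (1 : ℝ) ≤ D := by exact_mod_cast hD1
  have hD0 : (0 : ℝ) < D := by linarith
  have hq0 : 0 < q := by positivity
  have hσ : 0 ≤ s * T := by positivity
  have hNB : (N : ℝ) ≤ B * ℓ := by
    have : N ≤ B * ℓ := by
      rw [hN, hB, hn]
      nlinarith
    exact_mod_cast this
  have hsum : ∑ i ∈ Finset.range (n + 2), blockCount r n (s * T) i + 1 ≤ A * ℓ := by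
    rw [sum_blockCount_last hσ]
    have h1 : ⌈s * T * n⌉₊ ≤ ⌈s * T⌉₊ * n := by
      rw [Nat.ceil_le]
      push_cast
      gcongr
      exact Nat.le_ceil _
    rw [hA]
    nlinarith
  have hqD : q ≤ C' / D := by
    rw [hq]
    gcongr
    calc (D : ℝ) ≤ ((D + 1 : ℕ) : ℝ) := by push_cast; linarith
      _ ≤ ((D + 1 : ℕ) : ℝ) ^ s := Real.self_le_rpow_of_one_le (by push_cast; linarith) hs1
  set Q : ℕ := (J + 1) * (∑ i ∈ Finset.range (n + 2), blockCount r n (s * T) i + 1) ^ J with hQ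
  have hQle : (Q : ℝ) ≤ (J + 1) * A ^ J * (ℓ : ℝ) ^ J := by
    have : Q ≤ (J + 1) * (A * ℓ) ^ J :=
      Nat.mul_le_mul_left _ (Nat.pow_le_pow_left hsum _)
    calc (Q : ℝ) ≤ ((J + 1) * (A * ℓ) ^ J : ℕ) := by exact_mod_cast this
      _ = _ := by push_cast; ring
  have hQqN : (Q : ℝ) * q * N ≤ 1 / 2 := by
    calc (Q : ℝ) * q * N ≤ ((J + 1) * A ^ J * (ℓ : ℝ) ^ J) * (C' / D) * (B * ℓ) := by gcongr
      _ = (2 * C' * ((J + 1) * A ^ J * B) * (ℓ : ℝ) ^ (J + 1)) / D / 2 := by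
          field_simp
          ring
      _ ≤ 1 / 2 := by
          gcongr
          rwa [div_le_one hD0]
  set X := (D : ℝ) ^ s / C with hX
  have hXC : X * C = (D : ℝ) ^ s := by rw [hX]; field_simp
  have hX1 : 1 ≤ X := by
    rw [hX, one_le_div hC0]
    exact hDC.trans (Real.self_le_rpow_of_one_le hD1' hs1)
  have hqX : q⁻¹ ≤ X := by
    rw [hX, hq, inv_div, div_le_div_iff₀ hC'0 hC0]
    rw [Real.div_rpow (by positivity) (by positivity), mul_div_assoc', div_le_iff₀ (by positivity)]
      at hDs
    linarith
  have hXpow : ∀ e : ℕ, X ^ e = (D : ℝ) ^ (s * e) / C ^ e := by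
    intro e
    rw [hX, div_pow, Real.rpow_mul hD0.le, Real.rpow_natCast]
  have hDr : (D : ℝ) ^ (s * (1 + T : ℕ)) * D ≤ (D : ℝ) ^ r := by
    rw [hr, pow_succ]
    gcongr
    rw [← Real.rpow_natCast]
    refine Real.rpow_le_rpow_of_exponent_le hD1' ?_
    push_cast
    exact Nat.le_ceil _
  have hDn : (D : ℝ) ^ (s * (1 + g : ℕ)) ≤ 2 ^ n := by
    have h1 : (D : ℝ) ≤ 2 ^ ℓ := by
      exact_mod_cast (Nat.lt_pow_succ_log_self (by norm_num) D).le
    calc (D : ℝ) ^ (s * (1 + g : ℕ)) ≤ (D : ℝ) ^ (a : ℝ) := by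
          refine Real.rpow_le_rpow_of_exponent_le hD1' ?_
          rw [Nat.cast_add, Nat.cast_one]
          exact Nat.le_ceil _
      _ = (D : ℝ) ^ a := Real.rpow_natCast _ _
      _ ≤ (2 ^ ℓ) ^ a := by gcongr
      _ = 2 ^ n := by rw [← pow_mul, hn, mul_comm]
  have hshort : N * (2 * r.factorial * X ^ (1 + T)) ≤ (D : ℝ) ^ r := by
    calc N * (2 * r.factorial * X ^ (1 + T))
        ≤ B * ℓ * (2 * r.factorial * X ^ (1 + T)) := by gcongr
      _ = (D : ℝ) ^ (s * (1 + T : ℕ)) * (B * (2 * r.factorial / C ^ (1 + T)) * ℓ) := by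
          rw [hXpow]; ring
      _ ≤ (D : ℝ) ^ (s * (1 + T : ℕ)) * D := by gcongr
      _ ≤ _ := hDr
  have hlong : N * (2 * r.factorial * X ^ (1 + g)) ≤ (D : ℝ) ^ r * 2 ^ n := by
    calc N * (2 * r.factorial * X ^ (1 + g))
        ≤ B * ℓ * (2 * r.factorial * X ^ (1 + g)) := by gcongr
      _ = (B * (2 * r.factorial / C ^ (1 + g)) * ℓ) * (D : ℝ) ^ (s * (1 + g : ℕ)) := by
          rw [hXpow]; ring
      _ ≤ D * 2 ^ n := by gcongr
      _ ≤ (D : ℝ) ^ r * 2 ^ n := by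
          gcongr
          exact le_self_pow₀ hD1' (by omega)
  have hgain : (1 - α) * (∑ i ∈ Finset.range (n + 2), blockCount r n (s * T) i : ℕ) - N
      ≤ -4 := by
    rw [sum_blockCount_last hσ]
    have h1 := (Nat.ceil_lt_add_one (show 0 ≤ s * T * n by positivity)).le
    have h2 : (1 - α) * ((⌈s * T * n⌉₊ : ℕ) : ℝ) ≤ (1 - α) * (s * T * n + 1) :=
      mul_le_mul_of_nonneg_left h1 (by linarith)
    have h3 : (1 - α) * (s * T * n + 1) = T * n + (1 - α) := by
      linear_combination (T : ℝ) * n * hαs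
    have h4 : (1 - α) * (r : ℝ) ≤ r := mul_le_of_le_one_left (by positivity) (by linarith)
    rw [hN, hg]
    push_cast
    linarith
  have hcard : 0 < Fintype.card (Flight D (n + 2) (blockCount r n (s * T))
      (blockLength n T g)) := by
    rw [Flight.card_flight]
    exact Finset.prod_pos fun i _ =>
      pow_pos (Nat.mul_pos hD1 (one_le_blockLength hT1 (by omega) i)) _
  have hq' : 1 - (1 - q) = q := by ring
  refine LIP_eq_zero_of_half_le hα0 startTime_blockLength_last (by omega) hgain hP fun x h => ?_
  refine half_le_measureReal_iUnion_flightClosed hP (by linarith)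
    (fun i _ => blockCount_le hσ i) hcard ?_ x h
  rw [hq']
  exact overlap_sum_le (by linarith) hC0 hT1 (by omega) hDJ hX1 hXC hT hq0 hqX
    (Nat.cast_nonneg Q) hN (fun b hb => one_add_mul_pow_le_two (Nat.cast_nonneg Q) hq0.le hb hQqN)
    hshort hlong

theorem limsup_le_of_log_lt {α s C' : ℝ} (hα0 : 0 ≤ α) (hα1 : α < 1) (hs : s = 1 / (1 - α))
    (hC'0 : 0 < C') (hC' : s * Real.log s - s < Real.log C')
    {P : (n : ℕ) → ℝ → Measure (Config n)}
    (hP : ∀ n : ℕ, ∀ p ∈ Set.Icc (0 : ℝ) 1, IsBernoulli p (P n p))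
    {pc : ℕ → ℝ} (hpc : ∀ d : ℕ, 1 ≤ d → IsCriticalProb (P d) α (etaK d d) (pc d)) :
    atTop.limsup (fun d : ℕ => (1 - pc d) * (d : ℝ) ^ s) ≤ C' := by
  refine limsup_le_of_le ?_ ?_
  · refine IsBoundedUnder.isCoboundedUnder_le ⟨0, ?_⟩
    rw [eventually_map]
    filter_upwards [eventually_ge_atTop 1] with d hd
    have := (hpc d hd).1.2
    exact mul_nonneg (by linarith) (by positivity)
  · rw [← map_add_atTop_eq_nat 1, eventually_map]
    filter_upwards [eventually_LIP_eq_zero hα0 hα1 hs hC'0 hC'] with D hD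
    obtain ⟨hmem, -, hsuper⟩ := hpc (D + 1) (by omega)
    by_contra! hlt
    have hpos : (0 : ℝ) < ((D + 1 : ℕ) : ℝ) ^ s := by positivity
    rw [← div_lt_iff₀ hpos] at hlt
    have hq0 : 0 < C' / ((D + 1 : ℕ) : ℝ) ^ s := by positivity
    have h0 := hD _ (hP (D + 1) _ ⟨by linarith [hmem.1], by linarith⟩)
    rw [hsuper _ (by linarith) (by linarith)] at h0
    exact one_ne_zero h0

theorem mul_log_sub_lt_log_div {s θ : ℝ} (hs : 1 ≤ s) (hθ : 0 < θ)
    (h : θ * Real.exp θ / (Real.exp θ - 1) = s) :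
    s * Real.log s - s < Real.log (θ ^ s / (Real.exp θ - 1)) := by
  have hE : θ < Real.exp θ - 1 := by linarith [Real.add_one_lt_exp hθ.ne']
  have hE0 : 0 < Real.exp θ - 1 := by linarith
  have hdiff : s - θ = θ / (Real.exp θ - 1) := by
    rw [← h]
    field_simp
    ring
  have hdiff0 : 0 < s - θ := by rw [hdiff]; positivity
  have hlt : s - 1 < θ := by
    have : θ / (Real.exp θ - 1) < 1 := (div_lt_one hE0).2 hE
    linarith
  have hlogE : Real.log (Real.exp θ - 1) = Real.log θ + θ - Real.log s := by
    have : Real.exp θ - 1 = θ * Real.exp θ / s := by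
      rw [← h]
      field_simp
    rw [this, Real.log_div (by positivity) (by positivity),
      Real.log_mul (by positivity) (by positivity), Real.log_exp]
  have hlog := Real.log_le_sub_one_of_pos (show 0 < s / θ by positivity)
  rw [Real.log_div (by positivity) (by positivity)] at hlog
  have hmul : (s - 1) * (Real.log s - Real.log θ) < s - θ := by
    calc (s - 1) * (Real.log s - Real.log θ) ≤ (s - 1) * (s / θ - 1) :=
          mul_le_mul_of_nonneg_left hlog (by linarith)
      _ = (s - 1) / θ * (s - θ) := by field_simp
      _ < 1 * (s - θ) := mul_lt_mul_of_pos_right ((div_lt_one hθ).2 hlt) hdiff0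
      _ = s - θ := one_mul _
  rw [Real.log_div (by positivity) (by positivity), Real.log_rpow hθ, hlogE]
  linarith

/-- Asymptotic upper bound for `d → ∞`: for every `α ∈ [0,1)`,
`limsup_{d→∞} q_L(α,d,d) · d^{1/(1−α)} ≤ C(α)`, where `C(0) = 1` and, for `α ∈ (0,1)`,
`C(α) = θ^{1/(1−α)}/(e^θ − 1)` with `θ > 0` the unique solution of
`θ·e^θ/(e^θ − 1) = 1/(1−α)`. -/
theorem qL_limsup_upper_bound_dim
    (α : ℝ) (hα : α ∈ Set.Ico (0 : ℝ) 1)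
    (P : (n : ℕ) → ℝ → Measure (Config n))
    (hP : ∀ n : ℕ, ∀ p ∈ Set.Icc (0 : ℝ) 1, IsBernoulli p (P n p))
    (pc : ℕ → ℝ) (hpc : ∀ d : ℕ, 1 ≤ d → IsCriticalProb (P d) α (etaK d d) (pc d)) :
    (α = 0 →
      atTop.limsup (fun d : ℕ => (1 - pc d) * (d : ℝ) ^ ((1 : ℝ) / (1 - α))) ≤ 1) ∧
    ∀ θ : ℝ, 0 < θ → θ * Real.exp θ / (Real.exp θ - 1) = 1 / (1 - α) →
      atTop.limsup (fun d : ℕ => (1 - pc d) * (d : ℝ) ^ ((1 : ℝ) / (1 - α))) ≤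
        θ ^ ((1 : ℝ) / (1 - α)) / (Real.exp θ - 1) := by
  obtain ⟨hα0, hα1⟩ := hα
  refine ⟨fun h0 => limsup_le_of_log_lt hα0 hα1 rfl one_pos ?_ hP hpc, fun θ hθ hθs =>
    limsup_le_of_log_lt hα0 hα1 rfl ?_ (mul_log_sub_lt_log_div ?_ hθ hθs) hP hpc⟩
  · simp [h0]
  · have := Real.add_one_lt_exp hθ.ne'
    exact div_pos (by positivity) (by linarith)
  · rw [le_div_iff₀ (by linarith)]
    linarith
end

section
/- General upper bound: for every α ∈ [0,1) and every d ∈ ℕ, one has q_L(α,d,d) ≤ d!·(1−α)^d / (1 + d!·(1−α)^d) ≤ d!·(1−α)^d. -/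
open MeasureTheory Filter ENNReal

open Finset in
/-- The simplex `{x ∈ ℕ^d : ∑ x ≤ r}` has at least `(r + 1)^d / d!` points. -/
lemma exists_finset_sum_le (d r : ℕ) :
    ∃ t : Finset (Fin d → ℕ), (∀ x ∈ t, ∑ i, x i ≤ r) ∧
      (r + 1) ^ d ≤ d.factorial * t.card := by
  classical
  let g : Sym (Option (Fin d)) r → Fin d → ℕ := fun s i => (s : Multiset _).count (some i)
  have hsum (s : Sym (Option (Fin d)) r) :
      (s : Multiset (Option (Fin d))).count none + ∑ i, g s i = r := by
    have h := Multiset.sum_count_eq_card (s := (univ : Finset (Option (Fin d))))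
      (m := (s : Multiset (Option (Fin d)))) (by simp)
    rw [Fintype.sum_option] at h
    simpa [g] using h
  have hg : Function.Injective g := by
    intro s s' h
    apply Sym.coe_injective
    ext o
    cases o with
    | none =>
      have h1 := hsum s
      have h2 := hsum s'
      rw [h] at h1
      omega
    | some i => exact congrFun h i
  refine ⟨univ.image g, ?_, ?_⟩
  · simp only [mem_image, mem_univ, true_and, forall_exists_index, forall_apply_eq_imp_iff]
    intro s
    have := hsum s
    omega
  · rw [card_image_of_injective _ hg, card_univ, Sym.card_sym_eq_choose]
    have h := Nat.ascFactorial_eq_factorial_mul_choose r d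
    have h2 := Nat.pow_succ_le_ascFactorial (r + 1) d
    rw [h] at h2
    have h3 : Fintype.card (Option (Fin d)) + r - 1 = r + d := by
      simp; omega
    rwa [h3, Nat.choose_symm_add]

open Finset in
/-- The points of `ℕ^d` can be enumerated injectively in such a way that the `j`-th one has
`ℓ¹`-norm at most `(d! j)^{1/d}`. -/
lemma exists_injective_sum_pow_le {d : ℕ} (hd : 1 ≤ d) :
    ∃ e : ℕ → Fin d → ℕ, Function.Injective e ∧ ∀ j, (∑ i, e j i) ^ d ≤ d.factorial * j := by
  classical
  have hT (j : ℕ) : ∃ t : Finset (Fin d → ℕ),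
      (∀ x ∈ t, (∑ i, x i) ^ d ≤ d.factorial * j) ∧ j < t.card := by
    have hex : ∃ r, d.factorial * j < (r + 1) ^ d :=
      ⟨d.factorial * j, (Nat.lt_succ_self _).trans_le (Nat.le_self_pow (by omega) _)⟩
    obtain ⟨t, ht, hcard⟩ := exists_finset_sum_le d (Nat.find hex)
    refine ⟨t, fun x hx => ?_, ?_⟩
    · refine (Nat.pow_le_pow_left (ht x hx) d).trans ?_
      rcases hr : Nat.find hex with _ | r
      · simp [show d ≠ 0 by omega]
      · exact not_lt.1 (Nat.find_min hex (m := r) (by omega))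
    · exact lt_of_mul_lt_mul_left' ((Nat.find_spec hex).trans_le hcard)
  choose T hT hcard using hT
  obtain ⟨e, he, hmem⟩ := (Finset.all_card_le_biUnion_card_iff_exists_injective T).1 (by
    intro s
    rcases s.eq_empty_or_nonempty with rfl | hs
    · simp
    · calc s.card ≤ (range (s.max' hs + 1)).card :=
            card_le_card fun x hx => mem_range.2 (Nat.lt_succ_of_le (s.le_max' x hx))
        _ ≤ (T (s.max' hs)).card := by
            rw [card_range]
            exact hcard _
        _ ≤ _ := card_le_card (subset_biUnion_of_mem T (s.max'_mem hs)))
  exact ⟨e, he, fun j => hT j _ (hmem j)⟩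

lemma IsLipschitzFn.le_add_sum {d : ℕ} {F : (Fin d → ℤ) → ℤ} (hF : IsLipschitzFn F)
    (x : Fin d → ℤ) (v : Fin d → ℕ) :
    F (x + fun i => (v i : ℤ)) ≤ F x + ∑ i, (v i : ℤ) := by
  classical
  have single (i : Fin d) (m : ℕ) (y : Fin d → ℤ) : F (y + Pi.single i (m : ℤ)) ≤ F y + m := by
    induction m with
    | zero => simp
    | succ m ih =>
      have h := hF (y + Pi.single i ((m + 1 : ℕ) : ℤ)) (y + Pi.single i (m : ℤ)) (by
        have : ∀ j, |(y + Pi.single i ((m + 1 : ℕ) : ℤ) : Fin d → ℤ) j -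
            (y + Pi.single i (m : ℤ) : Fin d → ℤ) j| = if j = i then 1 else 0 := by
          intro j
          by_cases h : j = i
          · subst h; simp
          · simp [h]
        rw [Finset.sum_congr rfl fun j _ => this j]
        simp)
      have := (abs_le.1 h).2
      push_cast at *
      linarith
  have partialSum (s : Finset (Fin d)) :
      F (x + ∑ i ∈ s, Pi.single i (v i : ℤ)) ≤ F x + ∑ i ∈ s, (v i : ℤ) := by
    induction s using Finset.induction_on with
    | empty => simp
    | insert a s ha ih =>
      rw [Finset.sum_insert ha, Finset.sum_insert ha, add_comm (Pi.single a _), ← add_assoc]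
      have := single a (v a) (x + ∑ i ∈ s, Pi.single i (v i : ℤ))
      linarith
  simpa [Finset.univ_sum_single] using partialSum Finset.univ

/-- Position in `ℤ^d` after `i` steps of the walk whose `l`-th increment is `e (k l)`. -/
def walkPos {d : ℕ} (e : ℕ → Fin d → ℕ) (k : ℕ → ℕ) (i : ℕ) : Fin d → ℤ :=
  fun a => ∑ l ∈ Finset.range i, (e (k l) a : ℤ)

/-- The `j`-th site explored at step `i` of the walk: it lies above `walkPos e k i + e j`, on the
diagonal hyperplane `x_{d+1} = H - i + x_1 + ⋯ + x_d`. -/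
def walkSite {d : ℕ} (e : ℕ → Fin d → ℕ) (H : ℤ) (k : ℕ → ℕ) (i j : ℕ) : Site d :=
  Fin.snoc (walkPos e k i + fun a => (e j a : ℤ))
    (H - i + ∑ a, (walkPos e k i a + (e j a : ℤ)))

/-- The event that, for each of the first `n` steps of the walk, the first closed site explored
at step `i` is the one with index `k i`. -/
def walkEvent {d : ℕ} (e : ℕ → Fin d → ℕ) (H : ℤ) (n : ℕ) (k : ℕ → ℕ) : Set (Config d) :=
  {ω | ∀ i < n, (∀ j < k i, ω (walkSite e H k i j) = true) ∧ ω (walkSite e H k i (k i)) = false}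

lemma walkPos_succ {d : ℕ} (e : ℕ → Fin d → ℕ) (k : ℕ → ℕ) (i : ℕ) :
    walkPos e k (i + 1) = walkPos e k i + fun a => (e (k i) a : ℤ) := by
  ext a
  simp [walkPos, Finset.sum_range_succ]

lemma walkPos_congr {d : ℕ} (e : ℕ → Fin d → ℕ) {k k' : ℕ → ℕ} {i : ℕ}
    (h : ∀ l < i, k l = k' l) : walkPos e k i = walkPos e k' i := by
  ext a
  exact Finset.sum_congr rfl fun l hl => by rw [h l (Finset.mem_range.1 hl)]

lemma walkSite_injective {d : ℕ} {e : ℕ → Fin d → ℕ} (he : Function.Injective e) (H : ℤ)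
    (k : ℕ → ℕ) : Function.Injective fun x : (_ : ℕ) × ℕ => walkSite e H k x.1 x.2 := by
  rintro ⟨i, j⟩ ⟨i', j'⟩ h
  obtain ⟨h1, h2⟩ := Fin.snoc_inj.1 h
  dsimp only at h1 h2
  have h3 : ∑ a, (walkPos e k i a + (e j a : ℤ)) = ∑ a, (walkPos e k i' a + (e j' a : ℤ)) :=
    Finset.sum_congr rfl fun a _ => congrFun h1 a
  obtain rfl : i = i' := by omega
  obtain rfl : j = j' := he (by
    ext a
    have := congrFun h1 a
    simpa using this)
  rfl

/-- On `walkEvent`, an open Lipschitz surface drops by one diagonal hyperplane at each step. -/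
lemma apply_walkPos_le {d : ℕ} {e : ℕ → Fin d → ℕ} {H : ℤ} {n : ℕ} {k : ℕ → ℕ} {ω : Config d}
    (hω : ω ∈ walkEvent e H n k) {F : (Fin d → ℤ) → ℤ} (hF : IsLipschitzFn F)
    (hopen : ∀ x, ω (Fin.snoc x (F x)) = true) (h0 : F 0 ≤ H) {i : ℕ} (hi : i ≤ n) :
    F (walkPos e k i) ≤ H - i + ∑ a, walkPos e k i a := by
  induction i with
  | zero =>
    have : walkPos e k 0 = 0 := by ext a; simp [walkPos]
    simpa [this] using h0
  | succ i ih =>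
    have h1 := ih (by omega)
    have h2 := hF.le_add_sum (walkPos e k i) (e (k i))
    have h3 := (hω i (by omega)).2
    have h4 := hopen (walkPos e k (i + 1))
    rw [← walkPos_succ] at h2
    have h5 : ∑ a, walkPos e k (i + 1) a = ∑ a, walkPos e k i a + ∑ a, (e (k i) a : ℤ) := by
      simp [walkPos_succ, Finset.sum_add_distrib]
    have h6 : F (walkPos e k (i + 1)) ≠ H - i + ∑ a, walkPos e k (i + 1) a := by
      intro h
      rw [h] at h4
      have : walkSite e H k i (k i) =
          Fin.snoc (walkPos e k (i + 1)) (H - i + ∑ a, walkPos e k (i + 1) a) := by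
        simp [walkSite, walkPos_succ]
      rw [this, h4] at h3
      exact absurd h3 (by decide)
    push_cast
    omega

/-- Tangent-line bound `d y ≤ y^d + d - 1` combined with the growth of the enumeration. -/
lemma mul_sum_le_of_sum_pow_le {d : ℕ} {e : ℕ → Fin d → ℕ}
    (hbound : ∀ j, (∑ i, e j i) ^ d ≤ d.factorial * j) {α : ℝ} (hα : α < 1) (j : ℕ) :
    d * ((1 - α) * ∑ i, (e j i : ℝ)) ≤ d.factorial * (1 - α) ^ d * j + d - 1 := by
  have hs : (0 : ℝ) ≤ ∑ i, (e j i : ℝ) := Finset.sum_nonneg fun _ _ => by positivity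
  have h1 := one_add_mul_sub_le_pow (a := (1 - α) * ∑ i, (e j i : ℝ))
    (by nlinarith [mul_nonneg (sub_nonneg.2 hα.le) hs]) d
  have h2 : (∑ i, (e j i : ℝ)) ^ d ≤ d.factorial * j := by exact_mod_cast hbound j
  rw [mul_pow] at h1
  have h3 := mul_le_mul_of_nonneg_left h2 (pow_nonneg (sub_nonneg.2 hα.le) d)
  linarith

lemma lt_of_mem_walkEvent {d : ℕ} {e : ℕ → Fin d → ℕ} (hd : 1 ≤ d)
    (hbound : ∀ j, (∑ i, e j i) ^ d ≤ d.factorial * j) {α : ℝ} (hα : α < 1)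
    {H : ℤ} {n : ℕ} {k : ℕ → ℕ} {ω : Config d}
    (hω : ω ∈ walkEvent e H n k) {F : (Fin d → ℤ) → ℤ} (hF : IsLipschitzFn F)
    (hopen : ∀ x, ω (Fin.snoc x (F x)) = true ∧ planeHt α (etaK d d) x < F x) (h0 : F 0 ≤ H) :
    (n : ℝ) - d * H < d.factorial * (1 - α) ^ d * ∑ i ∈ Finset.range n, (k i : ℝ) := by
  have h1 : (F (walkPos e k n) : ℝ) ≤ H - n + ∑ a, (walkPos e k n a : ℝ) := by
    exact_mod_cast apply_walkPos_le hω hF (fun x => (hopen x).1) h0 le_rfl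
  have h2 : α * ∑ a, (walkPos e k n a : ℝ) < F (walkPos e k n) := by
    have := Int.floor_lt.1 (hopen (walkPos e k n)).2
    simpa [etaK] using this
  have h3 : ∑ a, (walkPos e k n a : ℝ) = ∑ i ∈ Finset.range n, ∑ a, (e (k i) a : ℝ) := by
    rw [Finset.sum_comm]
    simp [walkPos]
  have h4 : d * ((1 - α) * ∑ a, (walkPos e k n a : ℝ)) ≤
      ∑ i ∈ Finset.range n, (d.factorial * (1 - α) ^ d * (k i : ℝ) + d - 1) := by
    rw [h3, Finset.mul_sum, Finset.mul_sum]
    exact Finset.sum_le_sum fun i _ => mul_sum_le_of_sum_pow_le hbound hα (k i)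
  have h5 : ∑ i ∈ Finset.range n, (d.factorial * (1 - α) ^ d * (k i : ℝ) + d - 1) =
      d.factorial * (1 - α) ^ d * ∑ i ∈ Finset.range n, (k i : ℝ) + n * (d - 1) := by
    simp only [add_sub_assoc, Finset.sum_add_distrib, ← Finset.mul_sum]
    simp [mul_sub]
  have hd' : (0 : ℝ) < d := by exact_mod_cast hd
  have h6 := mul_lt_mul_of_pos_left (h2.trans_le h1) hd'
  linarith

lemma IsBernoulli.measure_cylinder {ι κ : Type*} {p : ℝ} {P : Measure (ι → Bool)}
    (hP : IsBernoulli p P) {g : κ → ι} (hg : Function.Injective g) (t : Finset κ) (b : κ → Bool) :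
    P {ω | ∀ x ∈ t, ω (g x) = b x} =
      ∏ x ∈ t, (if b x then ENNReal.ofReal p else ENNReal.ofReal (1 - p)) := by
  have h := hP.2 (t.map ⟨g, hg⟩) (Function.extend g b fun _ => true)
  simpa [hg.extend_apply] using h

lemma walkEvent_eq {d : ℕ} (e : ℕ → Fin d → ℕ) (H : ℤ) (n : ℕ) (k : ℕ → ℕ) :
    walkEvent e H n k = {ω | ∀ x ∈ (Finset.range n).sigma fun i => Finset.range (k i + 1),
      ω (walkSite e H k x.1 x.2) = decide (x.2 < k x.1)} := by
  ext ω
  simp only [walkEvent, Set.mem_ofPred_eq, Finset.mem_sigma, Finset.mem_range, Sigma.forall]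
  constructor
  · rintro h i j ⟨hi, hj⟩
    rcases (Nat.lt_succ_iff_lt_or_eq.1 hj) with hj | rfl
    · simpa [hj] using (h i hi).1 j hj
    · simpa using (h i hi).2
  · intro h i hi
    refine ⟨fun j hj => ?_, ?_⟩
    · simpa [hj] using h i j ⟨hi, by omega⟩
    · simpa using h i (k i) ⟨hi, by omega⟩

lemma IsBernoulli.measure_walkEvent {d : ℕ} {e : ℕ → Fin d → ℕ} (he : Function.Injective e)
    {p : ℝ} {P : Measure (Config d)} (hP : IsBernoulli p P) (H : ℤ) (n : ℕ) (k : ℕ → ℕ) :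
    P (walkEvent e H n k) =
      ∏ i ∈ Finset.range n, ENNReal.ofReal p ^ k i * ENNReal.ofReal (1 - p) := by
  rw [walkEvent_eq, hP.measure_cylinder (walkSite_injective he H k)
    ((Finset.range n).sigma fun i => Finset.range (k i + 1)) fun x => decide (x.2 < k x.1),
    Finset.prod_sigma]
  refine Finset.prod_congr rfl fun i _ => ?_
  rw [Finset.prod_range_succ, Finset.prod_congr rfl fun j hj => by
    rw [if_pos (decide_eq_true (Finset.mem_range.1 hj))]]
  simp

lemma measurableSet_walkEvent {d : ℕ} (e : ℕ → Fin d → ℕ) (H : ℤ) (n : ℕ) (k : ℕ → ℕ) :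
    MeasurableSet (walkEvent e H n k) := by
  rw [walkEvent_eq, Set.ofPred_forall]
  refine MeasurableSet.iInter fun x => ?_
  rw [Set.ofPred_forall]
  exact MeasurableSet.iInter fun _ => measurable_pi_apply _ (measurableSet_singleton _)

lemma eq_of_mem_walkEvent {d : ℕ} {e : ℕ → Fin d → ℕ} {H : ℤ} {n : ℕ} {k k' : ℕ → ℕ}
    {ω : Config d} (hk : ω ∈ walkEvent e H n k) (hk' : ω ∈ walkEvent e H n k') {i : ℕ}
    (hi : i < n) : k i = k' i := by
  induction i using Nat.strong_induction_on with
  | _ i ih =>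
    have hsite : walkSite e H k i = walkSite e H k' i := by
      ext1 j
      rw [walkSite, walkSite, walkPos_congr e fun l hl => ih l hl (hl.trans hi)]
    obtain ⟨h1, h2⟩ := hk i hi
    obtain ⟨h1', h2'⟩ := hk' i hi
    rw [hsite] at h1 h2
    rcases lt_trichotomy (k i) (k' i) with h | h | h
    · simp [h1' _ h] at h2
    · exact h
    · simp [h1 _ h] at h2'

/-- Extension of a finite sequence by zeros. -/
noncomputable def extendZero {n : ℕ} (k : Fin n → ℕ) : ℕ → ℕ := Function.extend Fin.val k 0

@[simp] lemma extendZero_val {n : ℕ} (k : Fin n → ℕ) (i : Fin n) : extendZero k i = k i :=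
  Fin.val_injective.extend_apply k 0 i

open ProbabilityTheory

/-- Law of `n` independent geometric variables with success probability `q`. -/
noncomputable def geometricPi (q : unitInterval) (n : ℕ) : Measure (Fin n → ℕ) :=
  Measure.pi fun _ => geometricMeasure q

instance (q : unitInterval) (n : ℕ) : IsProbabilityMeasure (geometricPi q n) := by
  unfold geometricPi; infer_instance

lemma IsBernoulli.measure_walkEvent_extendZero {d : ℕ} {e : ℕ → Fin d → ℕ}
    (he : Function.Injective e) {q : unitInterval} (hq : q ≠ 0) {P : Measure (Config d)}
    (hP : IsBernoulli (1 - q) P) (H : ℤ) (n : ℕ) (k : Fin n → ℕ) :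
    P (walkEvent e H n (extendZero k)) = geometricPi q n {k} := by
  rw [hP.measure_walkEvent he, Finset.prod_range, geometricPi, Measure.pi_singleton]
  refine Finset.prod_congr rfl fun i _ => ?_
  have h : (0 : ℝ) ≤ 1 - q := sub_nonneg.2 q.2.2
  rw [geometricMeasure_singleton hq, extendZero_val, ENNReal.ofReal_mul (by positivity),
    ENNReal.ofReal_pow h, _root_.sub_sub_cancel]

/-- An event that excludes `walkEvent` for all `k` outside `B` has probability at most that of
`B` under the law of independent geometric variables. -/
lemma IsBernoulli.measure_le_geometricPi {d : ℕ} {e : ℕ → Fin d → ℕ}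
    (he : Function.Injective e) {q : unitInterval} (hq : q ≠ 0) {P : Measure (Config d)}
    (hP : IsBernoulli (1 - q) P) (H : ℤ) (n : ℕ) (A : Set (Config d)) (B : Set (Fin n → ℕ))
    (hAB : ∀ k, ∀ ω ∈ A, ω ∈ walkEvent e H n (extendZero k) → k ∈ B) :
    P A ≤ geometricPi q n B := by
  have := hP.1
  have hU : P (⋃ k ∈ Bᶜ, walkEvent e H n (extendZero k)) = geometricPi q n Bᶜ := by
    rw [measure_biUnion (Set.to_countable _) _ fun k _ => measurableSet_walkEvent e H n _]
    · simp_rw [hP.measure_walkEvent_extendZero he hq]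
      rw [← measure_biUnion (Set.to_countable _) _ fun k _ => measurableSet_singleton k,
        Set.biUnion_of_singleton]
      exact fun k _ k' _ hkk' => by simpa using hkk'
    · intro k _ k' _ hkk'
      refine Set.disjoint_left.2 fun ω hk hk' => hkk' ?_
      ext i
      simpa using eq_of_mem_walkEvent hk hk' i.2
  have hmeas : MeasurableSet (⋃ k ∈ Bᶜ, walkEvent e H n (extendZero k)) :=
    MeasurableSet.biUnion (Set.to_countable _) fun k _ => measurableSet_walkEvent e H n _
  calc P A ≤ P (⋃ k ∈ Bᶜ, walkEvent e H n (extendZero k))ᶜ := by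
        refine measure_mono fun ω hω => ?_
        simp only [Set.mem_compl_iff, Set.mem_iUnion, not_exists]
        exact fun k hk hωk => hk (hAB k ω hω hωk)
    _ = geometricPi q n B := by
        rw [prob_compl_eq_one_sub hmeas, hU,
          ← prob_compl_eq_one_sub (Set.to_countable _).measurableSet, compl_compl]

lemma hasSum_mean_geometric {q : unitInterval} (hq : q ≠ 0) :
    HasSum (fun n : ℕ => (1 - q : ℝ) ^ n * q * n) ((1 - q) / q) := by
  have hq0 : (0 : ℝ) < q := unitInterval.pos_iff_ne_zero.2 hq
  have h := (hasSum_coe_mul_geometric_of_norm_lt_one (r := (1 - q : ℝ)) (by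
    rw [Real.norm_eq_abs, abs_lt]; constructor <;> linarith [q.2.2])).mul_right (q : ℝ)
  convert! h using 1
  · ext n; ring
  · rw [_root_.sub_sub_cancel]
    field_simp

lemma integrable_natCast_geometricMeasure {q : unitInterval} (hq : q ≠ 0) :
    Integrable (fun n : ℕ => (n : ℝ)) (geometricMeasure q) := by
  rw [integrable_geometricMeasure_iff hq]
  simpa using (hasSum_mean_geometric hq).summable

lemma integral_natCast_geometricMeasure {q : unitInterval} (hq : q ≠ 0) :
    ∫ n : ℕ, (n : ℝ) ∂geometricMeasure q = (1 - q) / q := by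
  rw [integral_geometricMeasure hq]
  exact (hasSum_mean_geometric hq).tsum_eq

lemma mul_geometricPi_real_le {q : unitInterval} (hq : q ≠ 0) (n : ℕ) {c : ℝ} (hc : 0 ≤ c)
    (ε : ℝ) :
    ε * (geometricPi q n).real {k | ε ≤ c * ∑ i, (k i : ℝ)} ≤ c * (n * ((1 - q) / q)) := by
  have hint (i : Fin n) : Integrable (fun k : Fin n → ℕ => (k i : ℝ)) (geometricPi q n) :=
    integrable_comp_eval (integrable_natCast_geometricMeasure hq)
  refine (mul_meas_ge_le_integral_of_nonneg (Filter.Eventually.of_forall fun k => ?_)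
    ((integrable_finsetSum _ fun i _ => hint i).const_mul c) ε).trans_eq ?_
  · exact mul_nonneg hc (Finset.sum_nonneg fun _ _ => by positivity)
  · have hmean (i : Fin n) : ∫ k, (k i : ℝ) ∂geometricPi q n = (1 - q) / q := by
      rw [← integral_natCast_geometricMeasure hq]
      exact integral_comp_eval (μ := fun _ : Fin n => geometricMeasure q) (i := i)
        (f := fun m : ℕ => (m : ℝ)) (by fun_prop)
    rw [integral_const_mul, integral_finsetSum _ fun i _ => hint i]
    simp [hmean]

/-- If `d! (1 - α)^d (1 - q) / q < 1`, then with positive probability there is no open Lipschitz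
surface above the plane. -/
lemma IsBernoulli.measure_LIP_lt_one {d : ℕ} (hd : 1 ≤ d) {α : ℝ} (hα : α < 1)
    {q : unitInterval} (hq : q ≠ 0) {P : Measure (Config d)} (hP : IsBernoulli (1 - q) P)
    (hρ : d.factorial * (1 - α) ^ d * ((1 - q) / q) < 1) : P (LIP α (etaK d d)) < 1 := by
  have := hP.1
  obtain ⟨e, he, hbound⟩ := exists_injective_sum_pow_le hd
  set c : ℝ := d.factorial * (1 - α) ^ d with hc
  have hc0 : 0 ≤ c := mul_nonneg (by positivity) (pow_nonneg (by linarith) d)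
  set ρ : ℝ := c * ((1 - q) / q) with hρdef
  obtain ⟨θ, hρθ, hθ⟩ := exists_between hρ
  let A : ℕ → Set (Config d) := fun H => {ω | ∃ F : (Fin d → ℤ) → ℤ, (IsLipschitzFn F ∧
    ∀ x, ω (Fin.snoc x (F x)) = true ∧ planeHt α (etaK d d) x < F x) ∧ F 0 ≤ H}
  have hLIP : LIP α (etaK d d) ⊆ ⋃ H, A H := by
    rintro ω ⟨F, hF⟩
    exact Set.mem_iUnion.2 ⟨(F 0).toNat, F, hF, Int.self_le_toNat _⟩
  have hmono : Monotone A := fun H H' hH ω ⟨F, hF, hF0⟩ =>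
    ⟨F, hF, hF0.trans (by exact_mod_cast hH)⟩
  have hA (H : ℕ) : P (A H) ≤ ENNReal.ofReal θ := by
    obtain ⟨n, hn⟩ := exists_nat_gt (max (d * H : ℝ) (θ * (d * H) / (θ - ρ)))
    have hn1 : (0 : ℝ) < n - d * H := sub_pos.2 ((le_max_left _ _).trans_lt hn)
    have hn2 : θ * (d * H) < n * (θ - ρ) :=
      (div_lt_iff₀ (sub_pos.2 hρθ)).1 ((le_max_right _ _).trans_lt hn)
    have hmarkov := mul_geometricPi_real_le hq n hc0 (n - d * H)
    refine (hP.measure_le_geometricPi he hq H n (A H)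
      {k | (n : ℝ) - d * H ≤ c * ∑ i, (k i : ℝ)} ?_).trans ?_
    · rintro k ω ⟨F, ⟨hF, hopen⟩, hF0⟩ hω
      have h := lt_of_mem_walkEvent hd hbound hα hω hF hopen hF0
      rw [Finset.sum_range] at h
      simpa using h.le
    · rw [← ofReal_measureReal]
      refine ENNReal.ofReal_le_ofReal (le_of_mul_le_mul_left (hmarkov.trans ?_) hn1)
      have : c * (n * ((1 - q) / q)) = n * ρ := by rw [hρdef]; ring
      rw [this]
      linarith
  calc P (LIP α (etaK d d)) ≤ P (⋃ H, A H) := measure_mono hLIP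
    _ = ⨆ H, P (A H) := hmono.measure_iUnion
    _ ≤ ENNReal.ofReal θ := iSup_le hA
    _ < 1 := by simpa using hθ

/-- General upper bound: for every `α ∈ [0,1)` and `d ≥ 1`,
`q_L(α,d,d) ≤ d!·(1−α)^d / (1 + d!·(1−α)^d) ≤ d!·(1−α)^d`. -/
theorem qL_general_upper_bound
    {d : ℕ} (hd : 1 ≤ d) (α : ℝ) (hα : α ∈ Set.Ico (0 : ℝ) 1)
    (P : ℝ → Measure (Config d)) (hP : ∀ p ∈ Set.Icc (0 : ℝ) 1, IsBernoulli p (P p))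
    (pc : ℝ) (hpc : IsCriticalProb P α (etaK d d) pc) :
    1 - pc ≤ (d.factorial : ℝ) * (1 - α) ^ d / (1 + (d.factorial : ℝ) * (1 - α) ^ d) ∧
    (d.factorial : ℝ) * (1 - α) ^ d / (1 + (d.factorial : ℝ) * (1 - α) ^ d) ≤
      (d.factorial : ℝ) * (1 - α) ^ d := by
  have hc0 : 0 < (d.factorial : ℝ) * (1 - α) ^ d :=
    mul_pos (by positivity) (pow_pos (sub_pos.2 hα.2) d)
  set c : ℝ := d.factorial * (1 - α) ^ d with hc
  refine ⟨?_, div_le_self hc0.le (by linarith)⟩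
  by_contra! hlt
  obtain ⟨⟨hpc0, hpc1⟩, -, hsup⟩ := hpc
  obtain ⟨q, hq, hqpc⟩ := exists_between hlt
  have hq0 : 0 < q := (by positivity : (0 : ℝ) < c / (1 + c)).trans hq
  have hq1 : q ≤ 1 := by linarith
  have hρ : c * ((1 - q) / q) < 1 := by
    rw [div_lt_iff₀ (by positivity)] at hq
    rw [← mul_div_assoc, div_lt_one hq0]
    linarith
  have h1 := hsup (1 - q) (by linarith) (by linarith)
  have h2 := (hP (1 - q) ⟨by linarith, by linarith⟩).measure_LIP_lt_one (q := ⟨q, hq0.le, hq1⟩)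
    hd hα.2 (fun h => hq0.ne' (congrArg Subtype.val h)) hρ
  exact h2.ne h1
end
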